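/- Under Assumptions A1, A2 and A3, for every compact set A ⊂ ℝ^d, almost surely liminf_{n→∞} inf_{x∈A} (g_n(x) − f(x)) ≥ 0. -/

import Mathlib

open MeasureTheory Filter Metric
open scoped Topology ENNReal NNReal

noncomputable def kb {d : ℕ} (K : EuclideanSpace ℝ (Fin d) → ℝ) (b : ℝ)
    (x : EuclideanSpace ℝ (Fin d)) : ℝ :=
  (b ^ d)⁻¹ * K (b⁻¹ • x)

def natFilt {Ω : Type*} {d : ℕ} (X : ℕ → Ω → EuclideanSpace ℝ (Fin d)) (n : ℕ) :
    MeasurableSpace Ω :=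
  ⨆ i ∈ Finset.Icc 1 n, MeasurableSpace.comap (X i) inferInstance

open MeasureTheory Filter Metric
open scoped Topology ENNReal NNReal

namespace Midas

abbrev E (d : ℕ) := EuclideanSpace ℝ (Fin d)

/-! ### kernels -/
section kernel
variable {d : ℕ} {K : E d → ℝ} {b : ℝ}

lemma kb_nonneg (hK0 : ∀ x, 0 ≤ K x) (hb : 0 < b) (x : E d) : 0 ≤ kb K b x := by
  unfold kb
  have := hK0 (b⁻¹ • x)
  positivity

lemma kb_le {C : ℝ} (hK : ∀ x, K x ≤ C) (hb : 0 < b) (x : E d) : kb K b x ≤ (b ^ d)⁻¹ * C := by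
  unfold kb
  gcongr
  exact hK _

lemma kb_continuous (hK : Continuous K) : Continuous (kb K b) := by
  unfold kb
  fun_prop

lemma kb_lip {L : ℝ≥0} (hL : LipschitzWith L K) (hb : 0 < b) (x y : E d) :
    |kb K b x - kb K b y| ≤ (b ^ d)⁻¹ * (L * (b⁻¹ * ‖x - y‖)) := by
  unfold kb
  rw [← mul_sub, abs_mul, abs_of_pos (by positivity : 0 < (b^d)⁻¹)]
  gcongr
  have := hL.dist_le_mul (b⁻¹ • x) (b⁻¹ • y)
  rw [Real.dist_eq, dist_eq_norm, ← smul_sub, norm_smul, Real.norm_of_nonneg (by positivity : (0:ℝ) ≤ b⁻¹)] at this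
  exact this

lemma kb_integral (hK : (∫ x, K x) = 1) (hb : 0 < b) : (∫ x, kb K b x) = 1 := by
  unfold kb
  rw [integral_const_mul, Measure.integral_comp_inv_smul_of_nonneg _ _ hb.le, hK]
  simp only [finrank_euclideanSpace, Fintype.card_fin, smul_eq_mul, mul_one]
  field_simp

lemma kb_integrable (hK : (∫ x, K x) = 1) (hb : 0 < b) : Integrable (kb K b) := by
  by_contra h
  have := kb_integral hK hb
  rw [integral_undef h] at this
  norm_num at this

lemma kb_integrable_sub (hK : (∫ x, K x) = 1) (hb : 0 < b) (a : E d) :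
    Integrable (fun x => kb K b (x - a)) :=
  (kb_integrable hK hb).comp_sub_right a

lemma kb_integrable_sub' (hK : (∫ x, K x) = 1) (hb : 0 < b) (a : E d) :
    Integrable (fun x => kb K b (a - x)) :=
  (kb_integrable hK hb).comp_sub_left a

lemma kb_integral_sub (hK : (∫ x, K x) = 1) (hb : 0 < b) (a : E d) :
    (∫ x, kb K b (x - a)) = 1 := by
  rw [integral_sub_right_eq_self (fun x => kb K b x) a]
  exact kb_integral hK hb

lemma kb_change (hb : 0 < b) (h : E d → ℝ) (y : E d) :
    (∫ z, h z * kb K b (y - z)) = ∫ v, h (y - b • v) * K v := by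
  rw [← integral_sub_left_eq_self (fun z => h z * kb K b (y - z)) volume y]
  have := Measure.integral_comp_inv_smul_of_nonneg (μ := (volume : Measure (E d)))
    (fun v => h (y - b • v) * K v) hb.le
  simp only [smul_inv_smul₀ hb.ne', finrank_euclideanSpace, Fintype.card_fin, smul_eq_mul] at this
  simp only [sub_sub_cancel, kb]
  calc (∫ x, h (y - x) * ((b ^ d)⁻¹ * K (b⁻¹ • x))) = ∫ x, (b ^ d)⁻¹ * (h (y - x) * K (b⁻¹ • x)) := by
        congr 1; ext x; ring
    _ = _ := by
        rw [integral_const_mul, this]; field_simp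

/-- hat function -/
noncomputable def hat (x : E d) (r : ℝ) (y : E d) : ℝ := max (1 - ‖y - x‖ / r) 0

lemma hat_nonneg (x : E d) (r : ℝ) (y : E d) : 0 ≤ hat x r y := le_max_right _ _
lemma hat_le_one (x : E d) {r : ℝ} (hr : 0 < r) (y : E d) : hat x r y ≤ 1 := by
  unfold hat
  refine max_le ?_ (by norm_num)
  have : 0 ≤ ‖y - x‖ / r := by positivity
  linarith
lemma hat_self (x : E d) (r : ℝ) : hat x r x = 1 := by simp [hat]
lemma hat_eq_zero {x : E d} {r : ℝ} (hr : 0 < r) {y : E d} (h : y ∉ closedBall x r) :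
    hat x r y = 0 := by
  unfold hat
  rw [mem_closedBall, dist_eq_norm, not_le] at h
  apply max_eq_right
  have : 1 < ‖y - x‖ / r := by rwa [one_lt_div hr]
  linarith
lemma hat_half {x : E d} {r : ℝ} (hr : 0 < r) {y : E d} (h : y ∈ closedBall x r) :
    1/2 ≤ hat x (2*r) y := by
  rw [mem_closedBall, dist_eq_norm] at h
  unfold hat
  apply le_max_of_le_left
  have : ‖y - x‖ / (2*r) ≤ 1/2 := by
    rw [div_le_iff₀ (by positivity)]; linarith
  linarith
lemma hat_continuous (x : E d) (r : ℝ) : Continuous (hat x r) := by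
  unfold hat
  fun_prop

lemma hat_key {η : ℝ} (hη0 : 0 < η) (hη1 : η < 1) (hK0 : ∀ x, 0 ≤ K x) (hK1 : (∫ x, K x) = 1)
    (hKc : Continuous K) (hKp : 0 < K 0) {r ε : ℝ} (hr : 0 < r) (hε : 0 < ε) (hε1 : ε < 1) :
    ∃ b0 > 0, ∀ b, 0 < b → b ≤ b0 → ∀ x y : E d,
      (1 - ε) * hat x r y ≤ ∫ z, hat x r z ^ (1 - η) * kb K b (y - z) := by
  have hKI : Integrable K := by
    by_contra h
    rw [integral_undef h] at hK1; norm_num at hK1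
  -- mass radius
  obtain ⟨R, hR0, hR⟩ : ∃ R > 0, 1 - ε/2 ≤ ∫ v in closedBall (0:E d) R, K v := by
    have ht : Tendsto (fun n : ℕ => ∫ v in closedBall (0:E d) (n:ℝ), K v) atTop
        (𝓝 (∫ v in ⋃ n : ℕ, closedBall (0:E d) (n:ℝ), K v)) := by
      apply tendsto_setIntegral_of_monotone
      · intro n; exact measurableSet_closedBall
      · intro m n hmn; exact closedBall_subset_closedBall (by exact_mod_cast hmn)
      · exact hKI.integrableOn
    rw [iUnion_closedBall_nat, setIntegral_univ, hK1] at ht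
    have := (ht.eventually (lt_mem_nhds (by linarith : 1 - ε/2 < 1))).and (eventually_gt_atTop 0)
    obtain ⟨n, hn, hn0⟩ := this.exists
    exact ⟨n, by exact_mod_cast hn0, hn.le⟩
  obtain ⟨r0, hr0, hk0⟩ : ∃ r0 > 0, ∀ v ∈ closedBall (0:E d) r0, K 0 / 2 ≤ K v := by
    have : ∀ᶠ v in 𝓝 (0:E d), K 0 / 2 < K v :=
      hKc.continuousAt.eventually (lt_mem_nhds (by linarith))
    obtain ⟨r0, hr0, h⟩ := Metric.eventually_nhds_iff_ball.1 this
    refine ⟨r0/2, by positivity, fun v hv => (h v ?_).le⟩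
    exact closedBall_subset_ball (by linarith) hv
  set vol : ℝ := (volume (closedBall (0:E d) (r0/4))).toReal with hvol
  have hvolpos : 0 < vol := by
    apply ENNReal.toReal_pos
    · exact (measure_closedBall_pos _ _ (by positivity)).ne'
    · exact measure_closedBall_lt_top.ne
  set cc : ℝ := K 0 / 2 * vol * (r0/(4*r))^(1-η) with hcc
  have hccpos : 0 < cc := by positivity
  -- choose b0
  have hlim : Tendsto (fun b : ℝ => b ^ η) (𝓝[>] 0) (𝓝 0) := by
    have : Tendsto (fun b : ℝ => b ^ η) (𝓝 0) (𝓝 ((0:ℝ)^η)) :=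
      (Real.continuousAt_rpow_const 0 η (Or.inr hη0.le)).tendsto
    rw [Real.zero_rpow hη0.ne'] at this
    exact this.mono_left nhdsWithin_le_nhds
  have hev := hlim.eventually (gt_mem_nhds (show 0 < cc * (r * ε) / (2*R) by positivity))
  obtain ⟨b1, hb1, hb1'⟩ := mem_nhdsGT_iff_exists_Ioo_subset.1 hev
  have hb1 : 0 < b1 := hb1
  refine ⟨min (b1/2) (min (r * ε / (4 * R)) (r/r0)), by positivity, ?_⟩
  intro b hb hbb x y
  have hbb1 : b ≤ b1/2 := hbb.trans (min_le_left _ _)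
  have hbb2 : b ≤ r * ε / (4 * R) := hbb.trans ((min_le_right _ _).trans (min_le_left _ _))
  have hbb3 : b ≤ r / r0 := hbb.trans ((min_le_right _ _).trans (min_le_right _ _))
  have hbη : b ^ η < cc * (r * ε) / (2*R) := hb1' ⟨hb, by linarith⟩
  rw [kb_change hb (fun z => hat x r z ^ (1-η)) y]
  have hcont : Continuous (fun v : E d => hat x r (y - b • v) ^ (1-η)) := by
    apply Continuous.rpow_const
    · exact (hat_continuous x r).comp (by fun_prop)
    · intro v; right; linarith
  have hle1 : ∀ v : E d, hat x r (y - b • v) ^ (1-η) ≤ 1 := fun v =>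
    Real.rpow_le_one (hat_nonneg _ _ _) (hat_le_one _ hr _) (by linarith)
  have hpos : ∀ v : E d, 0 ≤ hat x r (y - b • v) ^ (1-η) := fun v =>
    Real.rpow_nonneg (hat_nonneg _ _ _) _
  have hInt : Integrable (fun v : E d => hat x r (y - b • v) ^ (1-η) * K v) := by
    refine hKI.mono' (hcont.mul hKc).aestronglyMeasurable (Eventually.of_forall fun v => ?_)
    rw [Real.norm_of_nonneg (mul_nonneg (hpos v) (hK0 v))]
    exact mul_le_of_le_one_left (hK0 v) (hle1 v)
  have hnn : ∀ v : E d, 0 ≤ hat x r (y - b • v) ^ (1-η) * K v := fun v => mul_nonneg (hpos v) (hK0 v)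
  by_cases hcase : 2 * b * R / (r * ε) ≤ hat x r y
  · calc (1 - ε) * hat x r y ≤ ((1 - ε/2) * hat x r y) * (1 - ε/2) := by
          have := hat_nonneg x r y
          nlinarith [mul_nonneg this (sq_nonneg ε)]
      _ ≤ ((1 - ε/2) * hat x r y) * ∫ v in closedBall (0:E d) R, K v := by
          gcongr
          exact mul_nonneg (by linarith) (hat_nonneg _ _ _)
      _ = ∫ v in closedBall (0:E d) R, ((1 - ε/2) * hat x r y) * K v := by
          rw [integral_const_mul]
      _ ≤ ∫ v in closedBall (0:E d) R, hat x r (y - b • v) ^ (1-η) * K v := by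
          apply setIntegral_mono_on (hKI.integrableOn.const_mul _) hInt.integrableOn measurableSet_closedBall
          intro v hv
          apply mul_le_mul_of_nonneg_right _ (hK0 v)
          have h1 : (1 - ε/2) * hat x r y ≤ hat x r (y - b • v) := by
            rw [mem_closedBall_zero_iff] at hv
            have h2 : hat x r y - b * R / r ≤ hat x r (y - b • v) := by
              have h3 : ‖y - b • v - x‖ ≤ ‖y - x‖ + b * R := by
                have : y - b • v - x = (y - x) - b • v := by abel
                rw [this]
                refine (norm_sub_le _ _).trans ?_
                rw [norm_smul, Real.norm_of_nonneg hb.le]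
                gcongr
              have h4 : ‖y - b • v - x‖ / r ≤ ‖y - x‖ / r + b * R / r := by
                rw [← add_div]; gcongr
              unfold hat
              rw [sub_le_iff_le_add]
              apply max_le
              · have := le_max_left (1 - ‖y - b • v - x‖ / r) 0
                linarith
              · have := le_max_right (1 - ‖y - b • v - x‖ / r) 0
                have : 0 ≤ b * R / r := by positivity
                linarith
            have h5 : b * R / r ≤ ε/2 * hat x r y := by
              calc b * R / r = ε/2 * (2 * b * R / (r * ε)) := by field_simp
                _ ≤ _ := by gcongr
            linarith
          refine h1.trans ?_
          conv_lhs => rw [← Real.rpow_one (hat x r (y - b • v))]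
          rcases (hat_nonneg x r (y - b • v)).eq_or_lt with h | h
          · rw [← h, Real.zero_rpow (by norm_num), Real.zero_rpow (by linarith)]
          · exact Real.rpow_le_rpow_of_exponent_ge h (hat_le_one _ hr _) (by linarith)
      _ ≤ _ := setIntegral_le_integral hInt (Eventually.of_forall hnn)
  · push Not at hcase
    by_cases hz : hat x r y = 0
    · rw [hz, mul_zero]; exact integral_nonneg hnn
    have hpos' : 0 < hat x r y := lt_of_le_of_ne (hat_nonneg _ _ _) (Ne.symm hz)
    have hyx : hat x r y = 1 - ‖y - x‖ / r := by
      unfold hat at hpos' ⊢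
      rcases max_choice (1 - ‖y - x‖ / r) 0 with h | h
      · exact h
      · rw [h] at hpos'; exact absurd hpos' (lt_irrefl _)
    have hlt : hat x r y < 1/2 := by
      refine hcase.trans_le ?_
      rw [div_le_iff₀ (by positivity)]
      rw [le_div_iff₀ (by positivity)] at hbb2
      nlinarith
    have hn1 : r / 2 < ‖y - x‖ := by
      have : 1/2 < ‖y - x‖ / r := by linarith
      rw [lt_div_iff₀ hr] at this; linarith
    have hn2 : ‖y - x‖ < r := by
      have : ‖y - x‖ / r < 1 := by linarith
      rwa [div_lt_one hr] at this
    have hnp : 0 < ‖y - x‖ := by linarith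
    set v0 : E d := (r0/2 / ‖y - x‖) • (y - x) with hv0
    have hv0n : ‖v0‖ = r0/2 := by
      rw [hv0, norm_smul, Real.norm_of_nonneg (by positivity)]; field_simp
    have hbr : b * r0 ≤ r := by rwa [le_div_iff₀ hr0] at hbb3
    have hlow : ∀ v ∈ closedBall v0 (r0/4), (b * (r0/(4*r)))^(1-η) * (K 0 / 2) ≤ hat x r (y - b • v) ^ (1-η) * K v := by
      intro v hv
      rw [mem_closedBall, dist_eq_norm] at hv
      have hKv : K 0 / 2 ≤ K v := by
        apply hk0
        rw [mem_closedBall_zero_iff]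
        have : v = v0 + (v - v0) := by abel
        rw [this]
        refine (norm_add_le _ _).trans ?_
        linarith
      have hh : b * (r0/(4*r)) ≤ hat x r (y - b • v) := by
        unfold hat
        apply le_max_of_le_left
        have e1 : y - b • v - x = (1 - b * (r0/2/‖y - x‖)) • (y - x) - b • (v - v0) := by
          rw [hv0]; module
        have e2 : ‖y - b • v - x‖ ≤ ‖y - x‖ - b * r0/4 := by
          rw [e1]
          refine (norm_sub_le _ _).trans ?_
          have hq : b * (r0/2/‖y - x‖) ≤ 1 := by
            rw [← mul_div_assoc, div_le_one hnp]; linarith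
          rw [norm_smul, norm_smul, Real.norm_of_nonneg hb.le, Real.norm_of_nonneg (by linarith), sub_mul,
            one_mul]
          have : b * (r0/2/‖y - x‖) * ‖y - x‖ = b * r0 /2 := by field_simp
          rw [this]
          nlinarith
        have e3 : ‖y - b • v - x‖ / r ≤ ‖y - x‖/r - b * (r0/(4*r)) := by
          rw [div_le_iff₀ hr, sub_mul, div_mul_cancel₀ _ hr.ne']
          have : b * (r0/(4*r)) * r = b * r0/4 := by field_simp
          linarith
        linarith
      gcongr
      all_goals first | exact hpos v | linarith
    calc (1-ε) * hat x r y ≤ hat x r y := by nlinarith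
      _ ≤ 2 * b * R / (r * ε) := hcase.le
      _ = (b^η * b^(1-η)) * (2 * R / (r * ε)) := by
          rw [← Real.rpow_add hb]; simp; ring
      _ ≤ (cc * (r * ε) / (2*R)) * b^(1-η) * (2 * R / (r * ε)) := by gcongr
      _ = cc * b^(1-η) := by field_simp
      _ = vol * ((b * (r0/(4*r)))^(1-η) * (K 0 / 2)) := by
          rw [Real.mul_rpow hb.le (by positivity)]; ring
      _ = ∫ v in closedBall v0 (r0/4), (b * (r0/(4*r)))^(1-η) * (K 0 / 2) := by
          rw [setIntegral_const, smul_eq_mul, Measure.real, Measure.addHaar_closedBall_center]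
      _ ≤ ∫ v in closedBall v0 (r0/4), hat x r (y - b • v) ^ (1-η) * K v := by
          apply setIntegral_mono_on _ hInt.integrableOn measurableSet_closedBall hlow
          exact integrableOn_const (hs := measure_closedBall_lt_top.ne)
      _ ≤ _ := setIntegral_le_integral hInt (Eventually.of_forall hnn)
end kernel

end Midas

open MeasureTheory Filter Metric
open scoped Topology ENNReal NNReal

namespace Midas

/-! ### step sizes -/
structure Ste (γ : ℕ → ℝ) (N : ℕ) : Prop where
  pos : ∀ n, 0 < γ n
  half : ∀ n, N ≤ n → γ n ≤ 1/2
  dec : ∀ n, N ≤ n → γ n - γ (n+1) ≤ γ n * γ (n+1)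
  lim0 : Tendsto γ atTop (𝓝 0)
  div : ∃ C > (0:ℝ), ∀ n : ℕ, 1 ≤ n → ((n:ℝ))⁻¹ ≤ C * γ n

noncomputable def pw (γ : ℕ → ℝ) (N n : ℕ) : ℝ := ∏ j ∈ Finset.Ico N n, (1 - γ (j+1))
noncomputable def aw (γ : ℕ → ℝ) (N k : ℕ) : ℝ := γ (k+1) / pw γ N (k+1)
noncomputable def avg (γ : ℕ → ℝ) (N : ℕ) (v : ℕ → ℝ) (n : ℕ) : ℝ :=
  pw γ N n * ∑ k ∈ Finset.Ico N n, aw γ N k * v k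

section
variable {γ : ℕ → ℝ} {N : ℕ}

lemma pw_self : pw γ N N = 1 := by simp [pw]

lemma pw_succ {n : ℕ} (hn : N ≤ n) : pw γ N (n+1) = (1 - γ (n+1)) * pw γ N n := by
  unfold pw
  rw [Finset.prod_Ico_succ_top hn, mul_comm]

lemma Ste.half' (h : Ste γ N) {n : ℕ} (hn : N ≤ n) : γ (n+1) ≤ 1/2 := h.half _ (by omega)

lemma pw_pos (h : Ste γ N) (n : ℕ) : 0 < pw γ N n := by
  unfold pw
  apply Finset.prod_pos
  intro j hj
  have := h.half (j+1) (by have := (Finset.mem_Ico.1 hj).1; omega)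
  linarith

lemma aw_pos (h : Ste γ N) (k : ℕ) : 0 < aw γ N k := div_pos (h.pos _) (pw_pos h _)

lemma pw_aw (h : Ste γ N) (n : ℕ) : pw γ N (n+1) * aw γ N n = γ (n+1) := by
  unfold aw
  have := (pw_pos h (n+1)).ne'
  field_simp

lemma aw_succ (h : Ste γ N) {k : ℕ} (hk : N ≤ k) : aw γ N k ≤ aw γ N (k+1) := by
  unfold aw
  rw [pw_succ (n := k+1) (by omega)]
  have h1 := h.dec (k+1) (by omega)
  have h2 := h.half (k+1+1) (by omega)
  have h3 := pw_pos h (k+1)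
  rw [div_le_div_iff₀ h3 (mul_pos (by linarith) h3)]
  nlinarith

lemma aw_mono (h : Ste γ N) {k n : ℕ} (hk : N ≤ k) (hkn : k ≤ n) : aw γ N k ≤ aw γ N n := by
  induction n, hkn using Nat.le_induction with
  | base => exact le_rfl
  | succ n hn ih => exact ih.trans (aw_succ h (by omega))

lemma pw_aw_le (h : Ste γ N) {k n : ℕ} (hk : N ≤ k) (hkn : k < n) : pw γ N n * aw γ N k ≤ γ n := by
  obtain ⟨m, rfl⟩ : ∃ m, n = m + 1 := ⟨n-1, by omega⟩
  rw [← pw_aw h m]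
  exact mul_le_mul_of_nonneg_left (aw_mono h hk (by omega)) (pw_pos h _).le

lemma pw_le (h : Ste γ N) {n : ℕ} (hn : N ≤ n) : pw γ N n ≤ (γ N)⁻¹ * γ n := by
  induction n, hn using Nat.le_induction with
  | base => rw [pw_self]; have := (h.pos N).ne'; field_simp; exact le_rfl
  | succ n hn ih =>
    rw [pw_succ hn]
    have h1 := h.half' hn
    have h2 := h.dec n hn
    have h3 := h.pos N
    calc (1 - γ (n+1)) * pw γ N n ≤ (1 - γ (n+1)) * ((γ N)⁻¹ * γ n) := by
          apply mul_le_mul_of_nonneg_left ih; linarith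
      _ = (γ N)⁻¹ * ((1 - γ (n+1)) * γ n) := by ring
      _ ≤ _ := by gcongr; nlinarith

lemma pw_le_one (h : Ste γ N) (n : ℕ) : pw γ N n ≤ 1 := by
  unfold pw
  apply Finset.prod_le_one
  · intro j hj
    have := h.half (j+1) (by have := (Finset.mem_Ico.1 hj).1; omega)
    linarith
  · intro j hj; have := h.pos (j+1); linarith

lemma pw_tendsto (h : Ste γ N) : Tendsto (pw γ N) atTop (𝓝 0) := by
  have h1 : Tendsto (fun n => (γ N)⁻¹ * γ n) atTop (𝓝 0) := by
    simpa using h.lim0.const_mul (γ N)⁻¹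
  refine tendsto_of_tendsto_of_tendsto_of_le_of_le' tendsto_const_nhds h1
    (Eventually.of_forall fun n => (pw_pos h n).le) ?_
  filter_upwards [eventually_ge_atTop N] with n hn using pw_le h hn

lemma avg_self (v : ℕ → ℝ) : avg γ N v N = 0 := by simp [avg]

lemma avg_succ (h : Ste γ N) (v : ℕ → ℝ) {n : ℕ} (hn : N ≤ n) :
    avg γ N v (n+1) = (1 - γ (n+1)) * avg γ N v n + γ (n+1) * v n := by
  unfold avg
  rw [Finset.sum_Ico_succ_top hn, mul_add, ← mul_assoc (pw γ N (n+1)) (aw γ N n), pw_aw h,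
    pw_succ hn]
  simp only [mul_assoc]

lemma avg_formula (h : Ste γ N) {u v : ℕ → ℝ}
    (hu : ∀ n, N ≤ n → u (n+1) = (1 - γ (n+1)) * u n + γ (n+1) * v n) {n : ℕ} (hn : N ≤ n) :
    u n = pw γ N n * u N + avg γ N v n := by
  induction n, hn using Nat.le_induction with
  | base => simp [pw_self, avg_self]
  | succ n hn ih => rw [hu n hn, ih, avg_succ h v hn, pw_succ hn]; ring

lemma avg_mono (h : Ste γ N) {u v : ℕ → ℝ} (huv : ∀ n, N ≤ n → u n ≤ v n) (n : ℕ) :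
    avg γ N u n ≤ avg γ N v n := by
  unfold avg
  apply mul_le_mul_of_nonneg_left _ (pw_pos h _).le
  apply Finset.sum_le_sum
  intro k hk
  exact mul_le_mul_of_nonneg_left (huv k (Finset.mem_Ico.1 hk).1) (aw_pos h _).le

lemma avg_nonneg (h : Ste γ N) {v : ℕ → ℝ} (hv : ∀ n, N ≤ n → 0 ≤ v n) (n : ℕ) :
    0 ≤ avg γ N v n := by
  unfold avg
  apply mul_nonneg (pw_pos h _).le
  exact Finset.sum_nonneg fun k hk => mul_nonneg (aw_pos h _).le (hv k (Finset.mem_Ico.1 hk).1)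

lemma avg_const (h : Ste γ N) (c : ℝ) {n : ℕ} (hn : N ≤ n) :
    avg γ N (fun _ => c) n = c * (1 - pw γ N n) := by
  induction n, hn using Nat.le_induction with
  | base => simp [pw_self, avg_self]
  | succ n hn ih => rw [avg_succ h _ hn, ih, pw_succ hn]; ring

/-- sum of step sizes diverges -/
lemma Ste.sum_unbounded (h : Ste γ N) (n2 : ℕ) (B : ℝ) :
    ∃ n, n2 ≤ n ∧ B < ∑ k ∈ Finset.Ico n2 n, γ (k+1) := by
  obtain ⟨C, hC, hdiv⟩ := h.div
  have h1 : ¬ Summable (fun k : ℕ => γ (k + n2 + 1)) := by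
    intro hs
    have hs2 : Summable (fun k : ℕ => (((k + (n2 + 1) : ℕ):ℝ))⁻¹) := by
      refine Summable.of_nonneg_of_le (fun k => by positivity) (fun k => ?_) (hs.mul_left C)
      have := hdiv (k + n2 + 1) (by omega)
      rwa [← add_assoc]
    rw [summable_nat_add_iff (n2+1) (f := fun k : ℕ => ((k:ℝ))⁻¹)] at hs2
    exact Real.not_summable_natCast_inv hs2
  have h2 := (not_summable_iff_tendsto_nat_atTop_of_nonneg (fun k => (h.pos (k + n2 + 1)).le)).1 h1
  obtain ⟨m, hm⟩ := (h2.eventually (eventually_gt_atTop B)).exists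
  refine ⟨n2 + m, by omega, ?_⟩
  rw [Finset.sum_Ico_eq_sum_range]
  simp only [Nat.add_sub_cancel_left]
  convert hm using 3
  congr 1; omega

lemma Ste.hit (h : Ste γ N) {s : ℕ → ℝ} {n2 : ℕ} {δ s0 : ℝ} (hδ : 0 < δ)
    (hs : 0 < s n2) (hstep : ∀ n, n2 ≤ n → s n < s0 → s n * (1 + δ * γ (n+1)) ≤ s (n+1)) :
    ∃ n, n2 ≤ n ∧ s0 ≤ s n := by
  by_contra hcon
  push Not at hcon
  have h1 : ∀ n, n2 ≤ n → s n2 + δ * s n2 * ∑ k ∈ Finset.Ico n2 n, γ (k+1) ≤ s n ∧ s n2 ≤ s n := by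
    intro n hn
    induction n, hn using Nat.le_induction with
    | base => simp
    | succ n hn ih =>
      have h2 := hstep n hn (hcon n hn)
      rw [Finset.sum_Ico_succ_top hn]
      have h3 : s n2 * (δ * γ (n+1)) ≤ s n * (δ * γ (n+1)) := by
        apply mul_le_mul_of_nonneg_right ih.2
        exact mul_nonneg hδ.le (h.pos _).le
      have h4 : 0 ≤ s n2 * (δ * γ (n+1)) := mul_nonneg hs.le (mul_nonneg hδ.le (h.pos _).le)
      constructor
      · nlinarith [ih.1]
      · nlinarith [ih.2]
  obtain ⟨n, hn, hn2⟩ := h.sum_unbounded n2 (s0 / (δ * s n2))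
  have h3 := (h1 n hn).1
  have h4 := hcon n hn
  rw [div_lt_iff₀ (mul_pos hδ hs)] at hn2
  linarith

/-- growth recursion -/
lemma Ste.rec_grow (h : Ste γ N) {s : ℕ → ℝ} {n2 : ℕ} (hn2 : N ≤ n2) {η B s0 : ℝ} (hη0 : 0 < η) (hη1 : η < 1)
    (hs : ∀ n, n2 ≤ n → 0 < s n)
    (hrec : ∀ n, n2 ≤ n → (1 - γ (n+1)) * s n + γ (n+1) * (B * s n ^ (1-η)) ≤ s (n+1))
    (hs0 : 0 < s0) (hB : s0 ^ η < B) : ∀ᶠ n in atTop, s0 ≤ s n := by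
  have hs0η : 0 < s0 ^ η := Real.rpow_pos_of_pos hs0 _
  have hB0 : 0 < B := hs0η.trans hB
  have key : ∀ x : ℝ, 0 < x → x ^ (1-η) * x ^ η = x := by
    intro x hx; rw [← Real.rpow_add hx]; simp
  obtain ⟨n3, hn3, hhit⟩ := h.hit (s := s) (n2 := n2) (δ := B / s0^η - 1) (s0 := s0)
    (by rw [sub_pos, one_lt_div hs0η]; exact hB) (hs n2 le_rfl) (by
      intro n hn hlt
      refine le_trans ?_ (hrec n hn)
      have hsn := hs n hn
      have h1 : s n ^ η ≤ s0 ^ η := Real.rpow_le_rpow hsn.le hlt.le hη0.le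
      have h2 : B / s0 ^ η * s n ≤ B * s n ^ (1-η) := by
        rw [div_mul_eq_mul_div, div_le_iff₀ hs0η]
        calc B * s n = B * (s n ^ (1-η) * s n ^ η) := by rw [key _ hsn]
          _ ≤ B * (s n ^ (1-η) * s0 ^ η) := by
              have := Real.rpow_pos_of_pos hsn (1-η)
              gcongr
          _ = _ := by ring
      have := mul_le_mul_of_nonneg_left h2 (h.pos (n+1)).le
      nlinarith)
  refine eventually_atTop.2 ⟨n3, fun n hn => ?_⟩
  induction n, hn using Nat.le_induction with
  | base => exact hhit
  | succ n hn ih =>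
    refine le_trans ?_ (hrec n (hn3.trans hn))
    have h1 : s0 ^ (1-η) ≤ s n ^ (1-η) := Real.rpow_le_rpow hs0.le ih (by linarith)
    have h2 : s0 ≤ B * s n ^ (1-η) := by
      calc s0 = s0 ^ (1-η) * s0 ^ η := (key _ hs0).symm
        _ ≤ s n ^ (1-η) * B := by
          have := Real.rpow_pos_of_pos hs0 (1-η)
          have := Real.rpow_nonneg (hs0.le.trans ih) (1-η)
          gcongr
        _ = _ := by ring
    have h3 := h.pos (n+1)
    have h4 := h.half' (n := n) (by omega)
    have := mul_le_mul_of_nonneg_left h2 h3.le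
    have := mul_le_mul_of_nonneg_left ih (by linarith : 0 ≤ 1 - γ (n+1))
    nlinarith

lemma rpow_bern {η u : ℝ} (hη0 : 0 < η) (hu0 : 0 ≤ u) (hu1 : u ≤ 1) : 1 + η * u / 2 ≤ (1 + u) ^ η := by
  rw [Real.rpow_def_of_pos (by linarith)]
  have h1 := Real.one_sub_inv_le_log_of_pos (by linarith : 0 < 1 + u)
  have h2 : u / 2 ≤ 1 - (1+u)⁻¹ := by
    have : 1 - (1+u)⁻¹ = u / (1+u) := by field_simp; ring
    rw [this]
    gcongr
    linarith
  have h3 := Real.add_one_le_exp (Real.log (1+u) * η)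
  nlinarith

/-- the coupled lower recursion of Step I -/
lemma Ste.coupled (h : Ste γ N) {s m : ℕ → ℝ} {n2 : ℕ} (hn2 : N ≤ n2) {η β : ℝ} (hη0 : 0 < η) (hη1 : η < 1)
    (hβ : 0 < β)
    (hs : ∀ n, n2 ≤ n → 0 < s n) (hm : ∀ n, n2 ≤ n → 0 < m n)
    (hrec : ∀ n, n2 ≤ n → (1 - γ (n+1)) * s n + γ (n+1) * (β * (s n / m n) ^ (1-η)) ≤ s (n+1))
    (hmrec : ∀ n, n2 ≤ n → (1 - γ (n+1)) * m n ≤ m (n+1)) :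
    ∃ p > 0, ∀ᶠ n in atTop, p ≤ s n ^ η * m n ^ (1-η) := by
  set p : ℕ → ℝ := fun n => s n ^ η * m n ^ (1-η) with hp
  set A : ℝ := 8 / η with hA
  have hA0 : 0 < A := by positivity
  set p0 : ℝ := β / (1 + A) with hp0
  have hp0pos : 0 < p0 := by positivity
  have hppos : ∀ n, n2 ≤ n → 0 < p n := fun n hn =>
    mul_pos (Real.rpow_pos_of_pos (hs n hn) _) (Real.rpow_pos_of_pos (hm n hn) _)
  obtain ⟨n3, hn3⟩ := eventually_atTop.1 (h.lim0.eventually (ge_mem_nhds (show 0 < 1/A by positivity)))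
  set n4 := max n2 n3 with hn4
  have hrw : ∀ n, n2 ≤ n → (s n / m n) ^ (1-η) = s n / p n := by
    intro n hn
    have h1 := hs n hn
    have h2 := hm n hn
    rw [Real.div_rpow h1.le h2.le, Real.rpow_sub h1, Real.rpow_one, div_div]
  have hdown : ∀ n, n4 ≤ n → (1 - γ (n+1)) * p n ≤ p (n+1) := by
    intro n hn
    have hnn2 : n2 ≤ n := le_trans (le_max_left _ _) hn
    have hg := h.half' (n := n) (by omega)
    have hgp := h.pos (n+1)
    have h1 := hs n hnn2
    have h2 := hm n hnn2
    have h3 : (1 - γ (n+1)) * s n ≤ s (n+1) := by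
      refine le_trans ?_ (hrec n hnn2)
      have : 0 ≤ (s n / m n) ^ (1-η) := by positivity
      have : 0 ≤ γ (n+1) * (β * (s n / m n) ^ (1-η)) := by positivity
      linarith
    have h0 : 0 ≤ 1 - γ (n+1) := by linarith
    calc (1 - γ (n+1)) * p n = ((1 - γ (n+1)) ^ η * (1 - γ (n+1)) ^ (1-η)) * p n := by
          rw [← Real.rpow_add (by linarith)]; simp
      _ = ((1 - γ (n+1)) * s n) ^ η * ((1 - γ (n+1)) * m n) ^ (1-η) := by
          rw [Real.mul_rpow h0 h1.le, Real.mul_rpow h0 h2.le]; simp only [hp]; ring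
      _ ≤ p (n+1) := by
          simp only [hp]
          have hsn := hs (n+1) (by omega)
          gcongr
          · exact hmrec n hnn2
  have hup : ∀ n, n4 ≤ n → p n < p0 → p n * (1 + 1 * γ (n+1)) ≤ p (n+1) := by
    intro n hn hlt
    have hnn2 : n2 ≤ n := le_trans (le_max_left _ _) hn
    have hg := h.half' (n := n) (by omega)
    have hgA := hn3 (n+1) (by have := le_max_right n2 n3; omega)
    have hgp := h.pos (n+1)
    have h1 := hs n hnn2
    have h2 := hm n hnn2
    have hpn := hppos n hnn2
    have h0 : 0 ≤ 1 - γ (n+1) := by linarith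
    have h3 : (1 + γ (n+1) * A) * s n ≤ s (n+1) := by
      refine le_trans ?_ (hrec n hnn2)
      rw [hrw n hnn2]
      have : (1 + A) * s n ≤ β * (s n / p n) := by
        rw [mul_div_assoc', le_div_iff₀ hpn]
        have h5 : p n * (1 + A) ≤ β := by
          have := hlt.le
          rwa [hp0, le_div_iff₀ (by positivity)] at this
        nlinarith
      have := mul_le_mul_of_nonneg_left this hgp.le
      nlinarith
    have h4 : 1 + 4 * γ (n+1) ≤ (1 + γ (n+1) * A) ^ η := by
      have := rpow_bern (u := γ (n+1) * A) hη0 (by positivity) (by rwa [le_div_iff₀ hA0] at hgA)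
      refine le_trans (le_of_eq ?_) this
      rw [hA]; field_simp; ring
    have h5 : 1 - γ (n+1) ≤ (1 - γ (n+1)) ^ (1-η) := by
      conv_lhs => rw [← Real.rpow_one (1 - γ (n+1))]
      exact Real.rpow_le_rpow_of_exponent_ge (by linarith) (by linarith) (by linarith)
    calc p n * (1 + 1 * γ (n+1)) ≤ p n * ((1 + 4 * γ (n+1)) * (1 - γ (n+1))) := by
          gcongr; nlinarith
      _ ≤ p n * ((1 + γ (n+1) * A) ^ η * (1 - γ (n+1)) ^ (1-η)) := by gcongr
      _ = ((1 + γ (n+1) * A) * s n) ^ η * ((1 - γ (n+1)) * m n) ^ (1-η) := by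
          rw [Real.mul_rpow (by positivity) h1.le, Real.mul_rpow h0 h2.le]; simp only [hp]; ring
      _ ≤ p (n+1) := by
          simp only [hp]
          have hsn := hs (n+1) (by omega)
          gcongr
          · exact hmrec n hnn2
  obtain ⟨n5, hn5, hhit⟩ := h.hit (s := p) (n2 := n4) (δ := 1) (s0 := p0) one_pos
    (hppos n4 (le_max_left _ _)) hup
  refine ⟨p0/2, by positivity, eventually_atTop.2 ⟨n5, fun n hn => ?_⟩⟩
  induction n, hn using Nat.le_induction with
  | base => linarith
  | succ n hn ih =>
    have hgp := h.pos (n+1)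
    rcases lt_or_ge (p n) p0 with hlt | hge
    · have := hup n (by omega) hlt
      have ih' : p0/2 ≤ p n := ih
      show p0/2 ≤ p (n+1)
      nlinarith
    · have := hdown n (by omega)
      have hg := h.half' (n := n) (by omega)
      show p0/2 ≤ p (n+1)
      nlinarith
end
end Midas

open MeasureTheory Filter Metric
open scoped Topology ENNReal NNReal

namespace Midas

structure St {d : ℕ} (η : ℝ) (f q0 K : E d → ℝ) (γ b lam : ℕ → ℝ) (c Cf CK : ℝ) (L : ℝ≥0) (N : ℕ) :
    Prop where
  hd : 1 ≤ d
  η0 : 0 < η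
  η1 : η < 1
  f0 : ∀ x, 0 ≤ f x
  fle : ∀ x, f x ≤ Cf
  fcont : Continuous f
  fInt : Integrable f
  fint : (∫ x, f x) = 1
  q00 : ∀ x, 0 ≤ q0 x
  q0cont : Continuous q0
  q0Int : Integrable q0
  q0int : (∫ x, q0 x) = 1
  K0 : ∀ x, 0 ≤ K x
  Kle : ∀ x, K x ≤ CK
  Klip : LipschitzWith L K
  Kint : (∫ x, K x) = 1
  Kpos : 0 < K 0
  ste : Ste γ N
  bpos : ∀ n, 0 < b n
  banti : Antitone b
  blim : Tendsto b atTop (𝓝 0)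
  lampos : ∀ n, 0 < lam n
  lamanti : Antitone lam
  lamlim : Tendsto lam atTop (𝓝 0)
  c0 : 0 < c
  hc : ∀ x, 2 * c * f x ≤ q0 x
  lamhalf : ∀ n, N ≤ n → lam n ≤ 1/2
  bone : ∀ n, N ≤ n → b n ≤ 1
  inv : ∀ n : ℕ, N ≤ n → (n:ℝ)⁻¹ ≤ lam n * b n ^ d
  N2 : 2 ≤ N
  rate : Tendsto (fun n : ℕ => γ n * Real.log n / (lam n * b n ^ d)) atTop (𝓝 0)

noncomputable def zet {d : ℕ} (η : ℝ) (f : E d → ℝ) (q : E d → ℝ) (T : ℝ) (y : E d) : ℝ :=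
  min ((f y / q y) ^ η) T

/-- truncated conditional mean -/
noncomputable def Eb {d : ℕ} (η : ℝ) (f K : E d → ℝ) (q : E d → ℝ) (T β : ℝ) (x : E d) : ℝ :=
  ∫ y, zet η f q T y * kb K β (x - y) * q y

structure Path {d : ℕ} (η : ℝ) (f q0 K : E d → ℝ) (γ b lam : ℕ → ℝ) (c : ℝ) (N : ℕ)
    (g q : ℕ → E d → ℝ) (X : ℕ → E d) : Prop where
  grec : ∀ n, N ≤ n → ∀ x, g (n+1) x = (1 - γ (n+1)) * g n x
    + γ (n+1) * ((f (X (n+1)) / q n (X (n+1))) ^ η * kb K (b (n+1)) (x - X (n+1)))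
  qeq : ∀ n, N ≤ n → ∀ x, q n x = (1 - lam n) * (g n x / ∫ y, g n y) + lam n * q0 x
  qnn : ∀ n, N ≤ n → ∀ x, 0 ≤ q n x
  mne : ∀ n, N ≤ n → (∫ y, g n y) ≠ 0
  gcont : ∀ n, N ≤ n → Continuous (g n)
  gInt : ∀ n, N ≤ n → Integrable (g n)
  gbd : ∃ C > 0, ∀ x, -C ≤ g N x
  CL : ∀ R : ℝ, ∀ ε > (0:ℝ), ∀ᶠ n in atTop, ∀ x, ‖x‖ ≤ R →
    (1 - ε) * avg γ N (fun k => Eb η f K (q k) ((c * lam (k+1)) ^ (-η)) (b (k+1)) x) n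
      - ε * lam n ^ (1 - η)
    ≤ avg γ N (fun k => zet η f (q k) ((c * lam (k+1)) ^ (-η)) (X (k+1))
        * kb K (b (k+1)) (x - X (k+1))) n
  CU : ∀ ε > (0:ℝ), ∀ᶠ n in atTop,
    avg γ N (fun k => zet η f (q k) ((c * lam (k+1)) ^ (-η)) (X (k+1))) n ≤
    (1 + ε) * avg γ N (fun k => ∫ y, zet η f (q k) ((c * lam (k+1)) ^ (-η)) y * q k y) n + ε
  scen : ∀ n, N ≤ n → 0 < (∫ y, g n y) → ∃ x, 0 < f x ∧ ∀ᶠ y in 𝓝 x, 0 ≤ g n y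

section
variable {d : ℕ} {η : ℝ} {f q0 K : E d → ℝ} {γ b lam : ℕ → ℝ} {c Cf CK : ℝ} {L : ℝ≥0} {N : ℕ}
  {g q : ℕ → E d → ℝ} {X : ℕ → E d}

lemma St.Kcont (S : St η f q0 K γ b lam c Cf CK L N) : Continuous K := S.Klip.continuous

lemma St.CK0 (S : St η f q0 K γ b lam c Cf CK L N) : 0 < CK := S.Kpos.trans_le (S.Kle 0)

lemma St.lam1 (S : St η f q0 K γ b lam c Cf CK L N) {n : ℕ} (hn : N ≤ n) : lam n ≤ 1 := by
  have := S.lamhalf n hn; linarith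

lemma St.T_pos (S : St η f q0 K γ b lam c Cf CK L N) (k : ℕ) : 0 < (c * lam (k+1)) ^ (-η) :=
  Real.rpow_pos_of_pos (mul_pos S.c0 (S.lampos _)) _

/-- γ / (λ b^d) → 0 -/
lemma St.rate0 (S : St η f q0 K γ b lam c Cf CK L N) :
    Tendsto (fun n : ℕ => γ n / (lam n * b n ^ d)) atTop (𝓝 0) := by
  refine tendsto_of_tendsto_of_tendsto_of_le_of_le' tendsto_const_nhds S.rate ?_ ?_
  · refine Eventually.of_forall fun n => ?_
    have := S.ste.pos n
    have := S.lampos n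
    have := S.bpos n
    positivity
  · filter_upwards [eventually_ge_atTop 3] with n hn
    have := S.ste.pos n
    have := S.lampos n
    have := S.bpos n
    gcongr
    have h3 : (1:ℝ) ≤ Real.log n := by
      rw [Real.le_log_iff_exp_le (by positivity)]
      have := Real.exp_one_lt_d9
      have : (3:ℝ) ≤ n := by exact_mod_cast hn
      linarith
    nlinarith

lemma St.rate_lam (S : St η f q0 K γ b lam c Cf CK L N) :
    Tendsto (fun n : ℕ => γ n / lam n) atTop (𝓝 0) := by
  refine tendsto_of_tendsto_of_tendsto_of_le_of_le' tendsto_const_nhds S.rate0 ?_ ?_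
  · refine Eventually.of_forall fun n => ?_
    have := S.ste.pos n
    have := S.lampos n
    positivity
  · filter_upwards [eventually_ge_atTop N] with n hn
    have := S.ste.pos n
    have := S.lampos n
    have h1 := S.bpos n
    have h2 := S.bone n hn
    gcongr
    have : b n ^ d ≤ 1 := pow_le_one₀ h1.le h2
    nlinarith

lemma St.pw_lam (S : St η f q0 K γ b lam c Cf CK L N) :
    Tendsto (fun n : ℕ => pw γ N n / lam n) atTop (𝓝 0) := by
  have h1 : Tendsto (fun n => (γ N)⁻¹ * (γ n / lam n)) atTop (𝓝 0) := by
    simpa using S.rate_lam.const_mul (γ N)⁻¹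
  refine tendsto_of_tendsto_of_tendsto_of_le_of_le' tendsto_const_nhds h1 ?_ ?_
  · exact Eventually.of_forall fun n => div_nonneg (pw_pos S.ste n).le (S.lampos n).le
  · filter_upwards [eventually_ge_atTop N] with n hn
    rw [← mul_div_assoc]
    have := S.lampos n
    gcongr
    exact pw_le S.ste hn

/-- π_n ≤ ε λ_n eventually -/
lemma St.pw_le_lam (S : St η f q0 K γ b lam c Cf CK L N) {ε : ℝ} (hε : 0 < ε) :
    ∀ᶠ n in atTop, pw γ N n ≤ ε * lam n := by
  filter_upwards [S.pw_lam.eventually (ge_mem_nhds hε)] with n hn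
  rwa [div_le_iff₀ (S.lampos n)] at hn

lemma St.lam_le_rpow (S : St η f q0 K γ b lam c Cf CK L N) {n : ℕ} (hn : N ≤ n) :
    lam n ≤ lam n ^ (1-η) := by
  conv_lhs => rw [← Real.rpow_one (lam n)]
  exact Real.rpow_le_rpow_of_exponent_ge (S.lampos n) (S.lam1 hn) (by linarith [S.η0])

lemma zet_nonneg {qq : E d → ℝ} {T : ℝ} (hf : ∀ x, 0 ≤ f x) (hq : ∀ x, 0 ≤ qq x) (hT : 0 ≤ T) (y : E d) :
    0 ≤ zet η f qq T y :=
  le_min (Real.rpow_nonneg (div_nonneg (hf y) (hq y)) _) hT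

lemma zet_le {qq : E d → ℝ} {T : ℝ} (y : E d) : zet η f qq T y ≤ T := min_le_right _ _

lemma zet_measurable {qq : E d → ℝ} {T : ℝ} (hf : Measurable f) (hq : Measurable qq) :
    Measurable (zet η f qq T) := by
  unfold zet
  fun_prop

lemma zet_mul_le {qq : E d → ℝ} {T : ℝ} (hη0 : 0 < η) (hη1 : η < 1) (hf : ∀ x, 0 ≤ f x) (hq : ∀ x, 0 ≤ qq x) (y : E d) :
    zet η f qq T y * qq y ≤ η * f y + (1 - η) * qq y := by
  have h1 := mul_le_mul_of_nonneg_right (min_le_left ((f y / qq y) ^ η) T) (hq y)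
  refine h1.trans ?_
  rcases (hq y).eq_or_lt with h | h
  · rw [← h]; have := hf y; simp only [mul_zero, add_zero]; positivity
  · rw [Real.div_rpow (hf y) (hq y)]
    have : f y ^ η / qq y ^ η * qq y = f y ^ η * qq y ^ (1 - η) := by
      rw [Real.rpow_sub h, Real.rpow_one]; ring
    rw [this]
    exact Real.geom_mean_le_arith_mean2_weighted hη0.le (by linarith) (hf y) (hq y) (by ring)

lemma Path.qcont (S : St η f q0 K γ b lam c Cf CK L N) (P : Path η f q0 K γ b lam c N g q X) {n : ℕ}
    (hn : N ≤ n) : Continuous (q n) := by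
  have : q n = fun x => (1 - lam n) * (g n x / ∫ y, g n y) + lam n * q0 x := funext (P.qeq n hn)
  rw [this]
  have h1 := P.gcont n hn
  have h2 := S.q0cont
  fun_prop

lemma Path.qInt (S : St η f q0 K γ b lam c Cf CK L N) (P : Path η f q0 K γ b lam c N g q X) {n : ℕ}
    (hn : N ≤ n) : Integrable (q n) := by
  have : q n = fun x => (1 - lam n) * (g n x / ∫ y, g n y) + lam n * q0 x := funext (P.qeq n hn)
  rw [this]
  exact (((P.gInt n hn).div_const _).const_mul _).add (S.q0Int.const_mul _)

lemma Path.qint (S : St η f q0 K γ b lam c Cf CK L N) (P : Path η f q0 K γ b lam c N g q X) {n : ℕ}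
    (hn : N ≤ n) : (∫ x, q n x) = 1 := by
  have : q n = fun x => (1 - lam n) * (g n x / ∫ y, g n y) + lam n * q0 x := funext (P.qeq n hn)
  rw [this, integral_add (((P.gInt n hn).div_const _).const_mul _) (S.q0Int.const_mul _),
    integral_const_mul, integral_const_mul, integral_div, div_self (P.mne n hn), S.q0int]
  ring

/-- The increment is nonnegative. -/
lemma Path.inc_nonneg (S : St η f q0 K γ b lam c Cf CK L N) (P : Path η f q0 K γ b lam c N g q X) {n : ℕ}
    (hn : N ≤ n) (x : E d) :
    0 ≤ (f (X (n+1)) / q n (X (n+1))) ^ η * kb K (b (n+1)) (x - X (n+1)) :=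
  mul_nonneg (Real.rpow_nonneg (div_nonneg (S.f0 _) (P.qnn n hn _)) _) (kb_nonneg S.K0 (S.bpos _) _)

lemma Path.gmono (S : St η f q0 K γ b lam c Cf CK L N) (P : Path η f q0 K γ b lam c N g q X) {n : ℕ}
    (hn : N ≤ n) (x : E d) : (1 - γ (n+1)) * g n x ≤ g (n+1) x := by
  rw [P.grec n hn x]
  have := mul_nonneg (S.ste.pos (n+1)).le (P.inc_nonneg S hn x)
  linarith

/-- g_n / π_n is nondecreasing -/
lemma Path.gmono' (S : St η f q0 K γ b lam c Cf CK L N) (P : Path η f q0 K γ b lam c N g q X) {m n : ℕ}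
    (hm : N ≤ m) (hmn : m ≤ n) (x : E d) : pw γ N n / pw γ N m * g m x ≤ g n x := by
  induction n, hmn using Nat.le_induction with
  | base => rw [div_self (pw_pos S.ste m).ne', one_mul]
  | succ n hn ih =>
    refine le_trans ?_ (P.gmono S (hm.trans hn) x)
    rw [pw_succ (hm.trans hn)]
    have := S.ste.half' (hm.trans hn)
    have := mul_le_mul_of_nonneg_left ih (by linarith : 0 ≤ 1 - γ (n+1))
    refine le_trans (le_of_eq ?_) this
    ring

lemma Path.mrec (S : St η f q0 K γ b lam c Cf CK L N) (P : Path η f q0 K γ b lam c N g q X) {n : ℕ}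
    (hn : N ≤ n) : (∫ x, g (n+1) x) = (1 - γ (n+1)) * (∫ x, g n x)
      + γ (n+1) * (f (X (n+1)) / q n (X (n+1))) ^ η := by
  have : g (n+1) = fun x => (1 - γ (n+1)) * g n x
    + γ (n+1) * ((f (X (n+1)) / q n (X (n+1))) ^ η * kb K (b (n+1)) (x - X (n+1))) := funext (P.grec n hn)
  rw [this, integral_add ((P.gInt n hn).const_mul _)
    (((kb_integrable_sub S.Kint (S.bpos _) _).const_mul _).const_mul _), integral_const_mul, integral_const_mul,
    integral_const_mul, kb_integral_sub S.Kint (S.bpos _)]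
  ring

lemma Path.mmono (S : St η f q0 K γ b lam c Cf CK L N) (P : Path η f q0 K γ b lam c N g q X) {n : ℕ}
    (hn : N ≤ n) : (1 - γ (n+1)) * (∫ x, g n x) ≤ ∫ x, g (n+1) x := by
  rw [P.mrec S hn]
  have : 0 ≤ (f (X (n+1)) / q n (X (n+1))) ^ η :=
    Real.rpow_nonneg (div_nonneg (S.f0 _) (P.qnn n hn _)) _
  have := mul_nonneg (S.ste.pos (n+1)).le this
  linarith

lemma Path.mpos (S : St η f q0 K γ b lam c Cf CK L N) (P : Path η f q0 K γ b lam c N g q X) {m n : ℕ}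
    (hm : N ≤ m) (hmn : m ≤ n) (h : 0 < ∫ x, g m x) : 0 < ∫ x, g n x := by
  induction n, hmn using Nat.le_induction with
  | base => exact h
  | succ n hn ih =>
    refine lt_of_lt_of_le ?_ (P.mmono S (hm.trans hn))
    have := S.ste.half' (hm.trans hn)
    apply mul_pos _ ih
    linarith

/-- lower bound of `g` by the truncated average -/
lemma Path.g_lower (S : St η f q0 K γ b lam c Cf CK L N) (P : Path η f q0 K γ b lam c N g q X) {n : ℕ}
    (hn : N ≤ n) (x : E d) :
    pw γ N n * g N x + avg γ N (fun k => zet η f (q k) ((c * lam (k+1)) ^ (-η)) (X (k+1))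
        * kb K (b (k+1)) (x - X (k+1))) n ≤ g n x := by
  rw [avg_formula S.ste (u := fun n => g n x) (fun n hn => P.grec n hn x) hn]
  gcongr
  apply avg_mono S.ste
  intro k hk
  exact mul_le_mul_of_nonneg_right (min_le_left _ _) (kb_nonneg S.K0 (S.bpos _) _)

lemma Eb_integrable (S : St η f q0 K γ b lam c Cf CK L N) {qq : E d → ℝ} {T β : ℝ} (hβ : 0 < β) (hT : 0 ≤ T)
    (hq : Measurable qq) (hqi : Integrable qq) (hq0 : ∀ x, 0 ≤ qq x) (x : E d) :
    Integrable (fun y => zet η f qq T y * kb K β (x - y) * qq y) := by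
  apply hqi.bdd_mul (c := T * ((β ^ d)⁻¹ * CK))
  · apply Measurable.aestronglyMeasurable
    apply (zet_measurable S.fcont.measurable hq).mul
    exact ((kb_continuous S.Kcont).comp (continuous_const.sub continuous_id)).measurable
  · refine Eventually.of_forall fun y => ?_
    have h1 := zet_nonneg (η := η) (T := T) S.f0 hq0 hT y
    have h2 := kb_nonneg S.K0 hβ (x - y)
    rw [Real.norm_of_nonneg (mul_nonneg h1 h2)]
    have := S.CK0
    exact mul_le_mul (zet_le y) (kb_le S.Kle hβ _) h2 hT

lemma Eb_nonneg (S : St η f q0 K γ b lam c Cf CK L N) {qq : E d → ℝ} {T β : ℝ} (hβ : 0 < β) (hT : 0 ≤ T)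
    (hq0 : ∀ x, 0 ≤ qq x) (x : E d) : 0 ≤ Eb η f K qq T β x :=
  integral_nonneg fun y => mul_nonneg (mul_nonneg (zet_nonneg S.f0 hq0 hT y) (kb_nonneg S.K0 hβ _)) (hq0 y)

lemma Path.Eb_lower (S : St η f q0 K γ b lam c Cf CK L N) (P : Path η f q0 K γ b lam c N g q X)
    {r ε : ℝ} (hr : 0 < r) (hε : 0 < ε) (hε1 : ε < 1) :
    ∃ n0, N ≤ n0 ∧ ∀ k, n0 ≤ k → ∀ (x : E d) (F θ : ℝ), 0 < F → 0 ≤ θ →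
      (∀ z ∈ closedBall x r, F ≤ f z ∧ c * lam k * f z ≤ q k z ∧ θ * hat x r z ≤ q k z) →
      ∀ y, F ^ η * θ ^ (1-η) * ((1-ε) * hat x r y)
        ≤ Eb η f K (q k) ((c * lam (k+1)) ^ (-η)) (b (k+1)) y := by
  obtain ⟨b0, hb0, hkey⟩ := hat_key S.η0 S.η1 S.K0 S.Kint S.Kcont S.Kpos hr hε hε1
  obtain ⟨n1, hn1⟩ := eventually_atTop.1 (S.blim.eventually (ge_mem_nhds hb0))
  refine ⟨max N n1, le_max_left _ _, fun k hk x F θ hF hθ hball y => ?_⟩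
  have hkN : N ≤ k := (le_max_left _ _).trans hk
  have hk1 : n1 ≤ k := (le_max_right _ _).trans hk
  have hη1 := S.η1
  have hη0 := S.η0
  have h1 := hkey (b (k+1)) (S.bpos _) (hn1 _ (by omega)) x y
  have hFp : 0 ≤ F ^ η * θ ^ (1-η) := by positivity
  refine (mul_le_mul_of_nonneg_left h1 hFp).trans ?_
  rw [← integral_const_mul]
  apply integral_mono_of_nonneg
  · refine Eventually.of_forall fun z => ?_
    exact mul_nonneg hFp (mul_nonneg (Real.rpow_nonneg (hat_nonneg _ _ _) _) (kb_nonneg S.K0 (S.bpos _) _))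
  · exact Eb_integrable S (S.bpos _) (S.T_pos k).le (P.qcont S hkN).measurable (P.qInt S hkN) (P.qnn k hkN) y
  · refine Eventually.of_forall fun z => ?_
    have hkb := kb_nonneg S.K0 (S.bpos (k+1)) (y - z)
    show F ^ η * θ ^ (1 - η) * (hat x r z ^ (1 - η) * kb K (b (k + 1)) (y - z))
      ≤ zet η f (q k) ((c * lam (k+1)) ^ (-η)) z * kb K (b (k + 1)) (y - z) * q k z
    by_cases hz : z ∈ closedBall x r
    · obtain ⟨hf, hq, hθq⟩ := hball z hz
      have hfz : 0 < f z := hF.trans_le hf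
      have hlk := S.lampos k
      have hlk1 := S.lampos (k+1)
      have hc0 := S.c0
      have hqz : 0 < q k z := lt_of_lt_of_le (by positivity) hq
      have hzet : zet η f (q k) ((c * lam (k+1)) ^ (-η)) z = (f z / q k z) ^ η := by
        unfold zet
        apply min_eq_left
        rw [Real.rpow_neg (by positivity), ← Real.inv_rpow (by positivity)]
        apply Real.rpow_le_rpow (by positivity) _ hη0.le
        rw [div_le_iff₀ hqz, inv_mul_eq_div, le_div_iff₀ (by positivity)]
        refine le_trans ?_ hq
        rw [mul_comm]
        gcongr
        exact S.lamanti (by omega)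
      rw [hzet]
      have e1 : (f z / q k z) ^ η * kb K (b (k + 1)) (y - z) * q k z
          = f z ^ η * q k z ^ (1-η) * kb K (b (k + 1)) (y - z) := by
        rw [Real.div_rpow hfz.le hqz.le, Real.rpow_sub hqz, Real.rpow_one]; ring
      rw [e1]
      have hh := hat_nonneg x r z
      calc F ^ η * θ ^ (1 - η) * (hat x r z ^ (1 - η) * kb K (b (k + 1)) (y - z))
          = F ^ η * (θ * hat x r z) ^ (1 - η) * kb K (b (k + 1)) (y - z) := by
            rw [Real.mul_rpow hθ hh]; ring
        _ ≤ _ := by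
            gcongr
    · rw [hat_eq_zero hr hz, Real.zero_rpow (by linarith)]
      simp only [zero_mul, mul_zero]
      exact mul_nonneg (mul_nonneg (zet_nonneg S.f0 (P.qnn k hkN) (S.T_pos k).le z) hkb) (P.qnn k hkN z)

end
end Midas

open MeasureTheory Filter Metric
open scoped Topology ENNReal NNReal

namespace Midas

/-- averaged truncated conditional mean -/
noncomputable def Dn {d : ℕ} (η : ℝ) (f K : E d → ℝ) (γ b lam : ℕ → ℝ) (c : ℝ) (N : ℕ)
    (q : ℕ → E d → ℝ) (n : ℕ) (y : E d) : ℝ :=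
  avg γ N (fun k => Eb η f K (q k) ((c * lam (k+1)) ^ (-η)) (b (k+1)) y) n

section
variable {d : ℕ} {η : ℝ} {f q0 K : E d → ℝ} {γ b lam : ℕ → ℝ} {c Cf CK : ℝ} {L : ℝ≥0} {N : ℕ}
  {g q : ℕ → E d → ℝ} {X : ℕ → E d}

lemma Path.Dn_nonneg (S : St η f q0 K γ b lam c Cf CK L N) (P : Path η f q0 K γ b lam c N g q X) (n : ℕ) (y : E d) :
    0 ≤ Dn η f K γ b lam c N q n y :=
  avg_nonneg S.ste (fun k hk => Eb_nonneg S (S.bpos _) (S.T_pos k).le (P.qnn k hk) y) n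

lemma Path.G1 (S : St η f q0 K γ b lam c Cf CK L N) (P : Path η f q0 K γ b lam c N g q X)
    {Pt : Set (E d)} {F : E d → ℝ} {F0 r R : ℝ} (hF0 : 0 < F0) (hF : ∀ x ∈ Pt, F0 ≤ F x) (hr : 0 < r)
    (hR : ∀ x ∈ Pt, ‖x‖ ≤ R) {n1 : ℕ} (hn1 : N ≤ n1)
    (hball : ∀ x ∈ Pt, ∀ z ∈ closedBall x (2*r), F x ≤ f z ∧ ∀ n, n1 ≤ n → c * lam n * f z ≤ q n z) :
    ∃ e0 > 0, ∀ ε > 0, ∀ᶠ n in atTop, ∀ x ∈ Pt, ∀ y ∈ closedBall x r,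
      e0 * F x * lam n ^ (1-η) ≤ Dn η f K γ b lam c N q n y ∧
      (1 - ε) * Dn η f K γ b lam c N q n y ≤ g n y := by
  have hη0 := S.η0
  have hη1 := S.η1
  have hc0 := S.c0
  obtain ⟨n0, hn0, hlow⟩ := P.Eb_lower S (r := 2*r) (ε := 1/2) (by positivity) (by norm_num) (by norm_num)
  set n2 := max n0 n1 with hn2
  have hn2N : N ≤ n2 := hn1.trans (le_max_right _ _)
  set e1 : ℝ := c ^ (1-η) / 4 with he1
  have he1pos : 0 < e1 := by positivity
  have hE : ∀ k, n2 ≤ k → ∀ x ∈ Pt, ∀ y ∈ closedBall x r,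
      e1 * F x * lam k ^ (1-η) ≤ Eb η f K (q k) ((c * lam (k+1)) ^ (-η)) (b (k+1)) y := by
    intro k hk x hx y hy
    have hFx : 0 < F x := hF0.trans_le (hF x hx)
    have hlk := S.lampos k
    have h1 := hlow k ((le_max_left _ _).trans hk) x (F x) (c * lam k * F x) hFx (by positivity) (by
      intro z hz
      obtain ⟨h2, h3⟩ := hball x hx z hz
      have h3 := h3 k ((le_max_right _ _).trans hk)
      refine ⟨h2, h3, ?_⟩
      calc c * lam k * F x * hat x (2*r) z ≤ c * lam k * F x * 1 := by
            gcongr; exact hat_le_one _ (by positivity) _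
        _ ≤ c * lam k * f z := by rw [mul_one]; gcongr
        _ ≤ _ := h3) y
    refine le_trans ?_ h1
    have h4 := hat_half hr hy
    have e : F x ^ η * (c * lam k * F x) ^ (1-η) = F x * (c ^ (1-η) * lam k ^ (1-η)) := by
      rw [Real.mul_rpow (by positivity) hFx.le, Real.mul_rpow hc0.le hlk.le]
      have : F x ^ η * F x ^ (1-η) = F x := by rw [← Real.rpow_add hFx]; simp
      calc _ = (F x ^ η * F x ^ (1-η)) * (c ^ (1-η) * lam k ^ (1-η)) := by ring
        _ = _ := by rw [this]
    rw [e, he1]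
    calc c ^ (1-η) / 4 * F x * lam k ^ (1-η) = F x * (c ^ (1-η) * lam k ^ (1-η)) * ((1-1/2) * (1/2)) := by ring
      _ ≤ _ := by gcongr
  -- induction
  have hD : ∀ n, n2 ≤ n → ∀ x ∈ Pt, ∀ y ∈ closedBall x r,
      e1 * F x * lam n ^ (1-η) * (1 - pw γ N n / pw γ N n2) ≤ Dn η f K γ b lam c N q n y := by
    intro n hn x hx y hy
    have hFx : 0 < F x := hF0.trans_le (hF x hx)
    induction n, hn using Nat.le_induction with
    | base =>
      rw [div_self (pw_pos S.ste n2).ne', sub_self, mul_zero]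
      exact P.Dn_nonneg S _ _
    | succ n hn ih =>
      have hnN : N ≤ n := hn2N.trans hn
      unfold Dn at ih ⊢
      rw [avg_succ S.ste _ hnN]
      have hg := S.ste.half' hnN
      have hgp := S.ste.pos (n+1)
      have h1 := hE n hn x hx y hy
      have hl : lam (n+1) ^ (1-η) ≤ lam n ^ (1-η) :=
        Real.rpow_le_rpow (S.lampos _).le (S.lamanti (by omega)) (by linarith)
      have hpp : pw γ N (n+1) / pw γ N n2 ≤ 1 := by
        rw [div_le_one (pw_pos S.ste n2)]
        have : ∀ m, n2 ≤ m → pw γ N m ≤ pw γ N n2 := by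
          intro m hm
          induction m, hm using Nat.le_induction with
          | base => exact le_rfl
          | succ m hm ih =>
            rw [pw_succ (hn2N.trans hm)]
            have := pw_pos S.ste m
            have := S.ste.pos (m+1)
            nlinarith
        exact this _ (by omega)
      calc e1 * F x * lam (n+1) ^ (1-η) * (1 - pw γ N (n+1) / pw γ N n2)
          ≤ e1 * F x * lam n ^ (1-η) * (1 - pw γ N (n+1) / pw γ N n2) := by
            have : 0 ≤ 1 - pw γ N (n+1) / pw γ N n2 := by linarith
            gcongr
        _ = (1 - γ (n+1)) * (e1 * F x * lam n ^ (1-η) * (1 - pw γ N n / pw γ N n2))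
            + γ (n+1) * (e1 * F x * lam n ^ (1-η)) := by
            rw [pw_succ hnN]; ring
        _ ≤ _ := by
            have : 0 ≤ 1 - γ (n+1) := by linarith
            gcongr
  refine ⟨e1/2, by positivity, fun ε hε => ?_⟩
  obtain ⟨C, hC, hgC⟩ := P.gbd
  set ε1 : ℝ := min (ε/2) (ε * (e1/2 * F0) / 4) with hε1
  have hε1pos : 0 < ε1 := by positivity
  have hpwhalf : ∀ᶠ n in atTop, pw γ N n / pw γ N n2 ≤ 1/2 := by
    have := (pw_tendsto S.ste).eventually (ge_mem_nhds (show 0 < pw γ N n2 / 2 by have := pw_pos S.ste n2; positivity))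
    filter_upwards [this] with n hn
    rw [div_le_iff₀ (pw_pos S.ste n2)]; linarith
  filter_upwards [P.CL (R + r) ε1 hε1pos, hpwhalf, eventually_ge_atTop n2,
    S.pw_le_lam (show 0 < ε1 / C by positivity)] with n hCL hpw hn hpl x hx y hy
  have hFx : 0 < F x := hF0.trans_le (hF x hx)
  have hnN : N ≤ n := hn2N.trans hn
  have hln := S.lampos n
  have hl0 : 0 < lam n ^ (1-η) := Real.rpow_pos_of_pos hln _
  have hDl : e1/2 * F x * lam n ^ (1-η) ≤ Dn η f K γ b lam c N q n y := by
    refine le_trans ?_ (hD n hn x hx y hy)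
    calc e1/2 * F x * lam n ^ (1-η) = e1 * F x * lam n ^ (1-η) * (1/2) := by ring
      _ ≤ _ := by gcongr; linarith
  refine ⟨hDl, ?_⟩
  have hy' : ‖y‖ ≤ R + r := by
    rw [mem_closedBall, dist_eq_norm] at hy
    have : y = x + (y - x) := by abel
    rw [this]
    exact (norm_add_le _ _).trans (add_le_add (hR x hx) hy)
  have h1 := hCL y hy'
  have h2 := P.g_lower S hnN y
  have h3 : -(ε1 * lam n ^ (1-η)) ≤ pw γ N n * g N y := by
    have h4 : pw γ N n * (-C) ≤ pw γ N n * g N y := mul_le_mul_of_nonneg_left (hgC y) (pw_pos S.ste n).le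
    have h5 : pw γ N n * C ≤ ε1 * lam n := by
      calc pw γ N n * C ≤ ε1 / C * lam n * C := by gcongr
        _ = _ := by field_simp
    have h6 := S.lam_le_rpow hnN
    nlinarith
  have hDnn := P.Dn_nonneg S n y
  have h7 : 2 * (ε1 * lam n ^ (1-η)) ≤ ε/2 * Dn η f K γ b lam c N q n y := by
    calc 2 * (ε1 * lam n ^ (1-η)) ≤ 2 * (ε * (e1/2 * F0) / 4 * lam n ^ (1-η)) := by
          gcongr; exact min_le_right _ _
      _ = ε/2 * (e1/2 * F0 * lam n ^ (1-η)) := by ring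
      _ ≤ ε/2 * (e1/2 * F x * lam n ^ (1-η)) := by gcongr; exact hF x hx
      _ ≤ _ := by gcongr
  have h8 : ε1 * Dn η f K γ b lam c N q n y ≤ ε/2 * Dn η f K γ b lam c N q n y := by
    gcongr; exact min_le_left _ _
  change (1 - ε1) * Dn η f K γ b lam c N q n y - ε1 * lam n ^ (1 - η) ≤ _ at h1
  linarith

lemma Path.G2 (S : St η f q0 K γ b lam c Cf CK L N) (P : Path η f q0 K γ b lam c N g q X)
    {Pt : Set (E d)} {F : E d → ℝ} {F0 r R : ℝ} (hF0 : 0 < F0) (hF : ∀ x ∈ Pt, F0 ≤ F x) (hr : 0 < r)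
    (hR : ∀ x ∈ Pt, ‖x‖ ≤ R) {n1 : ℕ} (hn1 : N ≤ n1)
    (hball : ∀ x ∈ Pt, ∀ z ∈ closedBall x (2*r), F x ≤ f z ∧ ∀ n, n1 ≤ n → c * lam n * f z ≤ q n z)
    (hm : ∀ n, n1 ≤ n → 0 < ∫ x, g n x) {ε : ℝ} (hε : 0 < ε) (hε1 : ε < 1) :
    ∃ n2, n1 ≤ n2 ∧ ∃ s : ℕ → ℝ, (∀ n, n2 ≤ n → 0 < s n) ∧
      (∀ n, n2 ≤ n → (1 - γ (n+1)) * s n + γ (n+1) * ((1-ε)^3 * (s n / ∫ x, g n x) ^ (1-η)) ≤ s (n+1)) ∧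
      ∀ n, n2 ≤ n → ∀ x ∈ Pt, ∀ y, y ∈ closedBall x r → (1-ε) * (s n * F x * hat x r y) ≤ g n y := by
  have hη0 := S.η0
  have hη1 := S.η1
  have hc0 := S.c0
  obtain ⟨e0, he0, hG1⟩ := P.G1 S hF0 hF hr hR hn1 hball
  obtain ⟨n3, hn3⟩ := eventually_atTop.1 (hG1 ε hε)
  obtain ⟨n0, hn0, hlow⟩ := P.Eb_lower S hr hε hε1
  obtain ⟨n4, hn4⟩ := eventually_atTop.1 (S.lamlim.eventually (ge_mem_nhds hε))
  set n2 := max (max n0 n1) (max n3 n4) with hn2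
  have h20 : n0 ≤ n2 := (le_max_left _ _).trans (le_max_left _ _)
  have h21 : n1 ≤ n2 := (le_max_right _ _).trans (le_max_left _ _)
  have h23 : n3 ≤ n2 := (le_max_left _ _).trans (le_max_right _ _)
  have h24 : n4 ≤ n2 := (le_max_right _ _).trans (le_max_right _ _)
  -- define s
  let s' : ℕ → ℝ := fun j => Nat.rec (e0 * lam n2 ^ (1-η))
    (fun j sj => (1 - γ (n2 + j + 1)) * sj + γ (n2 + j + 1) * ((1-ε)^3 * (sj / ∫ x, g (n2 + j) x) ^ (1-η))) j
  let s : ℕ → ℝ := fun n => s' (n - n2)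
  have hs0 : s n2 = e0 * lam n2 ^ (1-η) := by simp [s, s']
  have hsrec : ∀ n, n2 ≤ n → s (n+1) =
      (1 - γ (n+1)) * s n + γ (n+1) * ((1-ε)^3 * (s n / ∫ x, g n x) ^ (1-η)) := by
    intro n hn
    obtain ⟨j, rfl⟩ := Nat.exists_eq_add_of_le hn
    have e1 : n2 + j + 1 - n2 = j + 1 := by omega
    have e2 : n2 + j - n2 = j := by omega
    simp only [s, e1, e2]
    rfl
  have hspos : ∀ n, n2 ≤ n → 0 < s n := by
    intro n hn
    induction n, hn using Nat.le_induction with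
    | base => rw [hs0]; have := S.lampos n2; positivity
    | succ n hn ih =>
      rw [hsrec n hn]
      have h1 := S.ste.half' (hn1.trans (h21.trans hn))
      have h2 := S.ste.pos (n+1)
      have h3 := hm n (h21.trans hn)
      have h4 : 0 < 1 - γ (n+1) := by linarith
      have h5 : 0 < 1 - ε := by linarith
      positivity
  have hDs : ∀ n, n2 ≤ n → ∀ x ∈ Pt, ∀ y, y ∈ closedBall x r →
      s n * F x * hat x r y ≤ Dn η f K γ b lam c N q n y := by
    intro n hn x hx
    have hFx : 0 < F x := hF0.trans_le (hF x hx)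
    induction n, hn using Nat.le_induction with
    | base =>
      intro y hy
      rw [hs0]
      have := S.lampos n2
      calc e0 * lam n2 ^ (1-η) * F x * hat x r y ≤ e0 * lam n2 ^ (1-η) * F x * 1 := by
            gcongr; exact hat_le_one _ hr _
        _ = e0 * F x * lam n2 ^ (1-η) := by ring
        _ ≤ _ := (hn3 n2 h23 x hx y hy).1
    | succ n hn ih =>
      intro y hy
      have hnN : N ≤ n := hn1.trans (h21.trans hn)
      have hmn := hm n (h21.trans hn)
      have hsn := hspos n hn
      have hg := S.ste.half' hnN
      have hgp := S.ste.pos (n+1)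
      have hln := S.lampos n
      have hlε : lam n ≤ ε := hn4 n (h24.trans hn)
      set m := ∫ x, g n x with hmdef
      have hθ0 : 0 < (1-ε)*(1-ε) * (s n / m) * F x := by
        have : 0 < 1 - ε := by linarith
        positivity
      have hE := hlow n (h20.trans hn) x (F x) ((1-ε)*(1-ε) * (s n / m) * F x) hFx hθ0.le (by
        intro z hz
        have hz2 : z ∈ closedBall x (2*r) := closedBall_subset_closedBall (by linarith) hz
        obtain ⟨h2, h3⟩ := hball x hx z hz2
        refine ⟨h2, h3 n (h21.trans hn), ?_⟩
        rw [P.qeq n hnN z, ← hmdef]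
        have h4 := (hn3 n (h23.trans hn) x hx z hz).2
        have h5 := ih z hz
        have h6 : (1 - ε) * (s n * F x * hat x r z) ≤ g n z := by
          refine le_trans ?_ h4
          apply mul_le_mul_of_nonneg_left h5; linarith
        have h7 : 0 ≤ (1 - ε) * (s n * F x * hat x r z) := by
          have := hat_nonneg x r z
          have : 0 < 1 - ε := by linarith
          positivity
        calc (1-ε)*(1-ε) * (s n / m) * F x * hat x r z
            = (1-ε) * ((1 - ε) * (s n * F x * hat x r z) / m) := by ring
          _ ≤ (1 - lam n) * (g n z / m) := by
              have : 0 ≤ (1 - ε) * (s n * F x * hat x r z) / m := by positivity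
              have : 0 ≤ 1 - ε := by linarith
              have : 0 ≤ 1 - lam n := by linarith
              gcongr
          _ ≤ _ := by have := mul_nonneg hln.le (S.q00 z); linarith) y
      unfold Dn at ih ⊢
      rw [avg_succ S.ste _ hnN, hsrec n hn]
      have h8 : (1-ε)^3 * (s n / m) ^ (1-η) * F x * hat x r y
          ≤ Eb η f K (q n) ((c * lam (n+1)) ^ (-η)) (b (n+1)) y := by
        refine le_trans ?_ hE
        have hh := hat_nonneg x r y
        have h1ε : 0 < 1 - ε := by linarith
        have e1 : F x ^ η * ((1-ε)*(1-ε) * (s n / m) * F x) ^ (1-η)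
            = F x * (((1-ε)*(1-ε)) ^ (1-η) * (s n / m) ^ (1-η)) := by
          rw [Real.mul_rpow (by positivity) hFx.le, Real.mul_rpow (by positivity) (by positivity)]
          have : F x ^ η * F x ^ (1-η) = F x := by rw [← Real.rpow_add hFx]; simp
          calc _ = (F x ^ η * F x ^ (1-η)) * (((1-ε)*(1-ε)) ^ (1-η) * (s n / m) ^ (1-η)) := by ring
            _ = _ := by rw [this]
        rw [e1]
        have e2 : (1-ε)*(1-ε) ≤ ((1-ε)*(1-ε)) ^ (1-η) := by
          conv_lhs => rw [← Real.rpow_one ((1-ε)*(1-ε))]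
          exact Real.rpow_le_rpow_of_exponent_ge (by positivity) (by nlinarith) (by linarith)
        calc (1-ε)^3 * (s n / m) ^ (1-η) * F x * hat x r y
            = F x * (((1-ε)*(1-ε)) * (s n / m) ^ (1-η)) * ((1-ε) * hat x r y) := by ring
          _ ≤ _ := by gcongr
      have h9 := ih y hy
      have h10 : 0 ≤ 1 - γ (n+1) := by linarith
      calc ((1 - γ (n+1)) * s n + γ (n+1) * ((1-ε)^3 * (s n / m) ^ (1-η))) * F x * hat x r y
          = (1 - γ (n+1)) * (s n * F x * hat x r y)
            + γ (n+1) * ((1-ε)^3 * (s n / m) ^ (1-η) * F x * hat x r y) := by ring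
        _ ≤ _ := by gcongr
  refine ⟨n2, h21, s, hspos, fun n hn => (hsrec n hn).ge, fun n hn x hx y hy => ?_⟩
  refine le_trans ?_ (hn3 n (h23.trans hn) x hx y hy).2
  apply mul_le_mul_of_nonneg_left (hDs n hn x hx y hy); linarith

end
end Midas

open MeasureTheory Filter Metric
open scoped Topology ENNReal NNReal

namespace Midas
section
variable {d : ℕ} {η : ℝ} {f q0 K : E d → ℝ} {γ b lam : ℕ → ℝ} {c Cf CK : ℝ} {L : ℝ≥0} {N : ℕ}
  {g q : ℕ → E d → ℝ} {X : ℕ → E d}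

lemma St.exists_fpos (S : St η f q0 K γ b lam c Cf CK L N) : ∃ x, 0 < f x := by
  by_contra h
  push Not at h
  have : f = fun _ => 0 := funext fun x => le_antisymm (h x) (S.f0 x)
  have h1 := S.fint
  rw [this] at h1
  simp at h1

lemma Path.mmono' (S : St η f q0 K γ b lam c Cf CK L N) (P : Path η f q0 K γ b lam c N g q X) {m n : ℕ}
    (hm : N ≤ m) (hmn : m ≤ n) : pw γ N n / pw γ N m * (∫ x, g m x) ≤ ∫ x, g n x := by
  induction n, hmn using Nat.le_induction with
  | base => rw [div_self (pw_pos S.ste m).ne', one_mul]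
  | succ n hn ih =>
    refine le_trans ?_ (P.mmono S (hm.trans hn))
    rw [pw_succ (hm.trans hn)]
    have := S.ste.half' (hm.trans hn)
    have := mul_le_mul_of_nonneg_left ih (by linarith : 0 ≤ 1 - γ (n+1))
    refine le_trans (le_of_eq ?_) this
    ring

lemma Path.case1 (S : St η f q0 K γ b lam c Cf CK L N) (P : Path η f q0 K γ b lam c N g q X)
    (hneg : ∀ n, N ≤ n → (∫ x, g n x) < 0) : False := by
  have hgle : ∀ m, N ≤ m → ∀ x, g m x ≤ 0 := by
    intro m hm x
    have hup : ∀ n, m ≤ n → g m x / pw γ N m ≤ -(∫ x, g N x) * (2 * lam n) * q0 x := by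
      intro n hn
      have hnN := hm.trans hn
      have h1 := P.gmono' S hm hn x
      have h2 := P.mmono' S le_rfl hnN
      rw [pw_self, div_one] at h2
      have h3 := P.qnn n hnN x
      rw [P.qeq n hnN x] at h3
      have h4 := hneg n hnN
      have h5 := S.lamhalf n hnN
      have h6 := S.lampos n
      have h7 := pw_pos S.ste n
      have h8 := pw_pos S.ste m
      have h9 := S.q00 x
      set M := ∫ x, g n x
      set M0 := ∫ x, g N x
      -- g n x ≤ -M * 2 lam q0
      have h10 : g n x ≤ -M * (2 * lam n) * q0 x := by
        have : 0 ≤ g n x / M + 2 * lam n * q0 x := by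
          by_contra hcon
          push Not at hcon
          have hq : 0 ≤ lam n * q0 x := by positivity
          have : g n x / M < 0 := by nlinarith
          nlinarith
        have h11 := mul_le_mul_of_nonpos_left this h4.le
        rw [mul_add, mul_div_cancel₀ _ h4.ne] at h11
        nlinarith
      have h12 : -M ≤ pw γ N n * (-M0) := by linarith
      have h13 : pw γ N n * (g m x / pw γ N m) ≤ pw γ N n * (-M0 * (2 * lam n) * q0 x) := by
        calc pw γ N n * (g m x / pw γ N m) = pw γ N n / pw γ N m * g m x := by ring
          _ ≤ g n x := h1
          _ ≤ -M * (2 * lam n) * q0 x := h10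
          _ ≤ pw γ N n * (-M0) * (2 * lam n) * q0 x := by gcongr
          _ = _ := by ring
      exact le_of_mul_le_mul_left h13 h7
    have hlim : Tendsto (fun n => -(∫ x, g N x) * (2 * lam n) * q0 x) atTop (𝓝 0) := by
      have := ((S.lamlim.const_mul 2).const_mul (-(∫ x, g N x))).mul_const (q0 x)
      simpa using this
    have h0 : g m x / pw γ N m ≤ 0 :=
      ge_of_tendsto hlim (eventually_atTop.2 ⟨m, hup⟩)
    have h8 := pw_pos S.ste m
    rw [div_le_iff₀ h8, zero_mul] at h0
    exact h0
  obtain ⟨x1, hx1⟩ := S.exists_fpos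
  have hev : ∀ᶠ z in 𝓝 x1, f x1 / 2 < f z := S.fcont.continuousAt.eventually (lt_mem_nhds (by linarith))
  obtain ⟨r, hr, hball⟩ := Metric.eventually_nhds_iff_ball.1 hev
  obtain ⟨e0, he0, hG⟩ := P.G1 S (Pt := {x1}) (F := fun _ => f x1 / 2) (F0 := f x1 / 2) (r := r/4) (R := ‖x1‖)
    (by linarith) (by intro x _; exact le_rfl) (by positivity) (by intro x hx; rw [hx]) le_rfl (by
      intro x hx z hz
      rw [Set.mem_singleton_iff] at hx
      subst hx
      refine ⟨(hball z (closedBall_subset_ball (by linarith) hz)).le, fun n hn => ?_⟩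
      rw [P.qeq n hn z]
      have h1 : 0 ≤ g n z / ∫ y, g n y := div_nonneg_of_nonpos (hgle n hn z) (hneg n hn).le
      have h5 := S.lamhalf n hn
      have h6 := S.lampos n
      have h7 := S.hc z
      have h8 : 0 ≤ (1 - lam n) * (g n z / ∫ y, g n y) := mul_nonneg (by linarith) h1
      have h9 : 0 ≤ c * f z := mul_nonneg S.c0.le (S.f0 z)
      nlinarith)
  obtain ⟨n, hn1, hn2⟩ := ((hG (1/2) (by norm_num)).and (eventually_ge_atTop N)).exists
  obtain ⟨h1, h2⟩ := hn1 x1 rfl x1 (mem_closedBall_self (by positivity))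
  have h3 := hgle n hn2 x1
  have h4 : 0 < e0 * (f x1 / 2) * lam n ^ (1-η) := by
    have := Real.rpow_pos_of_pos (S.lampos n) (1-η)
    positivity
  linarith

lemma hat_integrable (x : E d) {r : ℝ} (hr : 0 < r) : Integrable (hat x r) := by
  apply (hat_continuous x r).integrable_of_hasCompactSupport
  apply HasCompactSupport.of_support_subset_isCompact (isCompact_closedBall x r)
  intro y hy
  by_contra h
  exact hy (hat_eq_zero hr h)

lemma hat_integral_pos (x : E d) {r : ℝ} (hr : 0 < r) : 0 < ∫ y, hat x r y := by
  apply (hat_continuous x r).integral_pos_of_hasCompactSupport_nonneg_nonzero _ (hat_nonneg x r) (x := x)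
  · rw [hat_self]; norm_num
  · apply HasCompactSupport.of_support_subset_isCompact (isCompact_closedBall x r)
    intro y hy
    by_contra h
    exact hy (hat_eq_zero hr h)

/-- Step I and II -/
lemma Path.step12 (S : St η f q0 K γ b lam c Cf CK L N) (P : Path η f q0 K γ b lam c N g q X) :
    ∃ n1, N ≤ n1 ∧ (∀ n, n1 ≤ n → 0 < ∫ x, g n x) ∧ ∀ n, n1 ≤ n → ∀ z, c * lam n * f z ≤ q n z := by
  have hη0 := S.η0
  have hη1 := S.η1
  obtain ⟨n1, hn1, hm1⟩ : ∃ n1, N ≤ n1 ∧ 0 < ∫ x, g n1 x := by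
    by_contra hcon
    push Not at hcon
    exact P.case1 S fun n hn => lt_of_le_of_ne (hcon n hn) (P.mne n hn)
  have hmpos : ∀ n, n1 ≤ n → 0 < ∫ x, g n x := fun n hn => P.mpos S hn1 hn hm1
  obtain ⟨x1, hx1, hnb⟩ := P.scen n1 hn1 hm1
  have hev : ∀ᶠ z in 𝓝 x1, f x1 / 2 < f z := S.fcont.continuousAt.eventually (lt_mem_nhds (by linarith))
  obtain ⟨r4, hr4, hball⟩ := Metric.eventually_nhds_iff_ball.1 (hev.and hnb)
  set r := r4/4 with hrdef
  have hr : 0 < r := by positivity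
  set F := f x1 / 2 with hFdef
  have hFpos : 0 < F := by positivity
  obtain ⟨n2, hn2, s, hspos, hsrec, hgs⟩ := P.G2 S (Pt := {x1}) (F := fun _ => F) (F0 := F) (r := r) (R := ‖x1‖)
    hFpos (by intro x _; exact le_rfl) hr (by intro x hx; rw [hx]) hn1 (by
      intro x hx z hz
      rw [Set.mem_singleton_iff] at hx
      subst hx
      obtain ⟨hf1, hg1⟩ := hball z (closedBall_subset_ball (by linarith) hz)
      refine ⟨hf1.le, fun n hn => ?_⟩
      rw [P.qeq n (hn1.trans hn) z]
      have h0 : 0 ≤ g n z := le_trans (mul_nonneg (div_nonneg (pw_pos S.ste n).le (pw_pos S.ste n1).le) hg1)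
        (P.gmono' S hn1 hn z)
      have h1 : 0 ≤ g n z / ∫ y, g n y := div_nonneg h0 (hmpos n hn).le
      have h5 := S.lamhalf n (hn1.trans hn)
      have h6 := S.lampos n
      have h7 := S.hc z
      have h8 : 0 ≤ (1 - lam n) * (g n z / ∫ y, g n y) := mul_nonneg (by linarith) h1
      have h9 : 0 ≤ c * f z := mul_nonneg S.c0.le (S.f0 z)
      nlinarith) hmpos (ε := 1/2) (by norm_num) (by norm_num)
  obtain ⟨p, hp, hpe⟩ := S.ste.coupled (s := s) (m := fun n => ∫ x, g n x) (n2 := n2) (hn1.trans hn2) hη0 hη1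
    (β := (1-1/2)^3) (by norm_num) hspos (fun n hn => hmpos n (hn2.trans hn)) hsrec
    (fun n hn => P.mmono S (hn1.trans (hn2.trans hn)))
  -- lower bound on g
  set C1 : ℝ := (∫ x, g n1 x) * (2 * lam n1) / pw γ N n1 with hC1
  have hC1pos : 0 < C1 := by
    have := S.lampos n1
    have := pw_pos S.ste n1
    positivity
  have hglow : ∀ n, n1 ≤ n → ∀ z, -(C1 * pw γ N n * q0 z) ≤ g n z := by
    intro n hn z
    refine le_trans ?_ (P.gmono' S hn1 hn z)
    have h3 := P.qnn n1 hn1 z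
    rw [P.qeq n1 hn1 z] at h3
    have h5 := S.lamhalf n1 hn1
    have h6 := S.lampos n1
    have h7 := pw_pos S.ste n
    have h8 := pw_pos S.ste n1
    have h9 := S.q00 z
    rw [hC1]
    set M := ∫ x, g n1 x
    have h10 : -(M * (2 * lam n1) * q0 z) ≤ g n1 z := by
      have : 0 ≤ g n1 z / M + 2 * lam n1 * q0 z := by
        by_contra hcon
        push Not at hcon
        have hq : 0 ≤ lam n1 * q0 z := by positivity
        have : g n1 z / M < 0 := by nlinarith
        nlinarith
      have h11 := mul_le_mul_of_nonneg_left this hm1.le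
      rw [mul_add, mul_div_cancel₀ _ hm1.ne', mul_zero] at h11
      nlinarith
    calc -(M * (2 * lam n1) / pw γ N n1 * pw γ N n * q0 z)
        = pw γ N n / pw γ N n1 * (-(M * (2 * lam n1) * q0 z)) := by ring
      _ ≤ _ := by gcongr
  set c1 : ℝ := (1/2) * F * ∫ y, hat x1 r y with hc1
  have hc1pos : 0 < c1 := by
    have := hat_integral_pos x1 hr
    positivity
  have hml : ∀ n, n2 ≤ n → c1 * s n - C1 * pw γ N n ≤ ∫ x, g n x := by
    intro n hn
    have hnN := hn1.trans (hn2.trans hn)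
    have h1 : (∫ z, (1 - 1/2) * (s n * F * hat x1 r z)) ≤ ∫ z, (g n z + C1 * pw γ N n * q0 z) := by
      apply integral_mono
      · exact ((hat_integrable x1 hr).const_mul _).const_mul _
      · exact (P.gInt n hnN).add (S.q0Int.const_mul _)
      intro z
      show (1 - 1/2) * (s n * F * hat x1 r z) ≤ g n z + C1 * pw γ N n * q0 z
      by_cases hz : z ∈ closedBall x1 r
      · have h2 := hgs n hn x1 rfl z hz
        have h3 : 0 ≤ C1 * pw γ N n * q0 z := by
          have := pw_pos S.ste n
          have := S.q00 z
          positivity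
        linarith
      · rw [hat_eq_zero hr hz]
        have := hglow n (hn2.trans hn) z
        linarith
    rw [integral_const_mul, integral_const_mul, integral_add (P.gInt n hnN) (S.q0Int.const_mul _),
      integral_const_mul, S.q0int] at h1
    rw [hc1]
    linarith
  set A := (2/c1) ^ η with hA
  have hApos : 0 < A := by positivity
  set mu := p / (2 * A) with hmu
  have hmupos : 0 < mu := by positivity
  have hmlow : ∀ᶠ n in atTop, mu ≤ ∫ x, g n x := by
    have h1 : Tendsto (fun n => C1 * pw γ N n) atTop (𝓝 0) := by
      simpa using (pw_tendsto S.ste).const_mul C1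
    filter_upwards [hpe, h1.eventually (ge_mem_nhds hmupos), eventually_ge_atTop n2] with n hpn hCn hn
    by_contra hcon
    push Not at hcon
    have h2 := hml n hn
    have h3 := hspos n hn
    have h4 := hmpos n (hn2.trans hn)
    have h5 : s n ≤ 2/c1 * mu := by
      rw [div_mul_eq_mul_div, le_div_iff₀ hc1pos]; linarith
    have h6 : s n ^ η * (∫ x, g n x) ^ (1-η) ≤ (2/c1 * mu) ^ η * mu ^ (1-η) := by
      gcongr
    have h7 : (2/c1 * mu) ^ η * mu ^ (1-η) = p/2 := by
      rw [Real.mul_rpow (by positivity) hmupos.le, ← hA, mul_assoc, ← Real.rpow_add hmupos]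
      simp only [add_sub_cancel, Real.rpow_one]
      rw [hmu]; field_simp
    linarith
  have hfin : ∀ᶠ n in atTop, ∀ z, c * lam n * f z ≤ q n z := by
    filter_upwards [hmlow, S.pw_le_lam (show 0 < mu / (2 * C1) by positivity), eventually_ge_atTop n1] with n hm hpl hn z
    rw [P.qeq n (hn1.trans hn) z]
    have h1 := hglow n hn z
    have h2 := S.hc z
    have h3 := S.lamhalf n (hn1.trans hn)
    have h4 := S.lampos n
    have h5 := S.q00 z
    have h6 := pw_pos S.ste n
    have hM := hmpos n hn
    set M := ∫ x, g n x
    have h7 : C1 * pw γ N n ≤ mu * (lam n / 2) := by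
      calc C1 * pw γ N n ≤ C1 * (mu / (2 * C1) * lam n) := by gcongr
        _ = _ := by field_simp
    have h8 : -(lam n / 2 * q0 z) ≤ g n z / M := by
      rw [le_div_iff₀ hM]
      refine le_trans ?_ h1
      have : C1 * pw γ N n * q0 z ≤ M * (lam n / 2) * q0 z := by
        apply mul_le_mul_of_nonneg_right _ h5
        exact h7.trans (by gcongr)
      linarith
    have h9 : -(lam n / 2 * q0 z) ≤ (1 - lam n) * (g n z / M) := by
      have h10 : 0 ≤ lam n / 2 * q0 z := by positivity
      have := mul_le_mul_of_nonneg_left h8 (by linarith : 0 ≤ 1 - lam n)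
      nlinarith
    nlinarith
  obtain ⟨n3, hn3⟩ := eventually_atTop.1 hfin
  exact ⟨max n1 n3, hn1.trans (le_max_left _ _), fun n hn => hmpos n ((le_max_left _ _).trans hn),
    fun n hn => hn3 n ((le_max_right _ _).trans hn)⟩

lemma Path.V_le (S : St η f q0 K γ b lam c Cf CK L N) (P : Path η f q0 K γ b lam c N g q X) {k : ℕ} (hk : N ≤ k)
    {T : ℝ} (hT : 0 ≤ T) :
    (∫ y, zet η f (q k) T y * q k y) ≤ 1 := by
  have h1 : (∫ y, zet η f (q k) T y * q k y) ≤ ∫ y, (η * f y + (1 - η) * q k y) := by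
    apply integral_mono_of_nonneg
    · exact Eventually.of_forall fun y => mul_nonneg (zet_nonneg S.f0 (P.qnn k hk) hT y) (P.qnn k hk y)
    · exact (S.fInt.const_mul _).add ((P.qInt S hk).const_mul _)
    · exact Eventually.of_forall fun y => zet_mul_le S.η0 S.η1 S.f0 (P.qnn k hk) y
  rw [integral_add (S.fInt.const_mul _) ((P.qInt S hk).const_mul _), integral_const_mul, integral_const_mul,
    S.fint, P.qint S hk] at h1
  linarith

/-- Step III -/
lemma Path.step3 (S : St η f q0 K γ b lam c Cf CK L N) (P : Path η f q0 K γ b lam c N g q X)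
    {n1 : ℕ} (hn1 : N ≤ n1) (hq : ∀ n, n1 ≤ n → ∀ z, c * lam n * f z ≤ q n z) {δ : ℝ} (hδ : 0 < δ) :
    ∀ᶠ n in atTop, (∫ x, g n x) ≤ 1 + δ := by
  set W : ℕ → ℝ := fun k => zet η f (q k) ((c * lam (k+1)) ^ (-η)) (X (k+1)) with hW
  set U : ℕ → ℝ := fun k => (f (X (k+1)) / q k (X (k+1))) ^ η with hU
  have hUW : ∀ k, n1 ≤ k → U k = W k := by
    intro k hk
    simp only [hU, hW, zet]
    symm
    apply min_eq_left
    have hqk := hq k hk (X (k+1))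
    have hc0 := S.c0
    have hlk := S.lampos k
    have hlk1 := S.lampos (k+1)
    rcases (S.f0 (X (k+1))).eq_or_lt with h | h
    · rw [← h, zero_div, Real.zero_rpow S.η0.ne']; exact (S.T_pos k).le
    · have hqz : 0 < q k (X (k+1)) := lt_of_lt_of_le (by positivity) hqk
      rw [Real.rpow_neg (by positivity), ← Real.inv_rpow (by positivity)]
      apply Real.rpow_le_rpow (by positivity) _ S.η0.le
      rw [div_le_iff₀ hqz, inv_mul_eq_div, le_div_iff₀ (by positivity)]
      refine le_trans ?_ hqk
      rw [mul_comm]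
      gcongr
      exact S.lamanti (by omega)
  have hdiff : ∀ n, n1 ≤ n → avg γ N U n - avg γ N W n
      = pw γ N n / pw γ N n1 * (avg γ N U n1 - avg γ N W n1) := by
    intro n hn
    induction n, hn using Nat.le_induction with
    | base => rw [div_self (pw_pos S.ste n1).ne', one_mul]
    | succ n hn ih =>
      rw [avg_succ S.ste _ (hn1.trans hn), avg_succ S.ste _ (hn1.trans hn), hUW n hn, pw_succ (hn1.trans hn)]
      calc _ = (1 - γ (n+1)) * (avg γ N U n - avg γ N W n) := by ring
        _ = _ := by rw [ih]; ring
  set C : ℝ := (∫ x, g N x) + (avg γ N U n1 - avg γ N W n1) / pw γ N n1 with hC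
  have hlim : Tendsto (fun n => C * pw γ N n) atTop (𝓝 0) := by
    simpa using (pw_tendsto S.ste).const_mul C
  filter_upwards [P.CU (δ/4) (by positivity), hlim.eventually (ge_mem_nhds (show 0 < δ/4 by positivity)),
    eventually_ge_atTop n1] with n hCU hCn hn
  have hm := avg_formula S.ste (u := fun n => ∫ x, g n x) (v := U) (fun n hn => P.mrec S hn) (hn1.trans hn)
  have h1 := hdiff n hn
  have h2 : avg γ N (fun k => ∫ y, zet η f (q k) ((c * lam (k+1)) ^ (-η)) y * q k y) n ≤ 1 := by
    refine (avg_mono S.ste (v := fun _ => (1:ℝ)) (fun k hk => P.V_le S hk (S.T_pos k).le) n).trans ?_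
    rw [avg_const S.ste _ (hn1.trans hn)]
    have := pw_pos S.ste n
    linarith
  have h3 : (∫ x, g n x) = C * pw γ N n + avg γ N W n := by
    rw [hm, hC, add_mul, div_mul_eq_mul_div]
    have : avg γ N U n = avg γ N W n + pw γ N n / pw γ N n1 * (avg γ N U n1 - avg γ N W n1) := by linarith
    rw [this]; ring
  have h4 : avg γ N W n ≤ (1 + δ/4) * avg γ N (fun k => ∫ y, zet η f (q k) ((c * lam (k+1)) ^ (-η)) y * q k y) n + δ/4 := hCU
  have h5 := mul_le_mul_of_nonneg_left h2 (by linarith : 0 ≤ 1 + δ/4)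
  rw [h3]
  linarith

theorem Path.main (S : St η f q0 K γ b lam c Cf CK L N) (P : Path η f q0 K γ b lam c N g q X)
    {A : Set (E d)} (hA : IsCompact A) {ε : ℝ} (hε : 0 < ε) :
    ∀ᶠ n in atTop, ∀ x ∈ A, f x - 3 * ε ≤ g n x := by
  have hη0 := S.η0
  have hη1 := S.η1
  obtain ⟨n1, hn1, hmpos, hq⟩ := P.step12 S
  obtain ⟨R, hR⟩ := hA.isBounded.exists_norm_le
  obtain ⟨r, hr, hunif⟩ : ∃ r > 0, ∀ x ∈ A, ∀ z ∈ closedBall x (2*r), f x - ε ≤ f z := by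
    have h1 := hA.uniformContinuousAt_of_continuousAt f (fun a _ => S.fcont.continuousAt)
      (Metric.dist_mem_uniformity hε)
    obtain ⟨r, hr, h2⟩ := Metric.mem_uniformity_dist.1 h1
    refine ⟨r/4, by positivity, fun x hx z hz => ?_⟩
    rw [mem_closedBall, dist_comm] at hz
    have h3 := h2 (lt_of_le_of_lt hz (by linarith)) hx
    have h4 : dist (f x) (f z) < ε := h3
    rw [Real.dist_eq, abs_lt] at h4
    linarith
  have hCf : 0 < Cf := by
    obtain ⟨x, hx⟩ := S.exists_fpos
    exact hx.trans_le (S.fle x)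
  -- choose s0
  obtain ⟨s0, hs0, hs01, hs0C⟩ : ∃ s0 : ℝ, 0 < s0 ∧ s0 < 1 ∧ (1 - s0) * Cf ≤ ε/2 := by
    set t := min (1/2) (ε/(2*Cf)) with ht
    have ht0 : 0 < t := by positivity
    have ht1 : t ≤ 1/2 := min_le_left _ _
    refine ⟨1 - t, by linarith, by linarith, ?_⟩
    calc (1 - (1 - t)) * Cf = t * Cf := by ring
      _ ≤ ε/(2*Cf) * Cf := by gcongr; exact min_le_right _ _
      _ = ε/2 := by field_simp
  have hs0η : s0 ^ η < 1 := Real.rpow_lt_one hs0.le hs01 hη0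
  obtain ⟨e, he0, he1, heB, heC⟩ : ∃ e : ℝ, 0 < e ∧ e < 1 ∧ s0 ^ η < (1-e)^3 / (1+e) ∧ e * Cf ≤ ε/2 := by
    have hcont : Tendsto (fun e : ℝ => (1-e)^3 / (1+e)) (𝓝[>] 0) (𝓝 1) := by
      have : ContinuousAt (fun e : ℝ => (1-e)^3 / (1+e)) 0 := by
        apply ContinuousAt.div (by fun_prop) (by fun_prop) (by norm_num)
      have h2 := this.tendsto
      simp only [sub_zero, one_pow, add_zero, div_one] at h2
      exact h2.mono_left nhdsWithin_le_nhds
    have h3 : ∀ᶠ e : ℝ in 𝓝[>] 0, e < min 1 (ε/(2*Cf)) :=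
      nhdsWithin_le_nhds (gt_mem_nhds (by positivity))
    obtain ⟨e, h4, h5, h6⟩ := ((hcont.eventually (lt_mem_nhds hs0η)).and (h3.and self_mem_nhdsWithin)).exists
    refine ⟨e, h6, h5.trans_le (min_le_left _ _), h4, ?_⟩
    calc e * Cf ≤ ε/(2*Cf) * Cf := by gcongr; exact (h5.trans_le (min_le_right _ _)).le
      _ = ε/2 := by field_simp
  obtain ⟨n2, hn2, s, hspos, hsrec, hgs⟩ := P.G2 S (Pt := {x | x ∈ A ∧ 2 * ε ≤ f x}) (F := fun x => f x - ε) (F0 := ε)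
    (r := r) (R := R) hε (by intro x hx; have := hx.2; show ε ≤ f x - ε; linarith) hr (fun x hx => hR x hx.1) hn1
    (fun x hx z hz => ⟨hunif x hx.1 z hz, fun n hn => hq n hn z⟩) hmpos he0 he1
  obtain ⟨n3, hn3⟩ := eventually_atTop.1 (P.step3 S hn1 hq he0)
  have hgrow := S.ste.rec_grow (s := s) (n2 := max n2 n3) (hn1.trans (hn2.trans (le_max_left _ _))) hη0 hη1
    (fun n hn => hspos n ((le_max_left _ _).trans hn)) (B := (1-e)^3 / (1+e)) (by
      intro n hn
      have hn2' := (le_max_left _ _).trans hn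
      have hm := hn3 n ((le_max_right _ _).trans hn)
      have hmp := hmpos n (hn2.trans hn2')
      refine le_trans ?_ (hsrec n hn2')
      have hs := hspos n hn2'
      have hgp := S.ste.pos (n+1)
      set m := ∫ x, g n x
      have h1e : 0 < 1 - e := by linarith
      have h1 : s n ^ (1-η) / (1+e) ≤ (s n / m) ^ (1-η) := by
        rw [Real.div_rpow hs.le hmp.le]
        have h2 : m ^ (1-η) ≤ 1 + e := by
          calc m ^ (1-η) ≤ (1+e) ^ (1-η) := Real.rpow_le_rpow hmp.le hm (by linarith)
            _ ≤ (1+e) ^ (1:ℝ) := Real.rpow_le_rpow_of_exponent_le (by linarith) (by linarith)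
            _ = _ := Real.rpow_one _
        gcongr
      have h3 : (1-e)^3 / (1+e) * s n ^ (1-η) ≤ (1-e)^3 * (s n / m) ^ (1-η) := by
        calc (1-e)^3 / (1+e) * s n ^ (1-η) = (1-e)^3 * (s n ^ (1-η) / (1+e)) := by ring
          _ ≤ _ := by gcongr
      gcongr) hs0 heB
  obtain ⟨C, hC, hgC⟩ := P.gbd
  have hlim : Tendsto (fun n => C * pw γ N n) atTop (𝓝 0) := by
    simpa using (pw_tendsto S.ste).const_mul C
  filter_upwards [hgrow, eventually_ge_atTop n2, hlim.eventually (ge_mem_nhds hε)] with n hsn hn hCn x hx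
  rcases le_or_gt (2 * ε) (f x) with h | h
  · have h1 := hgs n hn x ⟨hx, h⟩ x (mem_closedBall_self hr.le)
    rw [hat_self, mul_one] at h1
    have h2 : s0 * (f x - ε) ≤ s n * (f x - ε) := mul_le_mul_of_nonneg_right hsn (by linarith)
    have h3 : (1-e) * (s0 * (f x - ε)) ≤ g n x :=
      (mul_le_mul_of_nonneg_left h2 (by linarith)).trans h1
    have h4 := S.fle x
    have h5 : (1 - s0) * (f x - ε) ≤ ε/2 := by
      refine le_trans ?_ hs0C
      apply mul_le_mul_of_nonneg_left _ (by linarith); linarith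
    have h6 : e * (s0 * (f x - ε)) ≤ ε/2 := by
      refine le_trans ?_ heC
      apply mul_le_mul_of_nonneg_left _ he0.le
      nlinarith
    linarith
  · have h1 := P.gmono' S le_rfl (hn1.trans (hn2.trans hn)) x
    rw [pw_self, div_one] at h1
    have h2 := mul_le_mul_of_nonneg_left (hgC x) (pw_pos S.ste n).le
    linarith

end
end Midas

open MeasureTheory Filter Metric
open scoped Topology ENNReal NNReal

namespace Midas

lemma onestep_gen {d : ℕ} {Ω Ω₁ : Type*} [MeasurableSpace Ω] [MeasurableSpace Ω₁] (μ : Measure Ω)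
    [IsProbabilityMeasure μ] {π : Ω → Ω₁} (hπ : Measurable π) {Y : Ω → E d} (hY : Measurable Y)
    {p : Ω₁ → E d → ℝ} (hp : Measurable (Function.uncurry p))
    (h : ∀ s : Set Ω₁, MeasurableSet s → ∀ φ : BoundedContinuousFunction (E d) ℝ≥0,
      ∫⁻ ω in π ⁻¹' s, φ (Y ω) ∂μ = ∫⁻ ω in π ⁻¹' s, (∫⁻ y, φ y * ENNReal.ofReal (p (π ω) y)) ∂μ)
    {Φ : Ω₁ × E d → ℝ≥0∞} (hΦ : Measurable Φ) :
    ∫⁻ ω, Φ (π ω, Y ω) ∂μ = ∫⁻ ω, (∫⁻ y, Φ (π ω, y) * ENNReal.ofReal (p (π ω) y)) ∂μ := by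
  set ν := μ.map π with hν
  have : IsProbabilityMeasure ν := Measure.isProbabilityMeasure_map hπ.aemeasurable
  have hpm : Measurable (fun z : Ω₁ × E d => ENNReal.ofReal (p z.1 z.2)) :=
    ENNReal.measurable_ofReal.comp hp
  have hJ : μ.map (fun ω => (π ω, Y ω)) =
      (ν.prod volume).withDensity (fun z => ENNReal.ofReal (p z.1 z.2)) := by
    have : IsProbabilityMeasure (μ.map (fun ω => (π ω, Y ω))) :=
      Measure.isProbabilityMeasure_map (hπ.prodMk hY).aemeasurable
    refine Measure.ext_prod ?_
    intro s t hs ht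
    have e1 : (μ.restrict (π ⁻¹' s)).map Y =
        (((ν.prod volume).withDensity (fun z => ENNReal.ofReal (p z.1 z.2))).restrict
          (s ×ˢ Set.univ)).map Prod.snd := by
      have : IsFiniteMeasure ((μ.restrict (π ⁻¹' s)).map Y) := by infer_instance
      refine ext_of_forall_lintegral_eq_of_IsFiniteMeasure fun φ => ?_
      have hφ : Measurable (fun y => (φ y : ℝ≥0∞)) :=
        measurable_coe_nnreal_ennreal.comp φ.continuous.measurable
      have hφ2 : Measurable (fun z : Ω₁ × E d => (φ z.2 : ℝ≥0∞)) := hφ.comp measurable_snd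
      rw [lintegral_map hφ hY, h s hs φ, lintegral_map hφ measurable_snd,
        restrict_withDensity (hs.prod MeasurableSet.univ),
        lintegral_withDensity_eq_lintegral_mul _ hpm hφ2,
        ← Measure.prod_restrict, Measure.restrict_univ,
        lintegral_prod _ (hpm.mul hφ2).aemeasurable]
      have e2 : Measurable fun a => ∫⁻ y, ENNReal.ofReal (p a y) * φ y :=
        Measurable.lintegral_prod_right' (hpm.mul hφ2)
      simp only [Pi.mul_apply]
      rw [hν, setLIntegral_map hs e2 hπ]
      simp only [mul_comm]
    have e3 := congrArg (fun m => m t) e1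
    rw [Measure.map_apply hY ht, Measure.restrict_apply (hY ht), Measure.map_apply measurable_snd ht,
      Measure.restrict_apply (measurable_snd ht)] at e3
    rw [Measure.map_apply (hπ.prodMk hY) (hs.prod ht)]
    convert e3 using 2
    · ext ω; simp [and_comm]
    · ext ω; simp [and_comm]
  calc ∫⁻ ω, Φ (π ω, Y ω) ∂μ = ∫⁻ z, Φ z ∂(μ.map (fun ω => (π ω, Y ω))) := by
        rw [lintegral_map hΦ (hπ.prodMk hY)]
    _ = _ := by
        rw [hJ, lintegral_withDensity_eq_lintegral_mul _ hpm hΦ,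
          lintegral_prod _ (hpm.mul hΦ).aemeasurable]
        have e2 : Measurable fun a => ∫⁻ y, ENNReal.ofReal (p a y) * Φ (a, y) :=
          Measurable.lintegral_prod_right' (hpm.mul hΦ)
        simp only [Pi.mul_apply]
        rw [hν, lintegral_map e2 hπ]
        simp only [mul_comm]

/-- abstract adaptive sampling scheme -/
structure Samp {d : ℕ} {Ω : Type*} [mΩ : MeasurableSpace Ω] (μ : Measure Ω) (F : ℕ → MeasurableSpace Ω)
    (X : ℕ → Ω → E d) (q : ℕ → Ω → E d → ℝ) (N : ℕ) : Prop where
  le : ∀ n, F n ≤ mΩ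
  mono : Monotone F
  Xm : ∀ n, Measurable[F (n+1)] (X (n+1))
  qm : ∀ n, N ≤ n → Measurable[(F n).prod inferInstance] (Function.uncurry (q n))
  qnn : ∀ n ω y, 0 ≤ q n ω y
  qint : ∀ n, N ≤ n → ∀ᵐ ω ∂μ, (∫ y, q n ω y) = 1
  step : ∀ n, N ≤ n → ∀ Φ : Ω × E d → ℝ≥0∞, Measurable[(F n).prod inferInstance] Φ →
    ∫⁻ ω, Φ (ω, X (n+1) ω) ∂μ = ∫⁻ ω, (∫⁻ y, Φ (ω, y) * ENNReal.ofReal (q n ω y)) ∂μ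

lemma meas_int {d : ℕ} {Ω : Type*} {m : MeasurableSpace Ω} {v q : Ω → E d → ℝ}
    (hv : Measurable[m.prod inferInstance] (Function.uncurry v))
    (hq : Measurable[m.prod inferInstance] (Function.uncurry q)) :
    Measurable[m] fun ω => ∫ y, v ω y * q ω y := by
  have h : Measurable (fun z : Ω × E d => v z.1 z.2 * q z.1 z.2) := hv.mul hq
  exact (h.stronglyMeasurable.integral_prod_right').measurable

lemma meas_comp {d : ℕ} {Ω : Type*} {m m' : MeasurableSpace Ω} (hm : m ≤ m') {v : Ω → E d → ℝ}
    (hv : Measurable[m.prod inferInstance] (Function.uncurry v)) {Y : Ω → E d} (hY : Measurable[m'] Y) :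
    Measurable[m'] fun ω => v ω (Y ω) := by
  have h1 : @Measurable Ω (Ω × E d) m' (m.prod inferInstance) (fun ω => (ω, Y ω)) := by
    exact Measurable.prodMk (measurable_id'' hm) hY
  exact hv.comp h1

lemma Samp.meas_sum {d : ℕ} {Ω : Type*} [mΩ : MeasurableSpace Ω] {μ : Measure Ω}
    {F : ℕ → MeasurableSpace Ω} {X : ℕ → Ω → E d} {q : ℕ → Ω → E d → ℝ} {N : ℕ}
    (H : Samp μ F X q N) {v : ℕ → Ω → E d → ℝ}
    (hv : ∀ k, N ≤ k → Measurable[(F k).prod inferInstance] (Function.uncurry (v k))) (σ κ : ℝ) (n : ℕ) :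
    Measurable[F n] fun ω => ∑ k ∈ Finset.Ico N n,
      (σ * v k ω (X (k+1) ω) - κ * ∫ y, v k ω y * q k ω y) := by
  refine Finset.measurable_fun_sum _ fun k hk => ?_
  rw [Finset.mem_Ico] at hk
  have h1 : Measurable[F n] fun ω => v k ω (X (k+1) ω) :=
    meas_comp (H.mono hk.2.le) (hv k hk.1) ((H.Xm k).mono (H.mono hk.2) le_rfl)
  have h2 : Measurable[F n] fun ω => ∫ y, v k ω y * q k ω y :=
    (meas_int (hv k hk.1) (H.qm k hk.1)).mono (H.mono hk.2.le) le_rfl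
  exact (h1.const_mul σ).sub (h2.const_mul κ)

lemma Samp.qInt {d : ℕ} {Ω : Type*} [mΩ : MeasurableSpace Ω] {μ : Measure Ω}
    {F : ℕ → MeasurableSpace Ω} {X : ℕ → Ω → E d} {q : ℕ → Ω → E d → ℝ} {N : ℕ}
    (H : Samp μ F X q N) {n : ℕ} (hn : N ≤ n) : ∀ᵐ ω ∂μ, Integrable (q n ω) := by
  filter_upwards [H.qint n hn] with ω hω
  by_contra h
  rw [integral_undef h] at hω
  norm_num at hω

lemma Samp.mgf {d : ℕ} {Ω : Type*} [mΩ : MeasurableSpace Ω] {μ : Measure Ω} [IsProbabilityMeasure μ]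
    {F : ℕ → MeasurableSpace Ω} {X : ℕ → Ω → E d} {q : ℕ → Ω → E d → ℝ} {N : ℕ}
    (H : Samp μ F X q N) {v : ℕ → Ω → E d → ℝ}
    (hv : ∀ k, N ≤ k → Measurable[(F k).prod inferInstance] (Function.uncurry (v k)))
    {ε σ κ : ℝ} (hκ : ∀ u, 0 ≤ u → u ≤ ε → Real.exp (σ * u) ≤ 1 + κ * u) {n : ℕ} (hn : N ≤ n)
    (hv0 : ∀ k, N ≤ k → k < n → ∀ ω y, 0 ≤ v k ω y ∧ v k ω y ≤ ε) :
    ∫⁻ ω, ENNReal.ofReal (Real.exp (∑ k ∈ Finset.Ico N n,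
      (σ * v k ω (X (k+1) ω) - κ * ∫ y, v k ω y * q k ω y))) ∂μ ≤ 1 := by
  induction n, hn using Nat.le_induction with
  | base => simp
  | succ n hn ih =>
    refine le_trans ?_ (ih fun k hk hkn => hv0 k hk (by omega))
    set S : Ω → ℝ := fun ω => ∑ k ∈ Finset.Ico N n,
      (σ * v k ω (X (k+1) ω) - κ * ∫ y, v k ω y * q k ω y) with hS
    set e : Ω → ℝ := fun ω => ∫ y, v n ω y * q n ω y with he
    have hSm : Measurable[F n] S := H.meas_sum hv σ κ n
    have hem : Measurable[F n] e := meas_int (hv n hn) (H.qm n hn)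
    have hΦ : Measurable[(F n).prod inferInstance] (fun z : Ω × E d =>
        ENNReal.ofReal (Real.exp (S z.1 + (σ * v n z.1 z.2 - κ * e z.1)))) := by
      have a1 : Measurable[(F n).prod inferInstance] (fun z : Ω × E d => S z.1) :=
        hSm.comp measurable_fst
      have a2 : Measurable[(F n).prod inferInstance] (fun z : Ω × E d => e z.1) :=
        hem.comp measurable_fst
      have a3 : Measurable[(F n).prod inferInstance] (fun z : Ω × E d => v n z.1 z.2) := hv n hn
      exact ENNReal.measurable_ofReal.comp (Real.measurable_exp.comp
        (a1.add ((a3.const_mul σ).sub (a2.const_mul κ))))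
    have h1 := H.step n hn _ hΦ
    simp only at h1
    have h0 : ∀ ω, ∑ k ∈ Finset.Ico N (n+1),
      (σ * v k ω (X (k+1) ω) - κ * ∫ y, v k ω y * q k ω y) =
        S ω + (σ * v n ω (X (n+1) ω) - κ * e ω) := fun ω => by
      rw [Finset.sum_Ico_succ_top hn]
    simp only [h0]
    rw [h1]
    refine lintegral_mono_ae ?_
    filter_upwards [H.qInt hn, H.qint n hn] with ω hqI hq1
    have hvm : Measurable (v n ω) := by
      have := (hv n hn).comp (@measurable_prodMk_left Ω (E d) (F n) _ ω)
      exact this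
    have hb := hv0 n hn (by omega) ω
    have hvq : Integrable (fun y => v n ω y * q n ω y) := by
      refine hqI.bdd_mul (c := ε) hvm.aestronglyMeasurable (Eventually.of_forall fun y => ?_)
      rw [Real.norm_eq_abs, abs_of_nonneg (hb y).1]; exact (hb y).2
    have hle : ∀ y, ENNReal.ofReal (Real.exp (S ω + (σ * v n ω y - κ * e ω))) *
        ENNReal.ofReal (q n ω y) ≤ ENNReal.ofReal (Real.exp (S ω - κ * e ω) *
          (q n ω y + κ * (v n ω y * q n ω y))) := by
      intro y
      rw [← ENNReal.ofReal_mul (Real.exp_pos _).le]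
      apply ENNReal.ofReal_le_ofReal
      have : S ω + (σ * v n ω y - κ * e ω) = (S ω - κ * e ω) + σ * v n ω y := by ring
      rw [this, Real.exp_add, mul_assoc]
      apply mul_le_mul_of_nonneg_left _ (Real.exp_pos _).le
      have := mul_le_mul_of_nonneg_right (hκ _ (hb y).1 (hb y).2) (H.qnn n ω y)
      linarith
    refine (lintegral_mono hle).trans ?_
    have hnn : ∀ y, 0 ≤ Real.exp (S ω - κ * e ω) * (q n ω y + κ * (v n ω y * q n ω y)) := by
      intro y
      apply mul_nonneg (Real.exp_pos _).le
      have := mul_nonneg ((Real.exp_pos _).le.trans (hκ _ (hb y).1 (hb y).2)) (H.qnn n ω y)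
      linarith
    have hI : Integrable fun y => Real.exp (S ω - κ * e ω) * (q n ω y + κ * (v n ω y * q n ω y)) :=
      (hqI.add (hvq.const_mul κ)).const_mul _
    rw [← ofReal_integral_eq_lintegral_ofReal hI
      (Eventually.of_forall hnn)]
    apply ENNReal.ofReal_le_ofReal
    rw [integral_const_mul]
    have : (∫ y, (q n ω y + κ * (v n ω y * q n ω y))) = 1 + κ * e ω := by
      rw [integral_add hqI (hvq.const_mul κ), hq1, integral_const_mul]
    rw [this]
    calc Real.exp (S ω - κ * e ω) * (1 + κ * e ω) ≤ Real.exp (S ω - κ * e ω) * Real.exp (κ * e ω) := by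
          gcongr
          linarith [Real.add_one_le_exp (κ * e ω)]
      _ = _ := by rw [← Real.exp_add]; congr 1; ring

lemma Samp.tail {d : ℕ} {Ω : Type*} [mΩ : MeasurableSpace Ω] {μ : Measure Ω} [IsProbabilityMeasure μ]
    {F : ℕ → MeasurableSpace Ω} {X : ℕ → Ω → E d} {q : ℕ → Ω → E d → ℝ} {N : ℕ}
    (H : Samp μ F X q N) {v : ℕ → Ω → E d → ℝ}
    (hv : ∀ k, N ≤ k → Measurable[(F k).prod inferInstance] (Function.uncurry (v k)))
    {ε σ κ : ℝ} (hκ : ∀ u, 0 ≤ u → u ≤ ε → Real.exp (σ * u) ≤ 1 + κ * u) {n : ℕ} (hn : N ≤ n)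
    (hv0 : ∀ k, N ≤ k → k < n → ∀ ω y, 0 ≤ v k ω y ∧ v k ω y ≤ ε) (a : ℝ) :
    μ {ω | a ≤ ∑ k ∈ Finset.Ico N n,
      (σ * v k ω (X (k+1) ω) - κ * ∫ y, v k ω y * q k ω y)} ≤ ENNReal.ofReal (Real.exp (-a)) := by
  have h1 := H.mgf hv hκ hn hv0
  have hm : Measurable fun ω => ENNReal.ofReal (Real.exp (∑ k ∈ Finset.Ico N n,
      (σ * v k ω (X (k+1) ω) - κ * ∫ y, v k ω y * q k ω y))) :=
    ENNReal.measurable_ofReal.comp (Real.measurable_exp.comp ((H.meas_sum hv σ κ n).mono (H.le n) le_rfl))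
  have h2 := meas_ge_le_lintegral_div (μ := μ) hm.aemeasurable (ε := ENNReal.ofReal (Real.exp a))
    (by simp [Real.exp_pos]) ENNReal.ofReal_ne_top
  refine le_trans (measure_mono ?_) (h2.trans ?_)
  · intro ω hω
    exact ENNReal.ofReal_le_ofReal (Real.exp_le_exp.2 hω)
  · refine (ENNReal.div_le_div_right h1 _).trans ?_
    rw [Real.exp_neg, ENNReal.ofReal_inv_of_pos (Real.exp_pos _), one_div]

end Midas

open MeasureTheory Filter Metric
open scoped Topology ENNReal NNReal

namespace Midas

lemma exp_up {ε u : ℝ} (hε1 : ε ≤ 1) (hu : 0 ≤ u) (hue : u ≤ ε) : Real.exp (1 * u) ≤ 1 + (1 + ε) * u := by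
  have h := Real.abs_exp_sub_one_sub_id_le (x := u) (by rw [abs_of_nonneg hu]; linarith)
  have := (abs_le.1 h).2
  rw [one_mul]
  nlinarith

lemma exp_lo {ε u : ℝ} (hε1 : ε ≤ 1) (hu : 0 ≤ u) (hue : u ≤ ε) :
    Real.exp (-1 * u) ≤ 1 + (-(1 - ε)) * u := by
  have h := Real.abs_exp_sub_one_sub_id_le (x := -u) (by rw [abs_neg, abs_of_nonneg hu]; linarith)
  have := (abs_le.1 h).2
  rw [neg_one_mul]
  nlinarith

lemma bc {Ω : Type*} [MeasurableSpace Ω] {μ : Measure Ω} {s : ℕ → Set Ω} {C : ℝ}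
    (h : ∀ᶠ n : ℕ in atTop, μ (s n) ≤ ENNReal.ofReal (C * (1 / (n:ℝ)^2))) :
    ∀ᵐ ω ∂μ, ∀ᶠ n in atTop, ω ∉ s n := by
  obtain ⟨n0, h0⟩ := eventually_atTop.1 h
  have h1 : ∀ᵐ ω ∂μ, ∀ᶠ n in atTop, ω ∉ (fun n => if n0 ≤ n then s n else ∅) n := by
    apply ae_eventually_notMem
    have hs : Summable fun n : ℕ => C * (1 / (n:ℝ)^2) :=
      (Real.summable_one_div_nat_pow.2 (by norm_num)).mul_left C
    refine ne_top_of_le_ne_top hs.tsum_ofReal_ne_top (ENNReal.tsum_le_tsum fun n => ?_)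
    split_ifs with hn
    · exact h0 n hn
    · simp
  filter_upwards [h1] with ω hω
  filter_upwards [hω, eventually_ge_atTop n0] with n hn hn0
  simpa [hn0] using hn

lemma Samp.conc {d : ℕ} {Ω : Type*} [mΩ : MeasurableSpace Ω] {μ : Measure Ω} [IsProbabilityMeasure μ]
    {F : ℕ → MeasurableSpace Ω} {X : ℕ → Ω → E d} {q : ℕ → Ω → E d → ℝ} {N : ℕ}
    (H : Samp μ F X q N) {γ : ℕ → ℝ} (S : Ste γ N) {v : ℕ → Ω → E d → ℝ}
    (hv : ∀ k, N ≤ k → Measurable[(F k).prod inferInstance] (Function.uncurry (v k)))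
    {ε σ κ B : ℝ} (hε : 0 < ε) (hB : 0 < B)
    (hκ : ∀ u, 0 ≤ u → u ≤ ε → Real.exp (σ * u) ≤ 1 + κ * u) {n : ℕ} (hn : N ≤ n)
    (hv0 : ∀ k, N ≤ k → k < n → ∀ ω y, 0 ≤ v k ω y ∧ v k ω y ≤ B) {s a : ℝ}
    (ha : a ≤ ε * s / (γ n * B)) :
    μ {ω | s ≤ σ * avg γ N (fun k => v k ω (X (k+1) ω)) n
        - κ * avg γ N (fun k => ∫ y, v k ω y * q k ω y) n} ≤ ENNReal.ofReal (Real.exp (-a)) := by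
  have hγ := S.pos n
  set θ : ℝ := ε / (γ n * B) with hθ
  have hθ0 : 0 < θ := by positivity
  have h1 := H.tail (v := fun k ω y => θ * (pw γ N n * aw γ N k) * v k ω y)
    (fun k hk => (hv k hk).const_mul _) hκ hn (fun k hk hkn ω y => by
      have h2 := hv0 k hk hkn ω y
      have h3 := pw_pos S n
      have h4 := aw_pos S k
      refine ⟨mul_nonneg (by positivity) h2.1, ?_⟩
      calc θ * (pw γ N n * aw γ N k) * v k ω y ≤ θ * γ n * B := by
            gcongr
            · exact h2.1
            · exact pw_aw_le S hk hkn
            · exact h2.2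
        _ = ε := by rw [hθ]; field_simp) (ε * s / (γ n * B))
  refine le_trans (measure_mono ?_) (h1.trans (ENNReal.ofReal_le_ofReal (Real.exp_le_exp.2 (by linarith))))
  intro ω hω
  simp only [Set.mem_ofPred_eq] at hω ⊢
  have h5 : ∑ k ∈ Finset.Ico N n, (σ * (θ * (pw γ N n * aw γ N k) * v k ω (X (k+1) ω))
      - κ * ∫ y, θ * (pw γ N n * aw γ N k) * v k ω y * q k ω y) =
      θ * (σ * avg γ N (fun k => v k ω (X (k+1) ω)) n
        - κ * avg γ N (fun k => ∫ y, v k ω y * q k ω y) n) := by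
    unfold avg
    simp only [Finset.mul_sum, ← Finset.sum_sub_distrib]
    refine Finset.sum_congr rfl fun k _ => ?_
    have : (∫ y, θ * (pw γ N n * aw γ N k) * v k ω y * q k ω y) =
        θ * (pw γ N n * aw γ N k) * ∫ y, v k ω y * q k ω y := by
      rw [← integral_const_mul]
      simp only [mul_assoc]
    rw [this]; ring
  rw [h5]
  calc ε * s / (γ n * B) = θ * s := by rw [hθ]; ring
    _ ≤ _ := by gcongr

/-- a finite grid -/
lemma grid (d R m : ℕ) (hm : 1 ≤ m) : ∃ G : Finset (E d), G.card ≤ ((2 * R + 3) * m) ^ d ∧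
    ∀ x : E d, ‖x‖ ≤ R → ∃ x' ∈ G, ‖x - x'‖ ≤ d / m := by
  classical
  have hm0 : (0:ℝ) < m := by exact_mod_cast hm
  set M : ℤ := ((R * m + 1 : ℕ) : ℤ) with hM
  refine ⟨(Fintype.piFinset (fun _ : Fin d => Finset.Icc (-M) M)).image
    (fun j => WithLp.toLp 2 (fun i => (j i : ℝ) / m)), ?_, ?_⟩
  · refine Finset.card_image_le.trans ?_
    rw [Fintype.card_piFinset]
    simp only [Int.card_Icc, Finset.prod_const, Finset.card_univ, Fintype.card_fin]
    apply Nat.pow_le_pow_left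
    rw [hM]
    have : (2 * R + 3) * m = 2 * (R * m) + 3 * m := by ring
    omega
  · intro x hx
    refine ⟨WithLp.toLp 2 (fun i => ((⌊x i * m⌋ : ℤ) : ℝ) / m), ?_, ?_⟩
    · refine Finset.mem_image.2 ⟨fun i => ⌊x i * m⌋, ?_, rfl⟩
      rw [Fintype.mem_piFinset]
      intro i
      have h1 : |x i| ≤ R := (PiLp.norm_apply_le x i).trans hx
      have h2 := abs_le.1 h1
      rw [Finset.mem_Icc]
      constructor
      · rw [Int.le_floor, hM]
        push_cast
        nlinarith
      · have : (⌊x i * m⌋ : ℝ) ≤ (M : ℝ) := (Int.floor_le _).trans (by rw [hM]; push_cast; nlinarith)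
        exact_mod_cast this
    · have hsum : ∀ z : E d, ‖z‖ ≤ ∑ i, |z i| := by
        intro z
        rw [EuclideanSpace.norm_eq]
        apply Real.sqrt_le_iff.2
        refine ⟨Finset.sum_nonneg fun _ _ => abs_nonneg _, ?_⟩
        exact Finset.sum_sq_le_sq_sum_of_nonneg (fun _ _ => abs_nonneg _)
      refine (hsum _).trans ?_
      have : ∀ i, |(x - WithLp.toLp 2 (fun i => ((⌊x i * m⌋ : ℤ) : ℝ) / m) : E d) i| ≤ 1 / m := by
        intro i
        simp only [PiLp.sub_apply]
        have h1 := Int.floor_le (x i * m)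
        have h2 := Int.lt_floor_add_one (x i * m)
        rw [abs_of_nonneg]
        · rw [sub_le_iff_le_add, ← add_div, le_div_iff₀ hm0]; linarith
        · rw [sub_nonneg, div_le_iff₀ hm0]; linarith
      refine (Finset.sum_le_sum fun i _ => this i).trans ?_
      simp [div_eq_mul_inv]

end Midas

open MeasureTheory Filter Metric
open scoped Topology ENNReal NNReal

namespace Midas

section
variable {d : ℕ} {η : ℝ} {f q0 K : E d → ℝ} {γ b lam : ℕ → ℝ} {c Cf CK : ℝ} {L : ℝ≥0} {N : ℕ}
  {Ω : Type*} [mΩ : MeasurableSpace Ω] {μ : Measure Ω} [IsProbabilityMeasure μ]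
  {F : ℕ → MeasurableSpace Ω} {X : ℕ → Ω → E d} {q : ℕ → Ω → E d → ℝ}

lemma zet_meas2 {m : MeasurableSpace Ω} {qq : Ω → E d → ℝ} {T : ℝ} (hf : Measurable f)
    (hq : Measurable[m.prod inferInstance] (Function.uncurry qq)) :
    Measurable[m.prod inferInstance] (Function.uncurry fun ω => zet η f (qq ω) T) := by
  have h1 : Measurable[m.prod inferInstance] (fun z : Ω × E d => f z.2) := hf.comp measurable_snd
  have h2 : Measurable[m.prod inferInstance] (fun z : Ω × E d => (f z.2 / qq z.1 z.2) ^ η) :=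
    (h1.div hq).pow_const η
  exact h2.min measurable_const

lemma St.T_le (S : St η f q0 K γ b lam c Cf CK L N) {k n : ℕ} (hkn : k < n) :
    (c * lam (k+1)) ^ (-η) ≤ (c * lam n) ^ (-η) := by
  have h1 := S.lampos n
  have h2 := S.c0
  apply Real.rpow_le_rpow_of_nonpos (by positivity)
  · gcongr; exact S.lamanti hkn
  · linarith [S.η0]

lemma St.T_eq (S : St η f q0 K γ b lam c Cf CK L N) (n : ℕ) :
    (c * lam n) ^ (-η) = c ^ (-η) * lam n ^ (-η) :=
  Real.mul_rpow S.c0.le (S.lampos n).le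

lemma St.b_le (S : St η f q0 K γ b lam c Cf CK L N) {k n : ℕ} (hkn : k < n) :
    (b (k+1) ^ d)⁻¹ ≤ (b n ^ d)⁻¹ := by
  have h1 := S.bpos n
  have h2 : b n ≤ b (k+1) := S.banti hkn
  gcongr

/-- for any A: A log n ≤ λ b^d / γ eventually -/
lemma St.log_le (S : St η f q0 K γ b lam c Cf CK L N) {A : ℝ} (hA : 0 < A) :
    ∀ᶠ n : ℕ in atTop, A * Real.log n ≤ lam n * b n ^ d / γ n := by
  filter_upwards [S.rate.eventually (ge_mem_nhds (show (0:ℝ) < A⁻¹ by positivity))] with n hn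
  have h1 := S.lampos n
  have h2 := S.bpos n
  have h3 := S.ste.pos n
  rw [div_le_iff₀ (by positivity)] at hn
  rw [le_div_iff₀ h3]
  have := mul_le_mul_of_nonneg_left hn hA.le
  rw [← mul_assoc, mul_inv_cancel_left₀ hA.ne'] at this
  · linarith

lemma exp_log {n p : ℕ} (hn : 1 ≤ n) : Real.exp (-(p * Real.log n)) = ((n:ℝ)^p)⁻¹ := by
  have : (0:ℝ) < n := by exact_mod_cast hn
  rw [Real.exp_neg, mul_comm, Real.exp_mul, Real.exp_log this, Real.rpow_natCast]

lemma Samp.CU (H : Samp μ F X q N) (S : St η f q0 K γ b lam c Cf CK L N) : ∀ᵐ ω ∂μ,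
    ∀ ε > (0:ℝ), ∀ᶠ n in atTop,
    avg γ N (fun k => zet η f (q k ω) ((c * lam (k+1)) ^ (-η)) (X (k+1) ω)) n ≤
    (1 + ε) * avg γ N (fun k => ∫ y, zet η f (q k ω) ((c * lam (k+1)) ^ (-η)) y * q k ω y) n + ε := by
  have key : ∀ ε > (0:ℝ), ε ≤ 1 → ∀ᵐ ω ∂μ, ∀ᶠ n in atTop,
    avg γ N (fun k => zet η f (q k ω) ((c * lam (k+1)) ^ (-η)) (X (k+1) ω)) n ≤
    (1 + ε) * avg γ N (fun k => ∫ y, zet η f (q k ω) ((c * lam (k+1)) ^ (-η)) y * q k ω y) n + ε := by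
    intro ε hε hε1
    have h1 : ∀ᵐ ω ∂μ, ∀ᶠ n in atTop, ω ∉ {ω | ε ≤
        1 * avg γ N (fun k => zet η f (q k ω) ((c * lam (k+1)) ^ (-η)) (X (k+1) ω)) n -
    (1 + ε) * avg γ N (fun k => ∫ y, zet η f (q k ω) ((c * lam (k+1)) ^ (-η)) y * q k ω y) n} := by
      apply bc (C := 1)
      have hc := Real.rpow_pos_of_pos S.c0 (-η)
      filter_upwards [eventually_ge_atTop N, S.log_le (A := 2 * c ^ (-η) / ε ^ 2) (by positivity)] with n hn hlog
      have hn1 : 1 ≤ n := by have := S.N2; omega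
      have hl := S.lampos n
      have hb := S.bpos n
      have hg := S.ste.pos n
      have hT : 0 < (c * lam n) ^ (-η) := Real.rpow_pos_of_pos (mul_pos S.c0 hl) _
      have := H.conc S.ste (v := fun k ω => zet η f (q k ω) ((c * lam (k+1)) ^ (-η)))
        (fun k hk => zet_meas2 S.fcont.measurable (H.qm k hk)) hε hT
        (fun u h1 h2 => exp_up hε1 h1 h2) hn
        (fun k hk hkn ω y => ⟨zet_nonneg S.f0 (H.qnn k ω) (S.T_pos k).le y, (zet_le y).trans (S.T_le hkn)⟩)
        (s := ε) (a := (2:ℕ) * Real.log n) ?_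
      · refine this.trans (ENNReal.ofReal_le_ofReal ?_)
        rw [exp_log hn1]; simp
      · have hb1 : b n ^ d ≤ 1 := pow_le_one₀ hb.le (S.bone n hn)
        have h3 : lam n * lam n ^ (-η) ≤ 1 := by
          rw [← Real.rpow_one_add' hl.le (by linarith [S.η1])]
          exact Real.rpow_le_one hl.le (S.lam1 hn) (by linarith [S.η1])
        rw [le_div_iff₀ (by positivity), S.T_eq]
        rw [le_div_iff₀ hg] at hlog
        have h4 : 0 < lam n ^ (-η) := Real.rpow_pos_of_pos hl _
        have h5 := mul_le_mul_of_nonneg_right hlog h4.le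
        have h6 : lam n * b n ^ d * lam n ^ (-η) ≤ 1 := by
          calc lam n * b n ^ d * lam n ^ (-η) = lam n * lam n ^ (-η) * b n ^ d := by ring
            _ ≤ 1 * 1 := by gcongr
            _ = 1 := one_mul 1
        have h7 := mul_le_mul_of_nonneg_left (h5.trans h6) (by positivity : 0 ≤ ε ^ 2)
        calc ((2:ℕ):ℝ) * Real.log n * (γ n * (c ^ (-η) * lam n ^ (-η)))
            = ε ^ 2 * (2 * c ^ (-η) / ε ^ 2 * Real.log n * γ n * lam n ^ (-η)) := by
              push_cast; field_simp
          _ ≤ ε * ε := by linarith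
    filter_upwards [h1] with ω hω
    filter_upwards [hω] with n hn
    simp only [Set.mem_ofPred_eq, not_le] at hn
    linarith
  have h2 : ∀ᵐ ω ∂μ, ∀ j : ℕ, ∀ᶠ n in atTop,
    avg γ N (fun k => zet η f (q k ω) ((c * lam (k+1)) ^ (-η)) (X (k+1) ω)) n ≤
    (1 + 1/((j:ℝ)+1)) * avg γ N (fun k => ∫ y, zet η f (q k ω) ((c * lam (k+1)) ^ (-η)) y * q k ω y) n
      + 1/((j:ℝ)+1) := by
    rw [ae_all_iff]
    intro j
    refine key _ (by positivity) ?_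
    rw [div_le_one (by positivity)]
    linarith [(Nat.cast_nonneg j : (0:ℝ) ≤ j)]
  filter_upwards [h2] with ω hω ε hε
  obtain ⟨j, hj⟩ := exists_nat_one_div_lt hε
  filter_upwards [hω j] with n hn
  have h3 : 0 ≤ avg γ N (fun k => ∫ y, zet η f (q k ω) ((c * lam (k+1)) ^ (-η)) y * q k ω y) n :=
    avg_nonneg S.ste (fun k _ => integral_nonneg fun y => mul_nonneg (zet_nonneg S.f0 (H.qnn k ω) (S.T_pos k).le y) (H.qnn k ω y)) n
  nlinarith

end
end Midas

open MeasureTheory Filter Metric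
open scoped Topology ENNReal NNReal

namespace Midas

section
variable {d : ℕ} {η : ℝ} {f q0 K : E d → ℝ} {γ b lam : ℕ → ℝ} {c Cf CK : ℝ} {L : ℝ≥0} {N : ℕ}
  {Ω : Type*} [mΩ : MeasurableSpace Ω] {μ : Measure Ω} [IsProbabilityMeasure μ]
  {F : ℕ → MeasurableSpace Ω} {X : ℕ → Ω → E d} {q : ℕ → Ω → E d → ℝ}

lemma zk_meas {m : MeasurableSpace Ω} {qq : Ω → E d → ℝ} {T β : ℝ} (hf : Measurable f) (hK : Continuous K)
    (hq : Measurable[m.prod inferInstance] (Function.uncurry qq)) (x : E d) :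
    Measurable[m.prod inferInstance] (Function.uncurry fun ω y => zet η f (qq ω) T y * kb K β (x - y)) := by
  have h1 : Measurable[m.prod inferInstance] (fun z : Ω × E d => zet η f (qq z.1) T z.2) :=
    zet_meas2 hf hq
  have h2 : Measurable[m.prod inferInstance] (fun z : Ω × E d => kb K β (x - z.2)) :=
    (((kb_continuous hK).comp (continuous_const.sub continuous_id)).measurable).comp measurable_snd
  exact h1.mul h2

/-- polynomial bounds -/
lemma St.poly (S : St η f q0 K γ b lam c Cf CK L N) {n : ℕ} (hn : N ≤ n) :
    (n:ℝ)⁻¹ ≤ lam n ∧ (b n ^ d)⁻¹ ≤ n ∧ (b n)⁻¹ ≤ n ∧ (c * lam n) ^ (-η) ≤ c ^ (-η) * n := by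
  have hn0 : (0:ℝ) < n := by have := S.N2; exact_mod_cast (by omega : 0 < n)
  have h1 := S.inv n hn
  have hl := S.lampos n
  have hb := S.bpos n
  have hl1 := S.lam1 hn
  have hb1 := S.bone n hn
  have hbd : b n ^ d ≤ 1 := pow_le_one₀ hb.le hb1
  have hbd0 : 0 < b n ^ d := by positivity
  have e1 : (n:ℝ)⁻¹ ≤ lam n := by nlinarith
  have e2 : (n:ℝ)⁻¹ ≤ b n ^ d := by nlinarith
  have e3 : (n:ℝ)⁻¹ ≤ b n := e2.trans (by
    calc b n ^ d ≤ b n ^ 1 := pow_le_pow_of_le_one hb.le hb1 S.hd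
      _ = b n := pow_one _)
  refine ⟨e1, inv_le_of_inv_le₀ hn0 e2, inv_le_of_inv_le₀ hn0 e3, ?_⟩
  rw [S.T_eq]
  have := Real.rpow_nonneg S.c0.le (-η)
  gcongr
  rw [Real.rpow_neg hl.le]
  refine inv_le_of_inv_le₀ hn0 (e1.trans ?_)
  conv_lhs => rw [← Real.rpow_one (lam n)]
  exact Real.rpow_le_rpow_of_exponent_ge hl hl1 (by linarith [S.η1])

/-- Lipschitz bound for the kernel terms -/
lemma St.zk_lip (S : St η f q0 K γ b lam c Cf CK L N) {k n : ℕ} (hn : N ≤ n) (hkn : k < n) {qq : E d → ℝ}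
    (hq : ∀ y, 0 ≤ qq y) (x x' y : E d) :
    zet η f qq ((c * lam (k+1)) ^ (-η)) y * kb K (b (k+1)) (x - y) ≤
      zet η f qq ((c * lam (k+1)) ^ (-η)) y * kb K (b (k+1)) (x' - y)
        + c ^ (-η) * L * n ^ 3 * ‖x - x'‖ := by
  obtain ⟨-, h2, h3, h4⟩ := S.poly hn
  have hz0 := zet_nonneg (η := η) S.f0 hq (S.T_pos k).le y
  have hz1 : zet η f qq ((c * lam (k+1)) ^ (-η)) y ≤ c ^ (-η) * n :=
    (zet_le y).trans ((S.T_le hkn).trans h4)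
  have hb : (b (k+1) ^ d)⁻¹ ≤ n := (S.b_le hkn).trans h2
  have hb' : (b (k+1))⁻¹ ≤ n := by
    refine le_trans ?_ h3
    have := S.bpos n
    have : b n ≤ b (k+1) := S.banti hkn
    gcongr
  have hl := (le_abs_self _).trans (kb_lip S.Klip (S.bpos (k+1)) (x - y) (x' - y))
  rw [sub_sub_sub_cancel_right] at hl
  have hbp := S.bpos (k+1)
  have h5 : kb K (b (k+1)) (x - y) - kb K (b (k+1)) (x' - y) ≤ n * (L * (n * ‖x - x'‖)) := by
    refine hl.trans ?_
    gcongr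
  have h6 : zet η f qq ((c * lam (k+1)) ^ (-η)) y * (kb K (b (k+1)) (x - y) - kb K (b (k+1)) (x' - y))
      ≤ (c ^ (-η) * n) * (n * (L * (n * ‖x - x'‖))) := by
    have hh : 0 ≤ (n:ℝ) * (L * (n * ‖x - x'‖)) := by positivity
    exact (mul_le_mul_of_nonneg_left h5 hz0).trans (mul_le_mul_of_nonneg_right hz1 hh)
  nlinarith

lemma St.Eb_lip (S : St η f q0 K γ b lam c Cf CK L N) {k n : ℕ} (hn : N ≤ n) (hkn : k < n) {qq : E d → ℝ}
    (hq : ∀ y, 0 ≤ qq y) (hqm : Measurable qq) (hqI : Integrable qq) (hq1 : (∫ y, qq y) = 1) (x x' : E d) :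
    Eb η f K qq ((c * lam (k+1)) ^ (-η)) (b (k+1)) x ≤
      Eb η f K qq ((c * lam (k+1)) ^ (-η)) (b (k+1)) x' + c ^ (-η) * L * n ^ 3 * ‖x - x'‖ := by
  unfold Eb
  have i1 := Eb_integrable S (S.bpos (k+1)) (S.T_pos k).le hqm hqI hq
  have : c ^ (-η) * L * n ^ 3 * ‖x - x'‖ = ∫ y, c ^ (-η) * L * n ^ 3 * ‖x - x'‖ * qq y := by
    rw [integral_const_mul, hq1, mul_one]
  rw [this, ← integral_add (i1 x') (hqI.const_mul _)]
  refine integral_mono (i1 x) ((i1 x').add (hqI.const_mul _)) fun y => ?_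
  have := mul_le_mul_of_nonneg_right (S.zk_lip hn hkn hq x x' y) (hq y)
  simp only [Pi.add_apply]
  linarith

lemma avg_lip (S : Ste γ N) {u v : ℕ → ℝ} {D : ℝ} (hD : 0 ≤ D) {n : ℕ} (hn : N ≤ n)
    (h : ∀ k, N ≤ k → k < n → u k ≤ v k + D) : avg γ N u n ≤ avg γ N v n + D := by
  have h1 : avg γ N u n ≤ avg γ N v n + avg γ N (fun _ => D) n := by
    unfold avg
    rw [← mul_add, ← Finset.sum_add_distrib]
    apply mul_le_mul_of_nonneg_left _ (pw_pos S n).le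
    refine Finset.sum_le_sum fun k hk => ?_
    rw [Finset.mem_Ico] at hk
    rw [← mul_add]
    exact mul_le_mul_of_nonneg_left (h k hk.1 hk.2) (aw_pos S k).le
  rw [avg_const S D hn] at h1
  have := (pw_pos S n).le
  nlinarith

lemma Samp.CL (H : Samp μ F X q N) (S : St η f q0 K γ b lam c Cf CK L N) : ∀ᵐ ω ∂μ,
    ∀ R : ℝ, ∀ ε > (0:ℝ), ∀ᶠ n in atTop, ∀ x, ‖x‖ ≤ R →
    (1 - ε) * avg γ N (fun k => Eb η f K (q k ω) ((c * lam (k+1)) ^ (-η)) (b (k+1)) x) n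
      - ε * lam n ^ (1 - η)
    ≤ avg γ N (fun k => zet η f (q k ω) ((c * lam (k+1)) ^ (-η)) (X (k+1) ω)
        * kb K (b (k+1)) (x - X (k+1) ω)) n := by
  have hCK := S.CK0
  have hc := Real.rpow_pos_of_pos S.c0 (-η)
  have hqa : ∀ᵐ ω ∂μ, ∀ k, N ≤ k → Integrable (q k ω) ∧ (∫ y, q k ω y) = 1 := by
    rw [ae_all_iff]; intro k
    by_cases hk : N ≤ k
    · filter_upwards [H.qInt hk, H.qint k hk] with ω h1 h2 _ using ⟨h1, h2⟩
    · exact Eventually.of_forall fun ω h => absurd h hk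
  have key : ∀ R : ℕ, ∀ ε > (0:ℝ), ε ≤ 1 → ∀ᵐ ω ∂μ, ∀ᶠ n in atTop, ∀ x, ‖x‖ ≤ R →
    (1 - ε) * avg γ N (fun k => Eb η f K (q k ω) ((c * lam (k+1)) ^ (-η)) (b (k+1)) x) n
      - ε * lam n ^ (1 - η)
    ≤ avg γ N (fun k => zet η f (q k ω) ((c * lam (k+1)) ^ (-η)) (X (k+1) ω)
        * kb K (b (k+1)) (x - X (k+1) ω)) n := by
    intro R ε hε hε1
    have hG : ∀ n : ℕ, ∃ G : Finset (E d), 1 ≤ n → G.card ≤ ((2 * R + 3) * n^5) ^ d ∧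
        ∀ x : E d, ‖x‖ ≤ R → ∃ x' ∈ G, ‖x - x'‖ ≤ d / (n^5 : ℕ) := by
      intro n
      by_cases hn : 1 ≤ n
      · obtain ⟨G, hG⟩ := grid d R (n^5) (Nat.one_le_pow _ _ hn)
        exact ⟨G, fun _ => hG⟩
      · exact ⟨∅, fun h => absurd h hn⟩
    choose G hG using hG
    have h1 : ∀ᵐ ω ∂μ, ∀ᶠ n in atTop, ω ∉ ⋃ x ∈ G n, {ω | ε / 2 * lam n ^ (1-η) ≤
        -1 * avg γ N (fun k => zet η f (q k ω) ((c * lam (k+1)) ^ (-η)) (X (k+1) ω)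
          * kb K (b (k+1)) (x - X (k+1) ω)) n -
        (-(1 - ε)) * avg γ N (fun k => ∫ y, zet η f (q k ω) ((c * lam (k+1)) ^ (-η)) y
          * kb K (b (k+1)) (x - y) * q k ω y) n} := by
      apply bc (C := ((2 * R + 3 : ℕ) : ℝ) ^ d)
      filter_upwards [eventually_ge_atTop N,
        S.log_le (A := 2 * (5 * d + 2 : ℕ) * c ^ (-η) * CK / ε ^ 2) (by positivity)] with n hn hlog
      have hn1 : 1 ≤ n := by have := S.N2; omega
      have hn0 : (0:ℝ) < n := by exact_mod_cast hn1
      have hl := S.lampos n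
      have hb := S.bpos n
      have hg := S.ste.pos n
      have hT : 0 < (c * lam n) ^ (-η) := Real.rpow_pos_of_pos (mul_pos S.c0 hl) _
      have hB : 0 < (c * lam n) ^ (-η) * ((b n ^ d)⁻¹ * CK) := by positivity
      have hone : ∀ x : E d, μ {ω | ε / 2 * lam n ^ (1-η) ≤
        -1 * avg γ N (fun k => zet η f (q k ω) ((c * lam (k+1)) ^ (-η)) (X (k+1) ω)
          * kb K (b (k+1)) (x - X (k+1) ω)) n -
        (-(1 - ε)) * avg γ N (fun k => ∫ y, zet η f (q k ω) ((c * lam (k+1)) ^ (-η)) y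
          * kb K (b (k+1)) (x - y) * q k ω y) n} ≤ ENNReal.ofReal (((n:ℝ)^(5 * d + 2))⁻¹) := by
        intro x
        rw [← exp_log hn1]
        refine H.conc S.ste (v := fun k ω y => zet η f (q k ω) ((c * lam (k+1)) ^ (-η)) y
          * kb K (b (k+1)) (x - y))
          (fun k hk => zk_meas S.fcont.measurable S.Kcont (H.qm k hk) x) hε hB
          (fun u h1 h2 => exp_lo hε1 h1 h2) hn
          (fun k hk hkn ω y => ?_) ?_
        · have a1 := zet_nonneg (η := η) S.f0 (H.qnn k ω) (S.T_pos k).le y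
          have a2 := kb_nonneg S.K0 (S.bpos (k+1)) (x - y)
          refine ⟨mul_nonneg a1 a2, ?_⟩
          refine mul_le_mul ((zet_le y).trans (S.T_le hkn)) ?_ a2 hT.le
          exact (kb_le S.Kle (S.bpos (k+1)) _).trans
            (mul_le_mul_of_nonneg_right (S.b_le hkn) hCK.le)
        · rw [le_div_iff₀ (by positivity), S.T_eq]
          rw [le_div_iff₀ hg] at hlog
          have h4 : 0 < lam n ^ (-η) := Real.rpow_pos_of_pos hl _
          have h3 : lam n ^ (1-η) = lam n * lam n ^ (-η) := by
            rw [← Real.rpow_one_add' hl.le (by linarith [S.η1])]; rfl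
          have hbd : 0 < b n ^ d := by positivity
          have h5 := mul_le_mul_of_nonneg_right hlog (show 0 ≤ ε^2 / 2 * (lam n ^ (-η) * (b n ^ d)⁻¹) by positivity)
          calc ((5 * d + 2 : ℕ):ℝ) * Real.log n * (γ n * (c ^ (-η) * lam n ^ (-η) * ((b n ^ d)⁻¹ * CK)))
              = 2 * (5 * d + 2 : ℕ) * c ^ (-η) * CK / ε ^ 2 * Real.log n * γ n
                * (ε^2 / 2 * (lam n ^ (-η) * (b n ^ d)⁻¹)) := by
                field_simp
            _ ≤ _ := h5
            _ = ε * (ε / 2 * lam n ^ (1-η)) := by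
                rw [h3]; field_simp
      refine (measure_biUnion_finset_le _ _).trans ((Finset.sum_le_sum fun x _ => hone x).trans ?_)
      rw [Finset.sum_const, nsmul_eq_mul, ← ENNReal.ofReal_natCast, ← ENNReal.ofReal_mul (by positivity)]
      apply ENNReal.ofReal_le_ofReal
      have hcard : ((G n).card : ℝ) ≤ (((2 * R + 3 : ℕ):ℝ) * (n:ℝ)^5) ^ d := by
        exact_mod_cast (hG n hn1).1
      calc ((G n).card : ℝ) * ((n:ℝ)^(5*d+2))⁻¹ ≤ (((2 * R + 3 : ℕ):ℝ) * (n:ℝ)^5) ^ d * ((n:ℝ)^(5*d+2))⁻¹ := by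
            gcongr
        _ = _ := by
            rw [mul_pow, ← pow_mul, pow_add]
            field_simp
    filter_upwards [h1, hqa] with ω hω hqω
    have hD : ∀ᶠ n : ℕ in atTop, 2 * (c ^ (-η) * L * d) / (ε / 2) ≤ n :=
      tendsto_natCast_atTop_atTop.eventually_ge_atTop _
    filter_upwards [hω, eventually_ge_atTop N, hD] with n hn hnN hnD x hx
    have hn1 : 1 ≤ n := by have := S.N2; omega
    have hn0 : (0:ℝ) < n := by exact_mod_cast hn1
    obtain ⟨x', hx', hdist⟩ := (hG n hn1).2 x hx
    have hb := hn
    simp only [Set.mem_iUnion, not_exists] at hb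
    have hb := hb x' hx'
    simp only [Set.mem_ofPred_eq, not_le] at hb
    set D : ℝ := c ^ (-η) * L * n ^ 3 * ‖x - x'‖ with hDdef
    have hD0 : 0 ≤ D := by positivity
    have hDle : 2 * D ≤ ε / 2 * lam n ^ (1-η) := by
      have e1 : (n:ℝ)⁻¹ ≤ lam n ^ (1-η) := (S.poly hnN).1.trans (S.lam_le_rpow hnN)
      have e2 : D ≤ c ^ (-η) * L * n ^ 3 * (d / (n^5 : ℕ)) := by rw [hDdef]; gcongr
      have e3 : c ^ (-η) * L * n ^ 3 * (d / (n^5 : ℕ)) = c ^ (-η) * L * d * ((n:ℝ)^2)⁻¹ := by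
        push_cast; field_simp
      rw [div_le_iff₀ (by positivity)] at hnD
      calc 2 * D ≤ 2 * (c ^ (-η) * L * d) * ((n:ℝ)^2)⁻¹ := by linarith
        _ ≤ (n * (ε / 2)) * ((n:ℝ)^2)⁻¹ := by gcongr
        _ = ε / 2 * (n:ℝ)⁻¹ := by field_simp
        _ ≤ _ := by gcongr
    have hA1 : avg γ N (fun k => Eb η f K (q k ω) ((c * lam (k+1)) ^ (-η)) (b (k+1)) x) n ≤
        avg γ N (fun k => Eb η f K (q k ω) ((c * lam (k+1)) ^ (-η)) (b (k+1)) x') n + D := by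
      refine avg_lip S.ste hD0 hnN fun k hk hkn => ?_
      refine S.Eb_lip hnN hkn (H.qnn k ω) ?_ (hqω k hk).1 (hqω k hk).2 x x'
      exact (H.qm k hk).comp (@measurable_prodMk_left Ω (E d) (F k) _ ω)
    have hA2 : avg γ N (fun k => zet η f (q k ω) ((c * lam (k+1)) ^ (-η)) (X (k+1) ω)
        * kb K (b (k+1)) (x' - X (k+1) ω)) n ≤
        avg γ N (fun k => zet η f (q k ω) ((c * lam (k+1)) ^ (-η)) (X (k+1) ω)
        * kb K (b (k+1)) (x - X (k+1) ω)) n + D := by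
      refine avg_lip S.ste hD0 hnN fun k hk hkn => ?_
      have := S.zk_lip hnN hkn (H.qnn k ω) x' x (X (k+1) ω)
      rwa [norm_sub_rev] at this
    change _ < _ at hb
    have hEb : avg γ N (fun k => ∫ y, zet η f (q k ω) ((c * lam (k+1)) ^ (-η)) y
          * kb K (b (k+1)) (x' - y) * q k ω y) n =
        avg γ N (fun k => Eb η f K (q k ω) ((c * lam (k+1)) ^ (-η)) (b (k+1)) x') n := rfl
    rw [hEb] at hb
    have h8 := mul_le_mul_of_nonneg_left hA1 (by linarith : 0 ≤ 1 - ε)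
    nlinarith
  have h2 : ∀ᵐ ω ∂μ, ∀ R j : ℕ, ∀ᶠ n in atTop, ∀ x, ‖x‖ ≤ R →
    (1 - 1/((j:ℝ)+1)) * avg γ N (fun k => Eb η f K (q k ω) ((c * lam (k+1)) ^ (-η)) (b (k+1)) x) n
      - 1/((j:ℝ)+1) * lam n ^ (1 - η)
    ≤ avg γ N (fun k => zet η f (q k ω) ((c * lam (k+1)) ^ (-η)) (X (k+1) ω)
        * kb K (b (k+1)) (x - X (k+1) ω)) n := by
    rw [ae_all_iff]
    intro R
    rw [ae_all_iff]
    intro j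
    refine key R _ (by positivity) ?_
    rw [div_le_one (by positivity)]
    linarith [(Nat.cast_nonneg j : (0:ℝ) ≤ j)]
  filter_upwards [h2] with ω hω R ε hε
  obtain ⟨j, hj⟩ := exists_nat_one_div_lt hε
  obtain ⟨R', hR'⟩ := exists_nat_ge R
  filter_upwards [hω R' j] with n hn x hx
  have hn := hn x (hx.trans hR')
  have h3 : 0 ≤ avg γ N (fun k => Eb η f K (q k ω) ((c * lam (k+1)) ^ (-η)) (b (k+1)) x) n :=
    avg_nonneg S.ste (fun k _ => Eb_nonneg S (S.bpos (k+1)) (S.T_pos k).le (H.qnn k ω) x) n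
  have h4 : 0 ≤ lam n ^ (1-η) := Real.rpow_nonneg (S.lampos n).le _
  nlinarith

end
end Midas

open MeasureTheory Filter Metric
open scoped Topology ENNReal NNReal

namespace Midas

structure Alg {d : ℕ} {Ω : Type*} [mΩ : MeasurableSpace Ω] (μ : Measure Ω) (η : ℝ) (f q0 K : E d → ℝ)
    (γ b lam : ℕ → ℝ) (X : ℕ → Ω → E d) (g q : ℕ → Ω → E d → ℝ) : Prop where
  hX : ∀ n, Measurable (X n)
  hg0 : ∀ (ω : Ω) x, g 0 ω x = 0
  hgrec : ∀ n (ω : Ω) x, g (n+1) ω x = (1 - γ (n+1)) * g n ω x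
        + γ (n+1) * ((f (X (n+1) ω) / q n ω (X (n+1) ω)) ^ η * kb K (b (n+1)) (x - X (n+1) ω))
  hqrec : ∀ n (ω : Ω) x, q (n+1) ω x
      = (1 - lam (n+1)) * (g (n+1) ω x / (∫ y, g (n+1) ω y)) + lam (n+1) * q0 x
  hpolicy : ∀ n (φ : E d → ℝ), Continuous φ → (∃ C, ∀ x, |φ x| ≤ C) →
      (μ[fun ω => φ (X (n+1) ω) | natFilt X n]) =ᵐ[μ] (fun ω => ∫ y, φ y * q n ω y)
  hadapt : ∀ n x, Measurable[natFilt X n] fun ω => q n ω x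

section
variable {d : ℕ} {η : ℝ} {f q0 K : E d → ℝ} {γ b lam : ℕ → ℝ} {c Cf CK : ℝ} {L : ℝ≥0} {N : ℕ}
  {Ω : Type*} [mΩ : MeasurableSpace Ω] {μ : Measure Ω} [IsProbabilityMeasure μ]
  {X : ℕ → Ω → E d} {g q : ℕ → Ω → E d → ℝ}

lemma natFilt_le (hX : ∀ n, Measurable (X n)) (n : ℕ) : natFilt X n ≤ mΩ := by
  unfold natFilt
  exact iSup₂_le fun i _ => (hX i).comap_le

lemma natFilt_mono : Monotone (natFilt X) := by
  intro m n hmn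
  unfold natFilt
  refine iSup₂_le fun i hi => le_iSup₂_of_le i ?_ le_rfl
  rw [Finset.mem_Icc] at *
  omega

lemma natFilt_X (n : ℕ) : Measurable[natFilt X (n+1)] (X (n+1)) := by
  rw [measurable_iff_comap_le]
  unfold natFilt
  exact le_iSup₂_of_le (n+1) (by simp) le_rfl

lemma Alg.greg (A : Alg μ η f q0 K γ b lam X g q) (S : St η f q0 K γ b lam c Cf CK L N) (n : ℕ) (ω : Ω) :
    Continuous (g n ω) ∧ Integrable (g n ω) ∧ ∃ C > 0, ∀ x, |g n ω x| ≤ C := by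
  induction n with
  | zero =>
    have : g 0 ω = fun _ => 0 := funext (A.hg0 ω)
    rw [this]
    exact ⟨continuous_const, integrable_zero _ _ _, 1, one_pos, by simp⟩
  | succ n ih =>
    obtain ⟨h1, h2, C, hC, h3⟩ := ih
    have : g (n+1) ω = fun x => (1 - γ (n+1)) * g n ω x
        + γ (n+1) * ((f (X (n+1) ω) / q n ω (X (n+1) ω)) ^ η * kb K (b (n+1)) (x - X (n+1) ω)) :=
      funext (A.hgrec n ω)
    rw [this]
    have hk : Continuous fun x => kb K (b (n+1)) (x - X (n+1) ω) :=
      (kb_continuous S.Kcont).comp (continuous_id.sub continuous_const)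
    refine ⟨by fun_prop, (h2.const_mul _).add (((kb_integrable_sub S.Kint (S.bpos _) _).const_mul _).const_mul _),
      |1 - γ (n+1)| * C + |γ (n+1) * (f (X (n+1) ω) / q n ω (X (n+1) ω)) ^ η| * ((b (n+1) ^ d)⁻¹ * CK) + 1,
      ?_, fun x => ?_⟩
    · have := S.CK0
      have := S.bpos (n+1)
      positivity
    · refine (abs_add_le _ _).trans ?_
      rw [← mul_assoc (γ (n+1)), abs_mul, abs_mul _ (kb _ _ _), abs_of_nonneg (kb_nonneg S.K0 (S.bpos _) _)]
      have e1 := mul_le_mul_of_nonneg_left (h3 x) (abs_nonneg (1 - γ (n+1)))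
      have e2 := mul_le_mul_of_nonneg_left (kb_le S.Kle (S.bpos (n+1)) (x - X (n+1) ω))
        (abs_nonneg (γ (n+1) * (f (X (n+1) ω) / q n ω (X (n+1) ω)) ^ η))
      linarith

lemma Alg.qcont (A : Alg μ η f q0 K γ b lam X g q) (S : St η f q0 K γ b lam c Cf CK L N) {n : ℕ} (hn : 1 ≤ n)
    (ω : Ω) : Continuous (q n ω) := by
  obtain ⟨n, rfl⟩ : ∃ m, n = m + 1 := ⟨n - 1, by omega⟩
  have : q (n+1) ω = fun x => (1 - lam (n+1)) * (g (n+1) ω x / (∫ y, g (n+1) ω y)) + lam (n+1) * q0 x :=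
    funext (A.hqrec n ω)
  rw [this]
  have := (A.greg S (n+1) ω).1
  have := S.q0cont
  fun_prop

lemma Alg.qjoint (A : Alg μ η f q0 K γ b lam X g q) (S : St η f q0 K γ b lam c Cf CK L N) {n : ℕ} (hn : 1 ≤ n) :
    Measurable[(natFilt X n).prod inferInstance] (Function.uncurry (q n)) := by
  have h := @measurable_uncurry_of_continuous_of_measurable Ω ℝ (E d) _ _ _ _ _ _ _ _ _ (natFilt X n)
    (fun x ω => q n ω x) (fun ω => A.qcont S hn ω) (fun x => A.hadapt n x)
  have h2 : @Measurable (Ω × E d) (E d × Ω) ((natFilt X n).prod inferInstance)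
    (MeasurableSpace.prod inferInstance (natFilt X n)) Prod.swap := @measurable_swap Ω (E d) (natFilt X n) _
  exact h.comp h2

lemma Alg.q1 (A : Alg μ η f q0 K γ b lam X g q) (n : ℕ) : ∀ᵐ ω ∂μ, (∫ y, q n ω y) = 1 := by
  have h := A.hpolicy n (fun _ => 1) continuous_const ⟨1, by simp⟩
  rw [condExp_const (natFilt_le A.hX n)] at h
  filter_upwards [h] with ω hω
  simpa using hω.symm

lemma Alg.qnn (A : Alg μ η f q0 K γ b lam X g q) (S : St η f q0 K γ b lam c Cf CK L N) {n : ℕ} (hn : 1 ≤ n) :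
    ∀ᵐ ω ∂μ, ∀ x, 0 ≤ q n ω x := by
  have h : ∀ᵐ ω ∂μ, ∀ i j : ℕ, 0 ≤ ∫ y, hat (TopologicalSpace.denseSeq (E d) i) (1 / ((j:ℝ)+1)) y * q n ω y := by
    rw [ae_all_iff]; intro i
    rw [ae_all_iff]; intro j
    have hr : (0:ℝ) < 1 / ((j:ℝ)+1) := by positivity
    have h1 := A.hpolicy n (hat (TopologicalSpace.denseSeq (E d) i) (1 / ((j:ℝ)+1))) (hat_continuous _ _)
      ⟨1, fun x => by rw [abs_of_nonneg (hat_nonneg _ _ _)]; exact hat_le_one _ hr _⟩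
    have h2 : 0 ≤ᵐ[μ] (μ[fun ω => hat (TopologicalSpace.denseSeq (E d) i) (1 / ((j:ℝ)+1)) (X (n+1) ω) | natFilt X n]) :=
      condExp_nonneg (Eventually.of_forall fun ω => hat_nonneg _ _ _)
    filter_upwards [h1, h2] with ω e1 e2
    rw [← e1]; exact e2
  filter_upwards [h] with ω hω x
  by_contra hx
  push Not at hx
  have hc := A.qcont S hn ω
  have ho : IsOpen {y | q n ω y < 0} := isOpen_lt hc continuous_const
  obtain ⟨r, hr, hball⟩ := Metric.isOpen_iff.1 ho x hx
  obtain ⟨j, hj⟩ := exists_nat_one_div_lt (show 0 < r / 2 by positivity)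
  obtain ⟨i, hi⟩ := (TopologicalSpace.denseRange_denseSeq (E d)).exists_dist_lt x (show 0 < r/2 by positivity)
  set z := TopologicalSpace.denseSeq (E d) i with hz
  have hρ : (0:ℝ) < 1 / ((j:ℝ)+1) := by positivity
  set ρ := 1 / ((j:ℝ)+1)
  have hneg : ∀ y ∈ closedBall z ρ, q n ω y < 0 := by
    intro y hy
    apply hball
    rw [mem_ball]
    rw [mem_closedBall] at hy
    have := dist_triangle y z x
    rw [dist_comm] at hi
    linarith
  have hle : ∀ y, hat z ρ y * q n ω y ≤ 0 := by
    intro y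
    by_cases hy : y ∈ closedBall z ρ
    · exact mul_nonpos_of_nonneg_of_nonpos (hat_nonneg _ _ _) (hneg y hy).le
    · rw [hat_eq_zero hρ hy, zero_mul]
  have hcs : Continuous fun y => -(hat z ρ y * q n ω y) := ((hat_continuous z ρ).mul hc).neg
  have hcomp : HasCompactSupport fun y => -(hat z ρ y * q n ω y) := by
    refine HasCompactSupport.of_support_subset_isCompact (isCompact_closedBall z ρ) ?_
    intro y hy
    by_contra hy2
    apply hy
    simp [hat_eq_zero hρ hy2]
  have hpos := hcs.integral_pos_of_hasCompactSupport_nonneg_nonzero (μ := volume) hcomp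
    (fun y => by simpa using hle y) (x := z) (by
      rw [hat_self, one_mul]
      exact (neg_pos.2 (hneg z (mem_closedBall_self hρ.le))).ne')
  rw [integral_neg] at hpos
  have := hω i j
  linarith

lemma Alg.samp (A : Alg μ η f q0 K γ b lam X g q) (S : St η f q0 K γ b lam c Cf CK L N) :
    Samp μ (natFilt X) X (fun n ω y => max (q n ω y) 0) N where
  le := natFilt_le A.hX
  mono := natFilt_mono
  Xm := natFilt_X
  qm := fun n hn => (A.qjoint S (by have := S.N2; omega)).max measurable_const
  qnn := fun n ω y => le_max_right _ _
  qint := fun n hn => by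
    filter_upwards [A.q1 n, A.qnn S (n := n) (by have := S.N2; omega)] with ω h1 h2
    rw [← h1]
    exact integral_congr_ae (Eventually.of_forall fun y => max_eq_left (h2 y))
  step := by
    intro n hn Φ hΦ
    have hn1 : 1 ≤ n := by have := S.N2; omega
    have hm := natFilt_le A.hX n
    have hnn := A.qnn S hn1
    have h1 := A.q1 n
    simp only [ENNReal.ofReal_max, ENNReal.ofReal_zero, zero_le, sup_of_le_left]
    refine @onestep_gen d Ω Ω mΩ (natFilt X n) μ _ id (measurable_id'' hm) (X (n+1)) (A.hX (n+1)) (q n)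
      (A.qjoint S hn1) ?_ Φ hΦ
    intro s hs φ
    simp only [Set.preimage_id, id]
    have hφc : Continuous fun y => (φ y : ℝ) := NNReal.continuous_coe.comp φ.continuous
    obtain ⟨C, hC⟩ : ∃ C, ∀ y, |(φ y : ℝ)| ≤ C := by
      refine ⟨nndist φ 0, fun y => ?_⟩
      rw [abs_of_nonneg (NNReal.coe_nonneg (φ y))]
      exact_mod_cast BoundedContinuousFunction.NNReal.upper_bound φ y
    have hpol := A.hpolicy n (fun y => (φ y : ℝ)) hφc ⟨C, hC⟩
    have hphiI : Integrable (fun ω => (φ (X (n+1) ω) : ℝ)) μ := by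
      refine Integrable.of_bound (hφc.measurable.comp (A.hX (n+1))).aestronglyMeasurable C
        (Eventually.of_forall fun ω => hC _)
    have hset := setIntegral_condExp hm hphiI hs
    have hI2 : Integrable (fun ω => ∫ y, (φ y : ℝ) * q n ω y) μ :=
      (integrable_condExp (μ := μ) (m := natFilt X n)).congr hpol
    have hnn2 : ∀ᵐ ω ∂μ, 0 ≤ ∫ y, (φ y : ℝ) * q n ω y := by
      filter_upwards [hnn] with ω hω
      exact integral_nonneg fun y => mul_nonneg (φ y).2 (hω y)
    have e1 : ∫⁻ ω in s, (φ (X (n+1) ω) : ℝ≥0∞) ∂μ = ENNReal.ofReal (∫ ω in s, (φ (X (n+1) ω) : ℝ) ∂μ) := by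
      rw [ofReal_integral_eq_lintegral_ofReal hphiI.integrableOn (Eventually.of_forall fun ω => (φ _).2)]
      simp
    have e2 : (∫ ω in s, (φ (X (n+1) ω) : ℝ) ∂μ) = ∫ ω in s, (∫ y, (φ y : ℝ) * q n ω y) ∂μ := by
      rw [← hset]
      exact integral_congr_ae (ae_restrict_of_ae hpol)
    rw [e1, e2, ofReal_integral_eq_lintegral_ofReal hI2.integrableOn (ae_restrict_of_ae hnn2)]
    refine lintegral_congr_ae (ae_restrict_of_ae ?_)
    filter_upwards [hnn, h1] with ω hω hω1
    have hqi : Integrable (q n ω) := by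
      by_contra h
      rw [integral_undef h] at hω1
      norm_num at hω1
    have hI3 : Integrable fun y => (φ y : ℝ) * q n ω y :=
      hqi.bdd_mul (c := C) hφc.aestronglyMeasurable (Eventually.of_forall fun y => hC y)
    rw [ofReal_integral_eq_lintegral_ofReal hI3 (Eventually.of_forall fun y => mul_nonneg (φ y).2 (hω y))]
    refine lintegral_congr fun y => ?_
    rw [ENNReal.ofReal_mul (NNReal.coe_nonneg (φ y))]
    simp

end
end Midas

open MeasureTheory Filter Metric
open scoped Topology ENNReal NNReal

namespace Midas

section
variable {d : ℕ} {η : ℝ} {f q0 K : E d → ℝ} {γ b lam : ℕ → ℝ} {c Cf CK : ℝ} {L : ℝ≥0} {N : ℕ}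
  {Ω : Type*} [mΩ : MeasurableSpace Ω] {μ : Measure Ω} [IsProbabilityMeasure μ]
  {X : ℕ → Ω → E d} {g q : ℕ → Ω → E d → ℝ}

lemma Alg.gfix (A : Alg μ η f q0 K γ b lam X g q) (S : St η f q0 K γ b lam c Cf CK L N) {n k : ℕ}
    (hn : N ≤ n) (hk : n ≤ k) {ω : Ω} (h : ∀ j, n ≤ j → j < k → f (X (j+1) ω) = 0) :
    ∃ p : ℝ, p ≠ 0 ∧ ∀ x, g k ω x = p * g n ω x := by
  induction k, hk using Nat.le_induction with
  | base => exact ⟨1, one_ne_zero, by simp⟩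
  | succ k hk ih =>
    obtain ⟨p, hp, hx⟩ := ih fun j h1 h2 => h j h1 (by omega)
    refine ⟨(1 - γ (k+1)) * p, mul_ne_zero ?_ hp, fun x => ?_⟩
    · have := S.ste.half (k+1) (by omega)
      intro h; linarith
    · rw [A.hgrec, h k hk (by omega), hx, zero_div, Real.zero_rpow S.η0.ne']
      ring

lemma Alg.qfix (A : Alg μ η f q0 K γ b lam X g q) (S : St η f q0 K γ b lam c Cf CK L N) {n k : ℕ}
    (hn : N ≤ n) (hk : n ≤ k) {ω : Ω} (h : ∀ j, n ≤ j → j < k → f (X (j+1) ω) = 0) (y : E d) :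
    q k ω y = (1 - lam k) * ((q n ω y - lam n * q0 y) / (1 - lam n)) + lam k * q0 y := by
  obtain ⟨p, hp, hx⟩ := A.gfix S hn hk h
  have h2 := S.N2
  have hl := S.lamhalf n hn
  have hl' : 1 - lam n ≠ 0 := by intro h; linarith
  obtain ⟨n', rfl⟩ : ∃ m, n = m + 1 := ⟨n - 1, by omega⟩
  obtain ⟨k', rfl⟩ : ∃ m, k = m + 1 := ⟨k - 1, by omega⟩
  rw [A.hqrec, A.hqrec]
  simp only [hx]
  rw [integral_const_mul, mul_div_mul_left _ _ hp, add_sub_cancel_right, mul_div_cancel_left₀ _ hl']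

lemma Alg.null (A : Alg μ η f q0 K γ b lam X g q) (S : St η f q0 K γ b lam c Cf CK L N) {n M : ℕ}
    (hn : N ≤ n) (hM : n ≤ M) {D : Set Ω} (hD : MeasurableSet[natFilt X n] D)
    (hDf : ∀ ω ∈ D, ∀ y, 0 < f y → q n ω y ≤ lam n * q0 y) {x : E d}
    (hDx : ∀ ω ∈ D, (1 - lam M) * ((q n ω x - lam n * q0 x) / (1 - lam n)) + lam M * q0 x < 0) :
    μ D = 0 := by
  have H := A.samp S
  have key : ∀ k, n ≤ k → k ≤ M → μ (D ∩ {ω | ∀ j, n ≤ j → j < k → f (X (j+1) ω) = 0}) = 0 := by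
    intro k hk hkM
    induction hkM using Nat.decreasingInduction with
    | self =>
      have h2 := S.N2
      refine measure_mono_null ?_ (ae_iff.1 (A.qnn S (n := M) (by omega)))
      rintro ω ⟨h1, h2⟩ h3
      have := h3 x
      rw [A.qfix S hn hM h2] at this
      linarith [hDx ω h1]
    | of_succ k hkM ih =>
      have ih := ih (by omega)
      set Dk := D ∩ {ω | ∀ j, n ≤ j → j < k → f (X (j+1) ω) = 0} with hDk
      have hDkm : MeasurableSet[natFilt X k] Dk := by
        refine MeasurableSet.inter (natFilt_mono hk _ hD) ?_
        have : {ω | ∀ j, n ≤ j → j < k → f (X (j+1) ω) = 0} =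
            ⋂ j : ℕ, ⋂ (_ : n ≤ j), ⋂ (_ : j < k), (X (j+1)) ⁻¹' (f ⁻¹' {0}) := by
          ext ω; simp
        rw [this]
        refine MeasurableSet.iInter fun j => MeasurableSet.iInter fun _ => MeasurableSet.iInter fun hj => ?_
        have hm : Measurable[natFilt X k] (X (j+1)) := (natFilt_X j).mono (natFilt_mono hj) le_rfl
        exact hm (S.fcont.measurable (measurableSet_singleton 0))
      have hZ : MeasurableSet (f ⁻¹' {0}) := S.fcont.measurable (measurableSet_singleton 0)
      have hΦ : Measurable[(natFilt X k).prod inferInstance]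
          (Set.indicator (Dk ×ˢ (f ⁻¹' {0})) (fun _ => (1:ℝ≥0∞))) :=
        Measurable.indicator
          (@measurable_const _ _ _ ((natFilt X k).prod inferInstance) _)
          (@MeasurableSet.prod _ _ (natFilt X k) _ _ _ hDkm hZ)
      have hs := H.step k (by omega) _ hΦ
      have e0 : ∫⁻ ω, Set.indicator (Dk ×ˢ (f ⁻¹' {0})) (fun _ => (1:ℝ≥0∞)) (ω, X (k+1) ω) ∂μ = 0 := by
        have : ∀ᵐ ω ∂μ, Set.indicator (Dk ×ˢ (f ⁻¹' {0})) (fun _ => (1:ℝ≥0∞)) (ω, X (k+1) ω) = 0 := by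
          rw [ae_iff]
          refine measure_mono_null ?_ ih
          intro ω hω
          have hω : ¬ _ := hω
          rw [Set.indicator_apply_eq_zero] at hω
          simp only [one_ne_zero, imp_false, not_not] at hω
          refine ⟨hω.1.1, fun j h1 h2 => ?_⟩
          rcases Nat.lt_succ_iff_lt_or_eq.1 h2 with h | h
          · exact hω.1.2 j h1 h
          · rw [h]; exact hω.2
        rw [lintegral_congr_ae this, lintegral_zero]
      rw [e0] at hs
      have hmeas : Measurable fun ω => ∫⁻ y, Set.indicator (Dk ×ˢ (f ⁻¹' {0})) (fun _ => (1:ℝ≥0∞)) (ω, y)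
          * ENNReal.ofReal (max (q k ω y) 0) := by
        have hq := (H.qm k (by omega))
        have h1 : Measurable[(natFilt X k).prod inferInstance] (fun z : Ω × E d =>
          Set.indicator (Dk ×ˢ (f ⁻¹' {0})) (fun _ => (1:ℝ≥0∞)) z * ENNReal.ofReal (max (q k z.1 z.2) 0)) :=
          hΦ.mul (ENNReal.measurable_ofReal.comp hq)
        exact (@Measurable.lintegral_prod_right' Ω (E d) (natFilt X k) _ volume _ _ h1).mono
          (natFilt_le A.hX k) le_rfl
      have hz := (lintegral_eq_zero_iff hmeas).1 hs.symm
      have hfin : ∀ᵐ ω ∂μ, ω ∉ Dk := by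
        filter_upwards [hz, H.qint k (by omega)] with ω h1 h2 hωD
        have hqm : Measurable fun y => max (q k ω y) 0 := by
          have := (H.qm k (by omega)).comp (@measurable_prodMk_left Ω (E d) (natFilt X k) _ ω)
          exact this
        have h1 : ∫⁻ y, Set.indicator (Dk ×ˢ (f ⁻¹' {0})) (fun _ => (1:ℝ≥0∞)) (ω, y)
          * ENNReal.ofReal (max (q k ω y) 0) = 0 := h1
        have e2 : ∀ y, Set.indicator (Dk ×ˢ (f ⁻¹' {0})) (fun _ => (1:ℝ≥0∞)) (ω, y)
            = Set.indicator (f ⁻¹' {0}) (fun _ => (1:ℝ≥0∞)) y := by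
          intro y
          by_cases hy : y ∈ f ⁻¹' {0}
          · rw [Set.indicator_of_mem hy, Set.indicator_of_mem]; exact ⟨hωD, hy⟩
          · rw [Set.indicator_of_notMem hy, Set.indicator_of_notMem]; exact fun h => hy h.2
        simp only [e2] at h1
        have hmm : Measurable fun y => Set.indicator (f ⁻¹' {0}) (fun _ => (1:ℝ≥0∞)) y
            * ENNReal.ofReal (max (q k ω y) 0) := (measurable_const.indicator hZ).mul hqm.ennreal_ofReal
        rw [lintegral_eq_zero_iff hmm] at h1
        have hl := S.lamhalf k (by omega)
        have hln := S.lamhalf n (by omega)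
        have hle : ∀ᵐ y, max (q k ω y) 0 ≤ lam k * q0 y := by
          filter_upwards [h1] with y hy
          have hy : Set.indicator (f ⁻¹' {0}) (fun _ => (1:ℝ≥0∞)) y * ENNReal.ofReal (max (q k ω y) 0) = 0 := hy
          have h00 : 0 ≤ lam k * q0 y := mul_nonneg (S.lampos k).le (S.q00 y)
          rcases (S.f0 y).eq_or_lt with hf | hf
          · rw [Set.indicator_of_mem (show y ∈ f ⁻¹' {0} from hf.symm), one_mul] at hy
            have : max (q k ω y) 0 ≤ 0 := ENNReal.ofReal_eq_zero.1 hy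
            linarith
          · refine max_le ?_ h00
            rw [A.qfix S hn hk hωD.2]
            have := hDf ω hωD.1 y hf
            have h3 : (q n ω y - lam n * q0 y) / (1 - lam n) ≤ 0 :=
              div_nonpos_of_nonpos_of_nonneg (by linarith) (by linarith)
            nlinarith
        have hi : Integrable fun y => max (q k ω y) 0 := by
          by_contra h
          rw [integral_undef h] at h2
          norm_num at h2
        have h3 := integral_mono_ae hi (S.q0Int.const_mul (lam k)) hle
        rw [integral_const_mul, S.q0int, h2] at h3
        linarith
      simpa [ae_iff] using hfin
  have := key n le_rfl hM
  refine measure_mono_null ?_ this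
  intro ω hω
  exact ⟨hω, fun j h1 h2 => by omega⟩

lemma Alg.scen (A : Alg μ η f q0 K γ b lam X g q) (S : St η f q0 K γ b lam c Cf CK L N) {n : ℕ}
    (hn : N ≤ n) : ∀ᵐ ω ∂μ, 0 < (∫ y, g n ω y) → ∃ x, 0 < f x ∧ ∀ᶠ y in 𝓝 x, 0 ≤ g n ω y := by
  have h2 := S.N2
  set xs := TopologicalSpace.denseSeq (E d) with hxs
  have hdense : DenseRange xs := TopologicalSpace.denseRange_denseSeq (E d)
  set D : ℕ → ℕ → Set Ω := fun i M => {ω | (∀ j, 0 < f (xs j) → q n ω (xs j) ≤ lam n * q0 (xs j)) ∧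
    (1 - lam M) * ((q n ω (xs i) - lam n * q0 (xs i)) / (1 - lam n)) + lam M * q0 (xs i) < 0} with hDdef
  have hnull : ∀ᵐ ω ∂μ, ∀ i M, n ≤ M → ω ∉ D i M := by
    rw [ae_all_iff]; intro i
    rw [ae_all_iff]; intro M
    by_cases hM : n ≤ M
    swap
    · exact Eventually.of_forall fun ω h => absurd h hM
    have : μ (D i M) = 0 := by
      refine A.null S hn hM (x := xs i) ?_ ?_ ?_
      · refine MeasurableSet.inter (s₁ := {ω | ∀ j, 0 < f (xs j) → q n ω (xs j) ≤ lam n * q0 (xs j)})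
          (s₂ := {ω | (1 - lam M) * ((q n ω (xs i) - lam n * q0 (xs i)) / (1 - lam n)) + lam M * q0 (xs i) < 0})
          ?_ ?_
        · have : {ω | ∀ j, 0 < f (xs j) → q n ω (xs j) ≤ lam n * q0 (xs j)} =
            ⋂ j : ℕ, ⋂ (_ : 0 < f (xs j)), {ω | q n ω (xs j) ≤ lam n * q0 (xs j)} := by
            ext ω; simp
          rw [this]
          exact MeasurableSet.iInter fun j => MeasurableSet.iInter fun _ =>
            A.hadapt n (xs j) measurableSet_Iic
        · have hm : Measurable[natFilt X n] fun ω =>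
              (1 - lam M) * ((q n ω (xs i) - lam n * q0 (xs i)) / (1 - lam n)) + lam M * q0 (xs i) :=
            ((((A.hadapt n (xs i)).sub_const _).div_const _).const_mul _).add_const _
          exact hm measurableSet_Iio
      · rintro ω ⟨h, -⟩ y hy
        by_contra hc
        push Not at hc
        have ho : IsOpen {z | 0 < f z ∧ lam n * q0 z < q n ω z} :=
          (isOpen_lt continuous_const S.fcont).inter
            (isOpen_lt (S.q0cont.const_mul _) (A.qcont S (by omega) ω))
        obtain ⟨j, hj⟩ := hdense.exists_mem_open ho ⟨y, hy, hc⟩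
        exact absurd (h j hj.1) (not_le.2 hj.2)
      · rintro ω ⟨-, h⟩
        exact h
    filter_upwards [measure_eq_zero_iff_ae_notMem.1 this] with ω hω _
    exact hω
  filter_upwards [hnull] with ω hω hpos
  by_contra hcon
  push Not at hcon
  have hgc := (A.greg S n ω).1
  have hln := S.lamhalf n hn
  have hl' : 1 - lam n ≠ 0 := by intro h; linarith
  have hq : ∀ y, (q n ω y - lam n * q0 y) / (1 - lam n) = g n ω y / ∫ y, g n ω y := by
    intro y
    obtain ⟨n', rfl⟩ : ∃ m, n = m + 1 := ⟨n - 1, by omega⟩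
    rw [A.hqrec, add_sub_cancel_right, mul_div_cancel_left₀ _ hl']
  have hle : ∀ y, 0 < f y → g n ω y ≤ 0 := by
    intro y hy
    by_contra hc
    push Not at hc
    apply hcon y hy
    filter_upwards [hgc.continuousAt.eventually (lt_mem_nhds hc)] with z hz
    exact not_lt.2 hz.le
  obtain ⟨x0, hx0⟩ := S.exists_fpos
  obtain ⟨y, hy⟩ := (hcon x0 hx0).exists
  have ho : IsOpen {z | g n ω z < 0} := isOpen_lt hgc continuous_const
  obtain ⟨i, hi⟩ := hdense.exists_mem_open ho ⟨y, hy⟩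
  have hneg : g n ω (xs i) / (∫ y, g n ω y) < 0 := div_neg_of_neg_of_pos hi hpos
  have hlim : Tendsto (fun M => (1 - lam M) * (g n ω (xs i) / (∫ y, g n ω y)) + lam M * q0 (xs i)) atTop
      (𝓝 ((1 - 0) * (g n ω (xs i) / (∫ y, g n ω y)) + 0 * q0 (xs i))) :=
    (((tendsto_const_nhds.sub S.lamlim).mul_const _).add (S.lamlim.mul_const _))
  have hev := hlim.eventually (gt_mem_nhds (show _ < 0 by linarith))
  obtain ⟨M, hM1, hM2⟩ := (hev.and (eventually_ge_atTop n)).exists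
  apply hω i M hM2
  refine ⟨fun j hj => ?_, ?_⟩
  · have h3 := hq (xs j)
    have h4 := div_nonpos_of_nonpos_of_nonneg (hle _ hj) hpos.le
    rw [← h3] at h4
    by_contra hc
    push Not at hc
    have : 0 < (q n ω (xs j) - lam n * q0 (xs j)) / (1 - lam n) := div_pos (by linarith) (by linarith)
    linarith
  · rw [hq]
    exact hM1

lemma Alg.path (A : Alg μ η f q0 K γ b lam X g q) (S : St η f q0 K γ b lam c Cf CK L N) :
    ∀ᵐ ω ∂μ, Path η f q0 K γ b lam c N (fun n => g n ω) (fun n => q n ω) (fun n => X n ω) := by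
  have h2 := S.N2
  have H := A.samp S
  have hq1 : ∀ᵐ ω ∂μ, ∀ n, (∫ y, q n ω y) = 1 := ae_all_iff.2 fun n => A.q1 n
  have hqn : ∀ᵐ ω ∂μ, ∀ n, N ≤ n → ∀ x, 0 ≤ q n ω x := by
    rw [ae_all_iff]; intro n
    by_cases hn : N ≤ n
    · filter_upwards [A.qnn S (n := n) (by omega)] with ω h _
      exact h
    · exact Eventually.of_forall fun ω h => absurd h hn
  have hsc : ∀ᵐ ω ∂μ, ∀ n, N ≤ n → 0 < (∫ y, g n ω y) → ∃ x, 0 < f x ∧ ∀ᶠ y in 𝓝 x, 0 ≤ g n ω y := by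
    rw [ae_all_iff]; intro n
    by_cases hn : N ≤ n
    · filter_upwards [A.scen S hn] with ω h _
      exact h
    · exact Eventually.of_forall fun ω h => absurd h hn
  filter_upwards [hq1, hqn, hsc, H.CL S, H.CU S] with ω h1 hnn hs hCL hCU
  have hqeq : ∀ n, N ≤ n → ∀ x, q n ω x = (1 - lam n) * (g n ω x / ∫ y, g n ω y) + lam n * q0 x := by
    intro n hn x
    obtain ⟨n', rfl⟩ : ∃ m, n = m + 1 := ⟨n - 1, by omega⟩
    exact A.hqrec n' ω x
  have hmax : ∀ n, N ≤ n → (fun y => max (q n ω y) 0) = q n ω := fun n hn =>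
    funext fun y => max_eq_left (hnn n hn y)
  have havg : ∀ (v w : ℕ → ℝ) (n : ℕ), (∀ k, N ≤ k → v k = w k) → avg γ N v n = avg γ N w n := by
    intro v w n h
    unfold avg
    congr 1
    refine Finset.sum_congr rfl fun k hk => ?_
    rw [h k (Finset.mem_Ico.1 hk).1]
  refine ⟨fun n _ x => A.hgrec n ω x, hqeq, hnn, ?_, fun n _ => (A.greg S n ω).1,
    fun n _ => (A.greg S n ω).2.1, ?_, ?_, ?_, hs⟩
  · intro n hn h0
    have e : q n ω = fun x => lam n * q0 x := by
      funext x
      rw [hqeq n hn x, h0]; simp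
    have := h1 n
    rw [e, integral_const_mul, S.q0int] at this
    have := S.lamhalf n hn
    linarith
  · obtain ⟨C, hC, h⟩ := (A.greg S N ω).2.2
    exact ⟨C, hC, fun x => (abs_le.1 (h x)).1⟩
  · intro R ε hε
    filter_upwards [hCL R ε hε] with n hn x hx
    have := hn x hx
    rw [havg (fun k => Eb η f K (fun y => max (q k ω y) 0) ((c * lam (k+1)) ^ (-η)) (b (k+1)) x)
        (fun k => Eb η f K (q k ω) ((c * lam (k+1)) ^ (-η)) (b (k+1)) x) n
        (fun k hk => by rw [hmax k hk]),
      havg (fun k => zet η f (fun y => max (q k ω y) 0) ((c * lam (k+1)) ^ (-η)) (X (k+1) ω)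
        * kb K (b (k+1)) (x - X (k+1) ω)) (fun k => zet η f (q k ω) ((c * lam (k+1)) ^ (-η)) (X (k+1) ω)
        * kb K (b (k+1)) (x - X (k+1) ω)) n (fun k hk => by rw [hmax k hk])] at this
    exact this
  · intro ε hε
    filter_upwards [hCU ε hε] with n hn
    rw [havg (fun k => zet η f (fun y => max (q k ω y) 0) ((c * lam (k+1)) ^ (-η)) (X (k+1) ω))
        (fun k => zet η f (q k ω) ((c * lam (k+1)) ^ (-η)) (X (k+1) ω)) n
        (fun k hk => by rw [hmax k hk]),
      havg (fun k => ∫ y, zet η f (fun y => max (q k ω y) 0) ((c * lam (k+1)) ^ (-η)) y * max (q k ω y) 0)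
        (fun k => ∫ y, zet η f (q k ω) ((c * lam (k+1)) ^ (-η)) y * q k ω y) n (fun k hk => by
        have e := hmax k hk
        have e' : ∀ y, max (q k ω y) 0 = q k ω y := fun y => congrFun e y
        simp only [e'])] at hn
    exact hn

end
end Midas

open MeasureTheory Filter Metric
open scoped Topology ENNReal NNReal

namespace Midas

lemma rate_of {d : ℕ} (_hd : 1 ≤ d) {η : ℝ} (hη1 : η < 1) {γ b lam : ℕ → ℝ} (hγpos : ∀ n, 0 < γ n)
    (hbpos : ∀ n, 0 < b n) (hlampos : ∀ n, 0 < lam n)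
    (hb0 : Tendsto b atTop (nhds 0)) (hlam0 : Tendsto lam atTop (nhds 0)) {Cγ : ℝ} (hCγ : 0 < Cγ)
    (hdiv : ∀ n : ℕ, 1 ≤ n → ((n : ℝ))⁻¹ ≤ Cγ * γ n)
    (hrate1 : 1/2 ≤ η → Tendsto
      (fun n : ℕ => (n : ℝ) * γ n ^ 2 * Real.log n / (lam n * b n ^ d))
      atTop (nhds 0))
    (hrate2 : η < 1/2 → Tendsto
      (fun n : ℕ => (n : ℝ) * γ n ^ 2 * Real.log n
        / (lam n ^ (2 * (1 - η)) * b n ^ (2 * (d : ℝ) * (1 - η))))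
      atTop (nhds 0)) :
    Tendsto (fun n : ℕ => γ n * Real.log n / (lam n * b n ^ d)) atTop (𝓝 0) := by
  have h1 : Tendsto (fun n : ℕ => (n : ℝ) * γ n ^ 2 * Real.log n / (lam n * b n ^ d)) atTop (𝓝 0) := by
    by_cases h : 1/2 ≤ η
    · exact hrate1 h
    push Not at h
    refine tendsto_of_tendsto_of_tendsto_of_le_of_le' tendsto_const_nhds (hrate2 h) ?_ ?_
    · refine Eventually.of_forall fun n => ?_
      have := hlampos n
      have := hbpos n
      have := Real.log_natCast_nonneg n
      positivity
    · filter_upwards [hb0.eventually (ge_mem_nhds (show (0:ℝ) < 1 by norm_num)),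
        hlam0.eventually (ge_mem_nhds (show (0:ℝ) < 1 by norm_num))] with n h1 h2
      have hl := hlampos n
      have hb := hbpos n
      have := Real.log_natCast_nonneg n
      refine div_le_div_of_nonneg_left (by positivity) (by positivity) ?_
      refine mul_le_mul ?_ ?_ (by positivity) hl.le
      · calc lam n ^ (2 * (1 - η)) ≤ lam n ^ (1:ℝ) :=
              Real.rpow_le_rpow_of_exponent_ge hl h2 (by linarith)
          _ = lam n := Real.rpow_one _
      · rw [← Real.rpow_natCast]
        refine Real.rpow_le_rpow_of_exponent_ge hb h1 ?_
        have : (0:ℝ) ≤ d := Nat.cast_nonneg d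
        nlinarith
  have h2 := h1.const_mul Cγ
  rw [mul_zero] at h2
  refine tendsto_of_tendsto_of_tendsto_of_le_of_le' tendsto_const_nhds h2 ?_ ?_
  · refine Eventually.of_forall fun n => ?_
    have := hlampos n
    have := hbpos n
    have := hγpos n
    have := Real.log_natCast_nonneg n
    positivity
  · filter_upwards [eventually_ge_atTop 1] with n hn
    have hl := hlampos n
    have hb := hbpos n
    have hγ := hγpos n
    have := Real.log_natCast_nonneg n
    rw [← mul_div_assoc]
    refine div_le_div_of_nonneg_right ?_ (by positivity)
    have h3 := hdiv n hn
    have hn0 : (0:ℝ) < n := by exact_mod_cast hn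
    have h4 : 1 ≤ n * (Cγ * γ n) := by
      rw [inv_le_iff_one_le_mul₀ hn0] at h3
      linarith
    calc γ n * Real.log n = (γ n * Real.log n) * 1 := by ring
      _ ≤ (γ n * Real.log n) * (n * (Cγ * γ n)) := mul_le_mul_of_nonneg_left h4 (by positivity)
      _ = _ := by ring

lemma inv_of {d : ℕ} {γ b lam : ℕ → ℝ}
    (hbpos : ∀ n, 0 < b n) (hlampos : ∀ n, 0 < lam n) {Cγ : ℝ} (hCγ : 0 < Cγ)
    (hdiv : ∀ n : ℕ, 1 ≤ n → ((n : ℝ))⁻¹ ≤ Cγ * γ n)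
    (h : Tendsto (fun n : ℕ => γ n * Real.log n / (lam n * b n ^ d)) atTop (𝓝 0)) :
    ∀ᶠ n : ℕ in atTop, (n:ℝ)⁻¹ ≤ lam n * b n ^ d := by
  have hlog : Tendsto (fun n : ℕ => Real.log n) atTop atTop :=
    Real.tendsto_log_atTop.comp tendsto_natCast_atTop_atTop
  filter_upwards [h.eventually (ge_mem_nhds (show (0:ℝ) < 1 by norm_num)), eventually_ge_atTop 1,
    hlog.eventually_ge_atTop Cγ] with n h1 h2 h3
  have hl := hlampos n
  have hb := hbpos n
  rw [div_le_one (by positivity)] at h1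
  have h4 := hdiv n h2
  have hn0 : (0:ℝ) < (n:ℝ)⁻¹ := by
    have : (0:ℝ) < n := by exact_mod_cast h2
    positivity
  have hγ : 0 < γ n := by
    by_contra hc
    push Not at hc
    nlinarith
  nlinarith

lemma liminf_of {d : ℕ} {f : E d → ℝ} {g : ℕ → E d → ℝ} 
    {A : Set (E d)} (hA : IsCompact A) (hd : 1 ≤ d)
    (h : ∀ ε > 0, ∀ᶠ n in atTop, ∀ x ∈ A, f x - ε ≤ g n x) :
    0 ≤ liminf (fun n : ℕ => ⨅ x ∈ A, (g n x - f x)) atTop := by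
  have hlow : ∀ ε > 0, ∀ᶠ n in atTop, -ε ≤ ⨅ x ∈ A, (g n x - f x) := by
    intro ε hε
    filter_upwards [h ε hε] with n hn
    refine Real.le_iInf (fun x => ?_) (by linarith)
    refine Real.le_iInf (fun hx => ?_) (by linarith)
    linarith [hn x hx]
  have hup : ∀ n, (⨅ x ∈ A, (g n x - f x)) ≤ 0 := by
    intro n
    have : Nonempty (Fin d) := ⟨⟨0, by omega⟩⟩
    obtain ⟨x, hx⟩ : ∃ x, x ∉ A := by
      by_contra hc
      push Not at hc
      have : A = Set.univ := Set.eq_univ_of_forall hc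
      rw [this] at hA
      exact noncompact_univ (E d) hA
    by_cases hb : BddBelow (Set.range fun x => ⨅ (_ : x ∈ A), (g n x - f x))
    · refine (ciInf_le hb x).trans ?_
      have : IsEmpty (x ∈ A) := ⟨hx⟩
      rw [Real.iInf_of_isEmpty]
    · exact (Real.iInf_of_not_bddBelow hb).le
  have hcob : IsCoboundedUnder (· ≥ ·) atTop (fun n : ℕ => ⨅ x ∈ A, (g n x - f x)) :=
    (isBoundedUnder_of ⟨0, hup⟩ : IsBoundedUnder (· ≤ ·) atTop _).isCoboundedUnder_ge
  refine le_of_forall_pos_le_add fun ε hε => ?_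
  have := le_liminf_of_le hcob (hlow ε hε)
  linarith

end Midas

theorem midas_g_liminf_lower_bound
    {Ω : Type*} [MeasurableSpace Ω] (μ : Measure Ω) [IsProbabilityMeasure μ]
    {d : ℕ} (hd : 1 ≤ d) {η : ℝ} (hη : 0 < η) (hη1 : η < 1)
    (f q0 K : EuclideanSpace ℝ (Fin d) → ℝ)
    (γ b lam : ℕ → ℝ)
    (X : ℕ → Ω → EuclideanSpace ℝ (Fin d))
    (w : ℕ → Ω → ℝ)
    (g q : ℕ → Ω → EuclideanSpace ℝ (Fin d) → ℝ)
    (hf0 : ∀ x, 0 ≤ f x) (hfint1 : (∫ x, f x) = 1)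
    (hK0 : ∀ x, 0 ≤ K x) (hKint1 : (∫ x, K x) = 1)
    (hγpos : ∀ n, 0 < γ n) (hbpos : ∀ n, 0 < b n) (hlampos : ∀ n, 0 < lam n)
    (hX : ∀ n, Measurable (X n))
    (hqmeas : ∀ n, Measurable (Function.uncurry (q n)))
    (hg0 : ∀ (ω : Ω) x, g 0 ω x = 0)
    (hw : ∀ n (ω : Ω), w (n+1) ω = f (X (n+1) ω) / q n ω (X (n+1) ω))
    (hgrec : ∀ n (ω : Ω) x, g (n+1) ω x
      = (1 - γ (n+1)) * g n ω x
        + γ (n+1) * w (n+1) ω ^ η * kb K (b (n+1)) (x - X (n+1) ω))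
    (hqrec : ∀ n (ω : Ω) x, q (n+1) ω x
      = (1 - lam (n+1)) * (g (n+1) ω x / (∫ y, g (n+1) ω y)) + lam (n+1) * q0 x)
    (hpolicy : ∀ n (φ : EuclideanSpace ℝ (Fin d) → ℝ), Continuous φ →
      (∃ C, ∀ x, |φ x| ≤ C) →
      (μ[fun ω => φ (X (n+1) ω) | natFilt X n]) =ᵐ[μ] (fun ω => ∫ y, φ y * q n ω y))
    (hadapt : ∀ n x, Measurable[natFilt X n] fun ω => q n ω x)
    (hfbdd : ∃ C, ∀ x, f x ≤ C) (hfcont : Continuous f)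
    (hfInt : Integrable f)
    (hq00 : ∀ x, 0 ≤ q0 x) (hq0bdd : ∃ C, ∀ x, q0 x ≤ C) (hq0cont : Continuous q0)
    (hq0Int : Integrable q0) (hq0int1 : (∫ x, q0 x) = 1)
    (hftail : ∃ r > (0:ℝ), ∃ Cf > (0:ℝ), ∀ t : ℝ, 0 < t →
      (∫ x in {x : EuclideanSpace ℝ (Fin d) | t < ‖x‖}, f x) ≤ Cf * t ^ (-r))
    (hfq0 : ∃ c > (0:ℝ), ∀ x, c * f x ≤ q0 x)
    (hKbdd : ∃ C, ∀ x, K x ≤ C) (hKlip : ∃ L : NNReal, LipschitzWith L K)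
    (hKpos : 0 < K 0)
    (hKtail : ∃ rK > (0:ℝ), ∃ CK > (0:ℝ), ∀ x,
      (1 + ‖x‖ ^ ((d : ℝ) + rK)) * K x ≤ CK)
    (hγanti : Antitone γ) (hγ0 : Tendsto γ atTop (nhds 0))
    (hbanti : Antitone b) (hb0 : Tendsto b atTop (nhds 0))
    (hlamanti : Antitone lam) (hlam0 : Tendsto lam atTop (nhds 0))
    (hγrate : ∃ Cγ > (0:ℝ), ∃ nγ : ℕ, 1 ≤ nγ ∧
      (∀ n : ℕ, 1 ≤ n → ((n : ℝ))⁻¹ ≤ Cγ * γ n) ∧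
      (∀ n : ℕ, nγ ≤ n → γ n - γ (n+1) ≤ γ n * γ (n+1)))
    (hγsq : Summable fun n => γ n ^ 2)
    (hrate1 : 1/2 ≤ η → Tendsto
      (fun n : ℕ => (n : ℝ) * γ n ^ 2 * Real.log n / (lam n * b n ^ d))
      atTop (nhds 0))
    (hrate2 : η < 1/2 → Tendsto
      (fun n : ℕ => (n : ℝ) * γ n ^ 2 * Real.log n
        / (lam n ^ (2 * (1 - η)) * b n ^ (2 * (d : ℝ) * (1 - η))))
      atTop (nhds 0))
    :
    ∀ A : Set (EuclideanSpace ℝ (Fin d)), IsCompact A →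
      ∀ᵐ ω ∂μ, 0 ≤ Filter.liminf (fun n : ℕ => ⨅ x ∈ A, (g n ω x - f x)) atTop := by
  obtain ⟨Cγ, hCγ, nγ, hnγ, hdiv, hdec⟩ := hγrate
  obtain ⟨Cf, hCf⟩ := hfbdd
  obtain ⟨CK, hCK⟩ := hKbdd
  obtain ⟨L, hL⟩ := hKlip
  obtain ⟨c, hc, hcf⟩ := hfq0
  have hrate : Tendsto (fun n : ℕ => γ n * Real.log n / (lam n * b n ^ d)) atTop (𝓝 0) :=
    Midas.rate_of hd hη1 hγpos hbpos hlampos hb0 hlam0 hCγ hdiv hrate1 hrate2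
  obtain ⟨N1, hN1⟩ := eventually_atTop.1 (Midas.inv_of hbpos hlampos hCγ hdiv hrate)
  obtain ⟨N2, hN2⟩ := eventually_atTop.1 (hγ0.eventually (ge_mem_nhds (show (0:ℝ) < 1/2 by norm_num)))
  obtain ⟨N3, hN3⟩ := eventually_atTop.1 (hlam0.eventually (ge_mem_nhds (show (0:ℝ) < 1/2 by norm_num)))
  obtain ⟨N4, hN4⟩ := eventually_atTop.1 (hb0.eventually (ge_mem_nhds (show (0:ℝ) < 1 by norm_num)))
  set N := N1 + N2 + N3 + N4 + nγ + 2 with hN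
  have S : Midas.St η f q0 K γ b lam (c/2) Cf CK L N :=
    { hd := hd, η0 := hη, η1 := hη1, f0 := hf0, fle := hCf, fcont := hfcont, fInt := hfInt, fint := hfint1,
      q00 := hq00, q0cont := hq0cont, q0Int := hq0Int, q0int := hq0int1, K0 := hK0, Kle := hCK, Klip := hL,
      Kint := hKint1, Kpos := hKpos,
      ste := ⟨hγpos, fun n hn => hN2 n (by omega), fun n hn => hdec n (by omega), hγ0, Cγ, hCγ, hdiv⟩,
      bpos := hbpos, banti := hbanti, blim := hb0, lampos := hlampos, lamanti := hlamanti, lamlim := hlam0,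
      c0 := by positivity
      hc := fun x => by have := hcf x; linarith
      lamhalf := fun n hn => hN3 n (by omega)
      bone := fun n hn => hN4 n (by omega)
      inv := fun n hn => hN1 n (by omega)
      N2 := by omega
      rate := hrate }
  have Al : Midas.Alg μ η f q0 K γ b lam X g q :=
    { hX := hX, hg0 := hg0, hgrec := fun n ω x => by rw [hgrec, hw, mul_assoc]
      hqrec := hqrec, hpolicy := hpolicy, hadapt := hadapt }
  intro A hA
  filter_upwards [Al.path S] with ω P
  refine Midas.liminf_of hA hd fun ε hε => ?_
  have h := P.main S hA (ε := ε/3) (by positivity)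
  filter_upwards [h] with n hn x hx
  have := hn x hx
  linarith
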